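/- The variational problem: find W ∈ X such that B(W,V) = ⟨Y, V⟩ for all V ∈ X, where Y is a given bounded conjugate-linear functional on X, satisfies the Fredholm alternative. Equivalently, the bounded linear operator 𝓛 : X → X* defined by (𝓛W)(V) = B(W,V) is a Fredholm operator of index zero: its kernel is finite-dimensional, its range is closed with finite codimension equal to the dimension of the kernel, and in particular 𝓛 is invertible if and only if its kernel is trivial. -/

import Mathlib

noncomputable section

open MeasureTheory Complex Filter Topology
open scoped Real NNReal ContDiff

/-- The plane `ℝ²`. -/
abbrev R2 : Type := EuclideanSpace ℝ (Fin 2)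

/-- Euclidean dot product on `ℝ²`. -/
def rdot (x ξ : R2) : ℝ := x 0 * ξ 0 + x 1 * ξ 1

/-- `testFT φ ξ = ∫ e^{i x·ξ} φ(x) dx`, the (inverse-type) Fourier integral of a
test function `φ`. -/
def testFT (φ : R2 → ℂ) (ξ : R2) : ℂ :=
  ∫ x : R2, Complex.exp (Complex.I * (rdot x ξ : ℂ)) * φ x

/-- The squared `H^s(ℝ²)` norm of the distribution whose Fourier transform is `F`:
`‖f‖² = (2π)⁻² ∫ (1+|ξ|²)^s |f̂(ξ)|² dξ`. -/
def wnormSq (s : ℝ) (F : R2 → ℂ) : ℝ :=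
  ((2 * π) ^ 2)⁻¹ * ∫ ξ : R2, ((1 : ℝ) + ‖ξ‖ ^ 2) ^ s * ‖F ξ‖ ^ 2

/-- The `H^s(ℝ²)` norm (Fourier-side representation). -/
def wnorm (s : ℝ) (F : R2 → ℂ) : ℝ := Real.sqrt (wnormSq s F)

/-- `F` is the Fourier transform of an element of `H^s(ℝ²)`. -/
def MemHs (s : ℝ) (F : R2 → ℂ) : Prop :=
  AEStronglyMeasurable F (volume : Measure R2) ∧
    Integrable (fun ξ : R2 => ((1 : ℝ) + ‖ξ‖ ^ 2) ^ s * ‖F ξ‖ ^ 2) volume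

/-- An element `f` of `H̃^s(Γ)`: a distribution on `ℝ²` of Sobolev regularity `s`
supported in the closure of `Γ`, represented by its Fourier transform `ft`
(a continuous function, `f` being a compactly supported distribution).
The support condition is expressed by testing against smooth compactly supported
functions `φ` whose support avoids `closure Γ`, via the Parseval pairing
`∫ f φ dx = (2π)⁻² ∫ f̂(ξ) φ̌(ξ) dξ` with `φ̌(ξ) = ∫ e^{ix·ξ} φ(x) dx`. -/
structure HTildeElt (s : ℝ) (Γ : Set R2) where
  ft : R2 → ℂ
  cont : Continuous ft
  mem : Integrable (fun ξ : R2 => ((1 : ℝ) + ‖ξ‖ ^ 2) ^ s * ‖ft ξ‖ ^ 2) volume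
  supp : ∀ φ : R2 → ℂ, ContDiff ℝ ∞ φ → HasCompactSupport φ →
    tsupport φ ∩ closure Γ = ∅ → (∫ ξ : R2, ft ξ * testFT φ ξ) = 0

/-- `Γ` is a bounded Lipschitz domain in `ℝ²`: a nonempty bounded open set whose
boundary is locally, after a rigid motion, the graph of a Lipschitz function with
the domain on one side. -/
def IsLipschitzDomain (Γ : Set R2) : Prop :=
  IsOpen Γ ∧ Bornology.IsBounded Γ ∧ Γ.Nonempty ∧
    ∀ x ∈ frontier Γ, ∃ (e : R2 ≃ₗᵢ[ℝ] R2) (L : ℝ≥0) (f : ℝ → ℝ) (U : Set R2),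
      LipschitzWith L f ∧ IsOpen U ∧ x ∈ U ∧
        ∀ y ∈ U, (y ∈ Γ ↔ f (e y 0) < e y 1)

/-- `ξ·V̂(ξ)`, i.e. `-i` times the Fourier transform of `div V`. -/
def dotFt (F1 F2 : R2 → ℂ) (ξ : R2) : ℂ := (ξ 0 : ℂ) * F1 ξ + (ξ 1 : ℂ) * F2 ξ

/-- `ξ⊥·V̂(ξ)`, i.e. `-i` times the Fourier transform of `curl V`. -/
def curlFt (F1 F2 : R2 → ℂ) (ξ : R2) : ℂ := (ξ 1 : ℂ) * F1 ξ - (ξ 0 : ℂ) * F2 ξ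

/-- An element of `X = H̃^{-1/2}_div(Γ)`: a pair of elements of `H̃^{-1/2}(Γ)`
whose distributional divergence also belongs to `H̃^{-1/2}(Γ)`. -/
structure Xelt (Γ : Set R2) where
  c1 : HTildeElt (-(1/2) : ℝ) Γ
  c2 : HTildeElt (-(1/2) : ℝ) Γ
  divMem : Integrable (fun ξ : R2 =>
    ((1 : ℝ) + ‖ξ‖ ^ 2) ^ (-(1/2) : ℝ) * ‖dotFt c1.ft c2.ft ξ‖ ^ 2) volume

/-- The Fourier transform of `div V`. -/
def divFt {Γ : Set R2} (V : Xelt Γ) (ξ : R2) : ℂ :=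
  Complex.I * dotFt V.c1.ft V.c2.ft ξ

/-- The squared `H`-norm `‖V‖²_H` of a vector field. -/
def HnormSq {Γ : Set R2} (V : Xelt Γ) : ℝ :=
  wnormSq (-(1/2)) V.c1.ft + wnormSq (-(1/2)) V.c2.ft

/-- The squared `X`-norm `‖V‖²_X = ‖V‖²_H + ‖div V‖²_{H̃^{-1/2}}`. -/
def XnormSq {Γ : Set R2} (V : Xelt Γ) : ℝ :=
  HnormSq V + wnormSq (-(1/2)) (divFt V)

/-- The `X`-norm. -/
def Xnorm {Γ : Set R2} (V : Xelt Γ) : ℝ := Real.sqrt (XnormSq V)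

/-- `ĝ₀(ξ) = i/√(k²-|ξ|²)`, with the branch `√(k²-|ξ|²) = i√(|ξ|²-k²)` for `|ξ| > k`. -/
def g0hat (k : ℝ) (ξ : R2) : ℂ :=
  if ‖ξ‖ < k then Complex.I / ((Real.sqrt (k ^ 2 - ‖ξ‖ ^ 2) : ℝ) : ℂ)
  else 1 / ((Real.sqrt (‖ξ‖ ^ 2 - k ^ 2) : ℝ) : ℂ)

/-- The integrand of the sesquilinear form `B`:
`ĝ₀(ξ) [ (|ξ|²-k²) a₁ b̄₁ - k² a₂ b̄₂ ]` with `a₁ = ξ·Ŵ/|ξ|`, `a₂ = ξ⊥·Ŵ/|ξ|`, etc. -/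
def Bintegrand (k : ℝ) (F1 F2 G1 G2 : R2 → ℂ) (ξ : R2) : ℂ :=
  g0hat k ξ *
    (((‖ξ‖ ^ 2 - k ^ 2 : ℝ) : ℂ) * (dotFt F1 F2 ξ * starRingEnd ℂ (dotFt G1 G2 ξ)) -
      ((k ^ 2 : ℝ) : ℂ) * (curlFt F1 F2 ξ * starRingEnd ℂ (curlFt G1 G2 ξ))) /
    ((‖ξ‖ ^ 2 : ℝ) : ℂ)

/-- The sesquilinear form `B(W,V)`. -/
def Bform (k : ℝ) {Γ : Set R2} (W V : Xelt Γ) : ℂ :=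
  ∫ ξ : R2, Bintegrand k W.c1.ft W.c2.ft V.c1.ft V.c2.ft ξ

/-- The sesquilinear form `E(q,V) = B(curl⃗ q, V)`, where
`curl⃗ q = (∂q/∂x₂, -∂q/∂x₁)` has Fourier transform `(iξ₂ q̂, -iξ₁ q̂)`. -/
def Eform (k : ℝ) {Γ : Set R2} (q : HTildeElt (1/2 : ℝ) Γ) (V : Xelt Γ) : ℂ :=
  ∫ ξ : R2, Bintegrand k (fun η => Complex.I * (η 1 : ℂ) * q.ft η)
      (fun η => -(Complex.I * (η 0 : ℂ) * q.ft η)) V.c1.ft V.c2.ft ξ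

/-- The inner product of the Hilbert space `X`; by the Riesz representation
theorem, every bounded conjugate-linear functional on `X` is `V ↦ Xinner Y V`
for a unique `Y ∈ X`, with functional norm `Xnorm Y`. -/
def Xinner {Γ : Set R2} (Y V : Xelt Γ) : ℂ :=
  ((((2 * π) ^ 2)⁻¹ : ℝ) : ℂ) * ∫ ξ : R2, ((((1 : ℝ) + ‖ξ‖ ^ 2) ^ (-(1/2) : ℝ) : ℝ) : ℂ) *
    (Y.c1.ft ξ * starRingEnd ℂ (V.c1.ft ξ) + Y.c2.ft ξ * starRingEnd ℂ (V.c2.ft ξ) +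
      divFt Y ξ * starRingEnd ℂ (divFt V ξ))

/-- `√(k²-|ξ|²)`, with the branch `i√(|ξ|²-k²)` for `|ξ| > k`. -/
def rootk (k : ℝ) (ξ : R2) : ℂ :=
  if ‖ξ‖ < k then ((Real.sqrt (k ^ 2 - ‖ξ‖ ^ 2) : ℝ) : ℂ)
  else Complex.I * ((Real.sqrt (‖ξ‖ ^ 2 - k ^ 2) : ℝ) : ℂ)

/-- The Fourier multiplier `i/(2√(k²-|ξ|²))` of the Helmholtz single-layer
operator `T` with kernel `e^{ik|x-y|}/(4π|x-y|)`. -/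
def mT (k : ℝ) (ξ : R2) : ℂ := Complex.I / (2 * rootk k ξ)

/-- The Fourier multiplier `1/(2|ξ|)` of the Laplace single-layer operator `T₀`
with kernel `1/(4π|x-y|)`. -/
def mT0 (ξ : R2) : ℂ := 1 / (2 * ((‖ξ‖ : ℝ) : ℂ))

/-- The Fourier multiplier of `R = T - T₀`. -/
def mR (k : ℝ) (ξ : R2) : ℂ := mT k ξ - mT0 ξ

/-- The distributions with Fourier data `G` and `E` have the same restriction to
the open set `Γ`: `⟨G - E, φ⟩ = 0` for all smooth `φ` compactly supported in `Γ`
(pairing written on the Fourier side). -/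
def AgreeOn (Γ : Set R2) (G E : R2 → ℂ) : Prop :=
  ∀ φ : R2 → ℂ, ContDiff ℝ ∞ φ → HasCompactSupport φ → tsupport φ ⊆ Γ →
    (∫ ξ : R2, (G ξ - E ξ) * testFT φ ξ) = 0

/-- The duality pairing `⟨f, ψ⟩` between `H^{1/2}(Γ)` and `H̃^{-1/2}(Γ)`, written
on the Fourier side (Plancherel): `(2π)⁻² ∫ f̂(ξ) conj(ψ̂(ξ)) dξ`, where `G = f̂`
is the Fourier data of (an extension of) `f`. -/
def dualPair (G ψ : R2 → ℂ) : ℂ :=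
  ((((2 * π) ^ 2)⁻¹ : ℝ) : ℂ) * ∫ ξ : R2, G ξ * starRingEnd ℂ (ψ ξ)

/-!
On the Fourier side, `X` becomes the Hilbert space `DivSpace` of fields supported in `closure Γ`.
For large frequencies the form is real, a positive radial part (the divergence) minus a positive
angular part (the curl), hence symmetric but indefinite. The frequencies `‖ξ‖ < 2 k` contribute a
completely continuous operator: the transform of a distribution supported in `closure Γ` is
reproduced by convolution with a Schwartz function, which turns weak convergence into local strong
convergence.

To undo the indefiniteness, one constructs a support-preserving right inverse `P` of the divergence,
up to a compact error. It exists because near each of its points `closure Γ` is mapped into itself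
by small translations along an open set of directions: integrating `div V` along these directions
and averaging over them gives the potential `P (div V)`. The potential gains decay in Fourier space,
so it is compact as a map into `H`, and the reflection `V ↦ 2 P (div V) - V` preserves the
divergence and reverses the field up to compact errors. Composing the form with the reflection flips
the sign of the angular part and yields a Gårding inequality. A self-adjoint operator with this
property is weakly proper, hence Fredholm of index zero, and completely continuous perturbations do
not change this.
-/

/-! ## Weakly null sequences and the Fredholm alternative -/

section Fredholm

open ContinuousLinearMap
open scoped InnerProduct InnerProductSpace

variable {𝕜 E F : Type*} [RCLike 𝕜] [NormedAddCommGroup E] [InnerProductSpace 𝕜 E]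
  [NormedAddCommGroup F] [InnerProductSpace 𝕜 F]

variable (𝕜) in
/-- The sequence `u` converges weakly to `0`. -/
def IsWeaklyNull (u : ℕ → E) : Prop :=
  ∀ v : E, Tendsto (fun n => ⟪v, u n⟫_𝕜) atTop (𝓝 0)

/-- `K` is completely continuous: it maps weakly null sequences to norm null sequences. -/
def IsCompletelyContinuous (K : E →L[𝕜] F) : Prop :=
  ∀ u : ℕ → E, IsWeaklyNull 𝕜 u → Tendsto (fun n => K (u n)) atTop (𝓝 0)

/-- `A` is weakly proper: a weakly null sequence with norm null image is itself norm null.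
This is the sequential form of being left invertible modulo compact operators. -/
def IsWeaklyProper (A : E →L[𝕜] F) : Prop :=
  ∀ u : ℕ → E, IsWeaklyNull 𝕜 u → Tendsto (fun n => A (u n)) atTop (𝓝 0) →
    Tendsto u atTop (𝓝 0)

/-- `A` is a Fredholm operator of index zero on a Hilbert space; the cokernel is represented by
the kernel of the adjoint. -/
structure IsFredholmOfIndexZero [CompleteSpace E] (A : E →L[𝕜] E) : Prop where
  finiteDimensional_ker : FiniteDimensional 𝕜 A.ker
  finiteDimensional_ker_adjoint : FiniteDimensional 𝕜 (A†).ker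
  finrank_ker_eq : Module.finrank 𝕜 A.ker = Module.finrank 𝕜 (A†).ker
  range_eq : A.range = (A†).kerᗮ

lemma mem_span_range_orthogonal_iff {ι : Type*} {v : ι → E} {x : E} :
    x ∈ (Submodule.span 𝕜 (Set.range v))ᗮ ↔ ∀ i, ⟪v i, x⟫_𝕜 = 0 := by
  rw [← Submodule.span_singleton_le_iff_mem, ← Submodule.isOrtho_iff_le, Submodule.isOrtho_comm,
    Submodule.isOrtho_span]
  simp only [Set.forall_mem_range, Set.mem_singleton_iff, forall_eq]

lemma IsFredholmOfIndexZero.bijective_iff [CompleteSpace E] {A : E →L[𝕜] E}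
    (hA : IsFredholmOfIndexZero A) : Function.Bijective A ↔ A.ker = ⊥ := by
  refine ⟨fun h => LinearMap.ker_eq_bot.2 h.injective, fun h => ⟨LinearMap.ker_eq_bot.1 h, ?_⟩⟩
  have := hA.finiteDimensional_ker_adjoint
  have hadj : (A†).ker = ⊥ := by
    rw [← Submodule.finrank_eq_zero, ← hA.finrank_ker_eq, h, finrank_bot]
  refine LinearMap.range_eq_top.1 ?_
  rw [hA.range_eq, hadj, Submodule.bot_orthogonal_eq_top]

lemma IsWeaklyNull.map [CompleteSpace E] [CompleteSpace F] {u : ℕ → E} (hu : IsWeaklyNull 𝕜 u)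
    (K : E →L[𝕜] F) : IsWeaklyNull 𝕜 (fun n => K (u n)) := fun v => by
  simpa only [adjoint_inner_left] using hu ((K†) v)

lemma IsWeaklyNull.exists_norm_le [CompleteSpace E] {u : ℕ → E} (hu : IsWeaklyNull 𝕜 u) :
    ∃ C, ∀ n, ‖u n‖ ≤ C := by
  obtain ⟨C, hC⟩ := banach_steinhaus (g := fun n => innerSL 𝕜 (u n)) fun v => by
    obtain ⟨C, hC⟩ := (hu v).norm.bddAbove_range
    exact ⟨C, fun n => by
      rw [innerSL_apply_apply, norm_inner_symm]
      exact hC ⟨n, rfl⟩⟩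
  exact ⟨C, fun n => by simpa only [innerSL_apply_norm] using hC n⟩

lemma exists_subseq_isWeaklyNull_sub [CompleteSpace E] [TopologicalSpace.SeparableSpace E]
    {u : ℕ → E} {C : ℝ} (hC : ∀ n, ‖u n‖ ≤ C) :
    ∃ (x : E) (φ : ℕ → ℕ), StrictMono φ ∧ IsWeaklyNull 𝕜 (fun n => u (φ n) - x) := by
  obtain ⟨a, -, φ, hφ, ha⟩ := WeakDual.isSeqCompact_closedBall 𝕜 E (0 : StrongDual 𝕜 E) C
    (x := fun n => StrongDual.toWeakDual (InnerProductSpace.toDual 𝕜 E (u n)))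
    (fun n => by simp [hC n])
  refine ⟨(InnerProductSpace.toDual 𝕜 E).symm (WeakDual.toStrongDual a), φ, hφ, fun v => ?_⟩
  have h : Tendsto (fun n => ⟪u (φ n), v⟫_𝕜) atTop (𝓝 (a v)) :=
    tendsto_iff_forall_eval_tendsto_topDualPairing.1 ha v
  have h' : Tendsto (fun n => ⟪u (φ n) -
      (InnerProductSpace.toDual 𝕜 E).symm (WeakDual.toStrongDual a), v⟫_𝕜) atTop (𝓝 0) := by
    simp only [inner_sub_left, InnerProductSpace.toDual_symm_apply]
    exact sub_self (a v) ▸ h.sub_const (a v)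
  simpa only [RCLike.star_def, inner_conj_symm, map_zero] using h'.star

lemma IsWeaklyNull.norm_le_of_sub {u : ℕ → E} {x : E} (hu : IsWeaklyNull 𝕜 (fun n => u n - x))
    {C : ℝ} (hC : ∀ n, ‖u n‖ ≤ C) : ‖x‖ ≤ C := by
  have h : Tendsto (fun n => ‖⟪x, u n⟫_𝕜‖) atTop (𝓝 (‖x‖ * ‖x‖)) := by
    have h' := ((hu x).add_const ⟪x, x⟫_𝕜).norm
    simpa only [inner_sub_right, sub_add_cancel, zero_add, inner_self_eq_norm_mul_norm,
      norm_inner_eq_norm_iff, ← inner_self_re_eq_norm, inner_self_eq_norm_mul_norm] using h'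
  have hle : ‖x‖ * ‖x‖ ≤ ‖x‖ * C := le_of_tendsto h <| Eventually.of_forall fun n =>
    (norm_inner_le_norm _ _).trans (by gcongr; exact hC n)
  rcases (norm_nonneg x).eq_or_lt with h0 | h0
  · exact h0 ▸ (norm_nonneg _).trans (hC 0)
  · exact le_of_mul_le_mul_left hle h0

namespace IsCompletelyContinuous

lemma add {K L : E →L[𝕜] F} (hK : IsCompletelyContinuous K) (hL : IsCompletelyContinuous L) :
    IsCompletelyContinuous (K + L) := fun u hu => by
  simpa only [add_apply, add_zero] using (hK u hu).add (hL u hu)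

lemma const_smul {K : E →L[𝕜] F} (hK : IsCompletelyContinuous K) (c : 𝕜) :
    IsCompletelyContinuous (c • K) := fun u hu => by
  simpa only [smul_apply, smul_zero] using (hK u hu).const_smul c

lemma sub {K L : E →L[𝕜] F} (hK : IsCompletelyContinuous K) (hL : IsCompletelyContinuous L) :
    IsCompletelyContinuous (K - L) := fun u hu => by
  simpa only [sub_apply, sub_zero] using (hK u hu).sub (hL u hu)

lemma clm_comp {G : Type*} [NormedAddCommGroup G] [InnerProductSpace 𝕜 G] {K : E →L[𝕜] F}
    (hK : IsCompletelyContinuous K) (T : F →L[𝕜] G) : IsCompletelyContinuous (T ∘L K) :=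
  fun u hu => map_zero T ▸ (T.continuous.tendsto 0).comp (hK u hu)

lemma of_adjoint_comp [CompleteSpace E] [CompleteSpace F] {K : E →L[𝕜] F}
    (hK : IsCompletelyContinuous (K† ∘L K)) : IsCompletelyContinuous K := by
  intro u hu
  obtain ⟨C, hC⟩ := hu.exists_norm_le
  have hsq : Tendsto (fun n => ‖K (u n)‖ ^ 2) atTop (𝓝 0) := by
    refine squeeze_zero (fun n => by positivity) (fun n => ?_)
      (by simpa only [norm_zero, zero_mul] using (hK u hu).norm.mul_const C)
    calc ‖K (u n)‖ ^ 2 = ‖⟪(K† ∘L K) (u n), u n⟫_𝕜‖ := by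
          rw [coe_comp, Function.comp_apply, adjoint_inner_left, inner_self_eq_norm_sq_to_K]; simp
      _ ≤ ‖(K† ∘L K) (u n)‖ * C :=
          (norm_inner_le_norm _ _).trans (by gcongr; exact hC n)
  exact tendsto_zero_iff_norm_tendsto_zero.2 (by
    simpa only [Real.sqrt_sq (norm_nonneg _), Real.sqrt_zero] using hsq.sqrt)

lemma adjoint [CompleteSpace E] [CompleteSpace F] {K : E →L[𝕜] F}
    (hK : IsCompletelyContinuous K) : IsCompletelyContinuous (K†) := by
  refine of_adjoint_comp fun u hu => ?_
  rw [adjoint_adjoint]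
  exact hK _ (hu.map _)

lemma isCompactOperator [CompleteSpace E] [TopologicalSpace.SeparableSpace E] {K : E →L[𝕜] F}
    (hK : IsCompletelyContinuous K) : IsCompactOperator K := by
  refine ⟨K '' Metric.closedBall 0 1, IsSeqCompact.isCompact fun y hy => ?_,
    mem_of_superset (Metric.closedBall_mem_nhds 0 one_pos) fun x hx => ⟨x, hx, rfl⟩⟩
  choose u hu huy using hy
  have hu1 : ∀ n, ‖u n‖ ≤ 1 := fun n => by simpa using hu n
  obtain ⟨x, φ, hφ, hw⟩ := exists_subseq_isWeaklyNull_sub (𝕜 := 𝕜) hu1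
  refine ⟨K x, ⟨x, by simpa using hw.norm_le_of_sub fun n => hu1 (φ n), rfl⟩, φ, hφ, ?_⟩
  simpa only [map_sub, huy, sub_add_cancel, zero_add, Function.comp_def] using
    (hK _ hw).add_const (K x)

lemma comp_clm {G : Type*} [NormedAddCommGroup G] [InnerProductSpace 𝕜 G] [CompleteSpace E]
    [CompleteSpace G] {K : E →L[𝕜] F} (hK : IsCompletelyContinuous K) (T : G →L[𝕜] E) :
    IsCompletelyContinuous (K ∘L T) :=
  fun _ hu => hK _ (hu.map T)

lemma of_forall_norm_sq_le {G : Type*} [NormedAddCommGroup G] [InnerProductSpace 𝕜 G]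
    [CompleteSpace E] [CompleteSpace G] {A : E →L[𝕜] F} (B : E →L[𝕜] G)
    (h : ∀ ε > 0, ∃ b : E → ℝ, (∀ u, IsWeaklyNull 𝕜 u → Tendsto (fun n => b (u n)) atTop (𝓝 0)) ∧
      ∀ x, ‖A x‖ ^ 2 ≤ ε * ‖B x‖ ^ 2 + b x) : IsCompletelyContinuous A := by
  intro u hu
  obtain ⟨C, hC⟩ := (hu.map B).exists_norm_le
  have hsq : Tendsto (fun n => ‖A (u n)‖ ^ 2) atTop (𝓝 0) := by
    refine tendsto_order.2 ⟨fun a ha => .of_forall fun n => ha.trans_le (by positivity),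
      fun δ hδ => ?_⟩
    obtain ⟨b, hb, hAb⟩ := h (δ / (2 * (C ^ 2 + 1))) (by positivity)
    filter_upwards [(hb u hu).eventually_lt_const (half_pos hδ)] with n hn
    have hle : δ / (2 * (C ^ 2 + 1)) * C ^ 2 ≤ δ / 2 := by
      rw [div_mul_eq_mul_div, div_le_div_iff₀ (by positivity) two_pos]
      nlinarith
    calc ‖A (u n)‖ ^ 2 ≤ δ / (2 * (C ^ 2 + 1)) * ‖B (u n)‖ ^ 2 + b (u n) := hAb _
      _ ≤ δ / (2 * (C ^ 2 + 1)) * C ^ 2 + b (u n) := by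
          gcongr
          exact hC n
      _ < δ := by linarith
  exact tendsto_zero_iff_norm_tendsto_zero.2 (by simpa using hsq.sqrt)

lemma sum {ι : Type*} {t : Finset ι} {K : ι → E →L[𝕜] F}
    (hK : ∀ i ∈ t, IsCompletelyContinuous (K i)) : IsCompletelyContinuous (∑ i ∈ t, K i) :=
  fun u hu => by
    simpa only [sum_apply, Finset.sum_const_zero] using
      tendsto_finsetSum t fun i hi => hK i hi u hu

end IsCompletelyContinuous

lemma IsWeaklyNull.tendsto_zero [FiniteDimensional 𝕜 E] {u : ℕ → E} (hu : IsWeaklyNull 𝕜 u) :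
    Tendsto u atTop (𝓝 0) := by
  have h := tendsto_finsetSum (Finset.univ) fun i _ =>
    (hu (stdOrthonormalBasis 𝕜 E i)).smul_const (stdOrthonormalBasis 𝕜 E i)
  simpa only [OrthonormalBasis.sum_repr', zero_smul, Finset.sum_const_zero] using h

lemma isCompletelyContinuous_orthogonalProjectionOnto [CompleteSpace E] (N : Submodule 𝕜 E)
    [FiniteDimensional 𝕜 N] : IsCompletelyContinuous N.orthogonalProjectionOnto := fun _ hu =>
  (hu.map N.orthogonalProjectionOnto).tendsto_zero

namespace IsWeaklyProper

lemma add_isCompletelyContinuous {A K : E →L[𝕜] F} (hA : IsWeaklyProper A)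
    (hK : IsCompletelyContinuous K) : IsWeaklyProper (A + K) := fun u hu h =>
  hA u hu (by simpa using h.sub (hK u hu))

lemma of_comp_add {G : Type*} [NormedAddCommGroup G] [InnerProductSpace 𝕜 G]
    {T : F →L[𝕜] G} {A : E →L[𝕜] F} {K : E →L[𝕜] G} (h : IsWeaklyProper (T ∘L A + K))
    (hK : IsCompletelyContinuous K) : IsWeaklyProper A := fun u hu hA => by
  refine h u hu ?_
  simpa only [add_apply, coe_comp, Function.comp_apply, map_zero, add_zero] using
    ((T.continuous.tendsto 0).comp hA).add (hK u hu)

lemma of_garding {ι : Type*} [Fintype ι] [CompleteSpace E] {A : E →L[𝕜] E} {K : ι → E →L[𝕜] F}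
    {c : ℝ} (hc : 0 < c) (hK : ∀ i, IsCompletelyContinuous (K i))
    (h : ∀ u, c * ‖u‖ ^ 2 ≤ RCLike.re ⟪u, A u⟫_𝕜 + ∑ i, ‖K i u‖ ^ 2) : IsWeaklyProper A := by
  intro u hu hA
  obtain ⟨C, hC⟩ := hu.exists_norm_le
  have hlim : Tendsto (fun n => C * ‖A (u n)‖ + ∑ i, ‖K i (u n)‖ ^ 2) atTop (𝓝 0) := by
    simpa using (hA.norm.const_mul C).add
      (tendsto_finsetSum Finset.univ fun i _ => (hK i u hu).norm.pow 2)
  have hsq : Tendsto (fun n => c * ‖u n‖ ^ 2) atTop (𝓝 0) := by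
    refine squeeze_zero (fun n => by positivity) (fun n => (h (u n)).trans ?_) hlim
    gcongr
    exact (re_inner_le_norm _ _).trans (by gcongr; exact hC n)
  have hsq' : Tendsto (fun n => ‖u n‖ ^ 2) atTop (𝓝 0) := by
    simpa only [inv_mul_cancel_left₀ hc.ne', mul_zero] using hsq.const_mul c⁻¹
  exact tendsto_zero_iff_norm_tendsto_zero.2 (by
    simpa only [Real.sqrt_sq (norm_nonneg _), Real.sqrt_zero] using hsq'.sqrt)

/-- A reflection `θ` fixing `D` and negating `R` up to completely continuous operators turns the
indefinite form `⟪D u, M D u⟫ - ⟪R u, N R u⟫` into the definite one. -/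
lemma of_reflection [CompleteSpace E] [CompleteSpace F] {D R : E →L[𝕜] F} {M N : F →L[𝕜] F}
    {θ : E →L[𝕜] E} (hD : IsCompletelyContinuous (D ∘L θ - D))
    (hR : IsCompletelyContinuous (R ∘L θ + R))
    (h : IsWeaklyProper (D† ∘L M ∘L D + R† ∘L N ∘L R)) :
    IsWeaklyProper (D† ∘L M ∘L D - R† ∘L N ∘L R) := by
  refine of_comp_add (T := θ†) (K := (R ∘L θ + R)† ∘L N ∘L R - (D ∘L θ - D)† ∘L M ∘L D) ?_
    ((hR.adjoint.comp_clm (N ∘L R)).sub (hD.adjoint.comp_clm (M ∘L D)))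
  convert h using 1
  ext1 u
  simp only [map_add, map_sub, adjoint_comp, add_apply, sub_apply, coe_comp, Function.comp_apply]
  abel

variable [CompleteSpace E] [TopologicalSpace.SeparableSpace E] {A : E →L[𝕜] F}

lemma exists_tendsto_subseq (hA : IsWeaklyProper A) {u : ℕ → E} {C : ℝ} (hC : ∀ n, ‖u n‖ ≤ C)
    (hAu : Tendsto (fun n => A (u n)) atTop (𝓝 0)) [CompleteSpace F] :
    ∃ x ∈ A.ker, ∃ φ : ℕ → ℕ, StrictMono φ ∧ Tendsto (fun n => u (φ n)) atTop (𝓝 x) := by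
  obtain ⟨x, φ, hφ, hw⟩ := exists_subseq_isWeaklyNull_sub (𝕜 := 𝕜) hC
  have hAφ := hAu.comp hφ.tendsto_atTop
  have hx : A x = 0 := by
    have h := (tendsto_const_nhds (x := A x)).inner (𝕜 := 𝕜) hAφ |>.sub (hw.map A (A x))
    simp only [Function.comp_apply, map_sub, inner_sub_right, sub_sub_cancel, inner_zero_right,
      sub_zero] at h
    exact inner_self_eq_zero.1 (tendsto_nhds_unique tendsto_const_nhds h)
  refine ⟨x, hx, φ, hφ, ?_⟩
  simpa only [sub_add_cancel, zero_add] using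
    (hA _ hw (by simpa only [map_sub, hx, sub_zero, Function.comp_def] using hAφ)).add_const x

variable [CompleteSpace F]

lemma finiteDimensional_ker (hA : IsWeaklyProper A) : FiniteDimensional 𝕜 A.ker := by
  refine FiniteDimensional.of_isCompact_closedBall 𝕜 one_pos (c := 0) <|
    IsSeqCompact.isCompact fun u hu => ?_
  have hu1 : ∀ n, ‖(u n : E)‖ ≤ 1 := fun n => by simpa using hu n
  obtain ⟨x, hx, φ, hφ, hlim⟩ := hA.exists_tendsto_subseq hu1
    (tendsto_const_nhds.congr fun n => (u n).2.symm)
  refine ⟨⟨x, hx⟩, ?_, φ, hφ, tendsto_subtype_rng.2 hlim⟩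
  simpa using le_of_tendsto hlim.norm (Eventually.of_forall fun n => hu1 (φ n))

lemma exists_mul_norm_le (hA : IsWeaklyProper A) :
    ∃ c > 0, ∀ u ∈ A.kerᗮ, c * ‖u‖ ≤ ‖A u‖ := by
  by_contra! hcon
  have hunit : ∀ n : ℕ, ∃ u ∈ A.kerᗮ, ‖u‖ = 1 ∧ ‖A u‖ ≤ 1 / ((n : ℝ) + 1) := fun n => by
    obtain ⟨u, hu, hlt⟩ := hcon (1 / ((n : ℝ) + 1)) (by positivity)
    have hu0 : 0 < ‖u‖ := norm_pos_iff.2 fun h0 => by simp [h0] at hlt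
    refine ⟨((‖u‖⁻¹ : ℝ) : 𝕜) • u, Submodule.smul_mem _ _ hu, ?_, ?_⟩
    · simp [norm_smul, hu0.ne']
    · rw [map_smul, norm_smul, RCLike.norm_ofReal, abs_of_pos (inv_pos.2 hu0),
        inv_mul_le_iff₀ hu0, mul_comm]
      exact hlt.le
  choose u hu hnorm hAu using hunit
  obtain ⟨x, hx, φ, -, hlim⟩ := hA.exists_tendsto_subseq (fun n => (hnorm n).le)
    (squeeze_zero_norm hAu tendsto_one_div_add_atTop_nhds_zero_nat)
  have hx' : x ∈ A.kerᗮ :=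
    (Submodule.isClosed_orthogonal _).mem_of_tendsto hlim (Eventually.of_forall fun n => hu (φ n))
  have hx0 : x = 0 := inner_self_eq_zero.1 (hx' x hx)
  have h1 : ‖x‖ = 1 := tendsto_nhds_unique hlim.norm (by simp only [hnorm, tendsto_const_nhds])
  simp [hx0] at h1

lemma isClosed_range (hA : IsWeaklyProper A) : IsClosed (A.range : Set F) := by
  obtain ⟨c, hc, hb⟩ := hA.exists_mul_norm_le
  have := hA.finiteDimensional_ker
  have hanti : AntilipschitzWith (Real.toNNReal c⁻¹) (A ∘L A.kerᗮ.subtypeL) :=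
    antilipschitz_of_bound _ fun x => by
      rw [Real.coe_toNNReal _ (by positivity), le_inv_mul_iff₀ hc]
      exact hb x x.2
  convert hanti.isClosed_range (A ∘L A.kerᗮ.subtypeL).uniformContinuous using 1
  ext y
  constructor
  · rintro ⟨x, rfl⟩
    have hker : A (A.ker.starProjection x) = 0 := A.ker.starProjection_apply_mem x
    exact ⟨⟨_, A.ker.sub_starProjection_mem_orthogonal x⟩, by simp [hker]⟩
  · rintro ⟨x, rfl⟩
    exact ⟨x, rfl⟩

lemma range_eq (hA : IsWeaklyProper A) : A.range = (A†).kerᗮ := by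
  have : CompleteSpace A.range := hA.isClosed_range.completeSpace_coe
  rw [← orthogonal_range, Submodule.orthogonal_orthogonal]

end IsWeaklyProper

section IndexZero

variable [CompleteSpace E]

variable [TopologicalSpace.SeparableSpace E] {A T K : E →L[𝕜] E}

lemma IsWeaklyProper.bijective_add_starProjection (hA : IsWeaklyProper A)
    (hself : IsSelfAdjoint A) [FiniteDimensional 𝕜 A.ker] :
    Function.Bijective (A + A.ker.starProjection) := by
  have hAadj : A† = A := hself
  set B := A + A.ker.starProjection with hB
  have hinj : B.ker = ⊥ := by
    refine (Submodule.eq_bot_iff _).2 fun x (hx : A x + A.ker.starProjection x = 0) => ?_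
    have hmem : A x ∈ A.ker := by
      rw [eq_neg_of_add_eq_zero_left hx]
      exact neg_mem (A.ker.starProjection_apply_mem x)
    have hAx : A x = 0 := by
      have h : A (A x) = 0 := hmem
      rw [← inner_self_eq_zero (𝕜 := 𝕜), ← adjoint_inner_left, hAadj, h, inner_zero_left]
    rwa [hAx, zero_add, Submodule.starProjection_eq_self_iff.2 hAx] at hx
  have hBadj : B† = B := by
    rw [hB, map_add, hAadj, ← star_eq_adjoint A.ker.starProjection,
      (isSelfAdjoint_starProjection A.ker).star_eq]
  have hproper : IsWeaklyProper B := hA.add_isCompletelyContinuous <|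
    (isCompletelyContinuous_orthogonalProjectionOnto A.ker).clm_comp A.ker.subtypeL
  refine ⟨LinearMap.ker_eq_bot.1 hinj, LinearMap.range_eq_top.1 ?_⟩
  have h := hproper.range_eq
  rwa [hBadj, hinj, Submodule.bot_orthogonal_eq_top] at h

lemma IsCompletelyContinuous.surjective_of_injective (hK : IsCompletelyContinuous (A - T))
    (hT : Function.Bijective T) (hA : Function.Injective A) : Function.Surjective A := by
  let e : E ≃L[𝕜] E := .ofBijective T (LinearMap.ker_eq_bot.2 hT.1) (LinearMap.range_eq_top.2 hT.2)
  set C : E →L[𝕜] E := e.symm ∘L (A - T) with hC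
  have hCx : ∀ x, C x = e.symm (A x) - x := fun x =>
    (map_sub e.symm (A x) (e x)).trans (by rw [e.symm_apply_apply])
  rcases (hK.clm_comp (e.symm : E →L[𝕜] E)).isCompactOperator.hasEigenvalue_or_mem_resolventSet
    (μ := (-1 : 𝕜)) (by simp) with h | h
  · obtain ⟨x, hx, hx0⟩ := h.exists_hasEigenvector
    have hx' : C x = (-1 : 𝕜) • x := Module.End.mem_eigenspace_iff.1 hx
    have hsymm : e.symm (A x) = 0 := by
      rwa [hCx, neg_one_smul, sub_eq_add_neg, add_eq_right] at hx'
    exact (hx0 (hA (((map_eq_zero_iff _ e.symm.injective).1 hsymm).trans (map_zero A).symm))).elim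
  · rw [spectrum.mem_resolventSet_iff, isUnit_iff_bijective] at h
    intro y
    obtain ⟨x, hx⟩ := h.2 (-e.symm y)
    have hx' : -x - C x = -e.symm y := by
      rw [← hx, hC]
      simp [Algebra.algebraMap_eq_smul_one]
    rw [hCx, neg_sub_left, sub_add_cancel] at hx'
    exact ⟨x, e.symm.injective (neg_injective hx')⟩

lemma IsCompletelyContinuous.surjective_of_injective_ker (hK : IsCompletelyContinuous (A - T))
    (hT : Function.Bijective T) [FiniteDimensional 𝕜 A.ker]
    {f : A.ker →ₗ[𝕜] (A†).ker} (hf : Function.Injective f) : Function.Surjective f := by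
  let P := A.ker.orthogonalProjectionOnto
  let G : E →L[𝕜] E := ((A†).ker.subtypeL ∘L f.toContinuousLinearMap) ∘L P
  -- `A` and `G` have orthogonal ranges, so the equation `(A + G) x = m` decouples.
  have hdecouple : ∀ x (m : (A†).ker), (A + G) x = m → A x = 0 ∧ f (P x) = m := by
    intro x m h
    have hAx : A x = ((m - f (P x) : (A†).ker) : E) := eq_sub_of_add_eq h
    have hAx0 : A x = 0 := by
      have hadj : (A†) (A x) = 0 := hAx ▸ (m - f (P x)).2
      rw [← inner_self_eq_zero (𝕜 := 𝕜), ← adjoint_inner_left, hadj, inner_zero_left]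
    exact ⟨hAx0, (sub_eq_zero.1 (Subtype.ext (hAx.symm.trans hAx0))).symm⟩
  have hinj : Function.Injective (A + G) := (injective_iff_map_eq_zero _).2 fun x hx => by
    obtain ⟨hAx, hfP⟩ := hdecouple x 0 hx
    have hPx : P x = 0 := hf (hfP.trans (map_zero f).symm)
    exact congrArg Subtype.val <|
      (Submodule.orthogonalProjectionOnto_mem_subspace_eq_self (K := A.ker) ⟨x, hAx⟩).symm.trans hPx
  have hK' : IsCompletelyContinuous (A + G - T) := by
    rw [add_sub_right_comm]
    exact hK.add ((isCompletelyContinuous_orthogonalProjectionOnto A.ker).clm_comp _)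
  intro m
  obtain ⟨x, hx⟩ := hK'.surjective_of_injective hT hinj m
  exact ⟨P x, (hdecouple x m hx).2⟩

lemma IsCompletelyContinuous.finrank_ker_eq_of_le (hK : IsCompletelyContinuous (A - T))
    (hT : Function.Bijective T) [FiniteDimensional 𝕜 A.ker] [FiniteDimensional 𝕜 (A†).ker]
    (h : Module.finrank 𝕜 A.ker ≤ Module.finrank 𝕜 (A†).ker) :
    Module.finrank 𝕜 A.ker = Module.finrank 𝕜 (A†).ker := by
  obtain ⟨f, hf⟩ := finrank_le_iff_exists_linearMap.1 h
  exact (LinearEquiv.ofBijective f ⟨hf, hK.surjective_of_injective_ker hT hf⟩).finrank_eq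

theorem IsWeaklyProper.isFredholmOfIndexZero_add (hA : IsWeaklyProper A) (hself : IsSelfAdjoint A)
    (hK : IsCompletelyContinuous K) : IsFredholmOfIndexZero (A + K) := by
  have hadj : (A + K)† = A + K† := by
    rw [map_add, ← star_eq_adjoint A, hself.star_eq]
  have hproper := hA.add_isCompletelyContinuous hK
  have hproper' : IsWeaklyProper ((A + K)†) :=
    hadj ▸ hA.add_isCompletelyContinuous hK.adjoint
  have := hA.finiteDimensional_ker
  have hfin := hproper.finiteDimensional_ker
  have hfin' := hproper'.finiteDimensional_ker
  have hT := hA.bijective_add_starProjection hself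
  have hperturb : ∀ L : E →L[𝕜] E, IsCompletelyContinuous L →
      IsCompletelyContinuous (A + L - (A + A.ker.starProjection)) := fun L hL => by
    rw [add_sub_add_left_eq_sub, sub_eq_add_neg]
    exact hL.add <|
      (isCompletelyContinuous_orthogonalProjectionOnto A.ker).clm_comp (-A.ker.subtypeL)
  refine ⟨hfin, hfin', ?_, hproper.range_eq⟩
  rcases le_total (Module.finrank 𝕜 (A + K).ker) (Module.finrank 𝕜 ((A + K)†).ker)
    with h | h
  · exact (hperturb K hK).finrank_ker_eq_of_le hT h
  · have hK' : IsCompletelyContinuous ((A + K)† - (A + A.ker.starProjection)) :=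
      hadj ▸ hperturb _ hK.adjoint
    rw [← adjoint_adjoint (A + K)] at hfin
    have heq := hK'.finrank_ker_eq_of_le hT (by rwa [adjoint_adjoint])
    rwa [adjoint_adjoint, eq_comm] at heq

end IndexZero

end Fredholm

/-! ## Weighted `L²` spaces and convolution with Schwartz functions -/

open scoped SchwartzMap

section Peetre

variable {E F : Type*} [NormedAddCommGroup E]

lemma one_add_norm_add_sq_le (x y : E) :
    1 + ‖x + y‖ ^ 2 ≤ 2 * (1 + ‖x‖ ^ 2) * (1 + ‖y‖ ^ 2) := by
  nlinarith [norm_add_le x y, norm_nonneg (x + y), norm_nonneg x, norm_nonneg y,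
    sq_nonneg (‖x‖ - ‖y‖), mul_nonneg (sq_nonneg ‖x‖) (sq_nonneg ‖y‖)]

lemma one_add_norm_add_sq_rpow_le (r : ℝ) (x y : E) :
    (1 + ‖x + y‖ ^ 2) ^ r ≤ 2 ^ |r| * (1 + ‖x‖ ^ 2) ^ r * (1 + ‖y‖ ^ 2) ^ |r| := by
  rcases le_total 0 r with hr | hr
  · rw [abs_of_nonneg hr, ← Real.mul_rpow (by positivity) (by positivity),
      ← Real.mul_rpow (by positivity) (by positivity)]
    exact Real.rpow_le_rpow (by positivity) (one_add_norm_add_sq_le x y) hr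
  · have h := one_add_norm_add_sq_le (x + y) (-y)
    rw [add_neg_cancel_right, norm_neg] at h
    have h' := Real.rpow_le_rpow (by positivity) h (neg_nonneg.2 hr)
    rw [Real.mul_rpow (by positivity) (by positivity),
      Real.mul_rpow (by positivity) (by positivity), Real.rpow_neg (by positivity) r,
      Real.rpow_neg (by positivity : (0 : ℝ) ≤ 1 + ‖x + y‖ ^ 2)] at h'
    rw [abs_of_nonpos hr]
    field_simp at h'
    linarith

variable [NormedSpace ℝ E] [NormedAddCommGroup F] [NormedSpace ℝ F]

lemma exists_norm_le_rpow (k : 𝓢(E, F)) (r : ℝ) :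
    ∃ C, ∀ x, ‖k x‖ ≤ C * (1 + ‖x‖ ^ 2) ^ (-r) := by
  obtain ⟨n, hn⟩ := exists_nat_ge r
  refine ⟨2 ^ (2 * n) * (Finset.Iic (2 * n, 0)).sup
    (fun m => SchwartzMap.seminorm ℝ m.1 m.2) k, fun x => ?_⟩
  have h := SchwartzMap.one_add_le_sup_seminorm_apply (𝕜 := ℝ) (m := (2 * n, 0)) le_rfl le_rfl k x
  rw [norm_iteratedFDeriv_zero] at h
  rw [Real.rpow_neg (by positivity), ← div_eq_mul_inv, le_div_iff₀ (by positivity), mul_comm]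
  refine le_trans ?_ h
  gcongr
  calc (1 + ‖x‖ ^ 2) ^ r ≤ (1 + ‖x‖ ^ 2) ^ (n : ℝ) :=
        Real.rpow_le_rpow_of_exponent_le (by nlinarith [norm_nonneg x]) hn
    _ ≤ (1 + ‖x‖) ^ (2 * n) := by
        rw [Real.rpow_natCast, pow_mul]
        gcongr
        nlinarith [norm_nonneg x]

lemma exists_norm_sub_le (k : 𝓢(E, F)) {r : ℝ} (hr : 0 ≤ r) :
    ∃ C, 0 ≤ C ∧ ∀ x y, ‖k (x - y)‖ ≤ C * (1 + ‖x‖ ^ 2) ^ r * (1 + ‖y‖ ^ 2) ^ (-r) := by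
  obtain ⟨C, hC⟩ := exists_norm_le_rpow k r
  have hC0 : 0 ≤ C := by simpa using (norm_nonneg _).trans (hC 0)
  refine ⟨C * 2 ^ r, by positivity, fun x y => (hC (x - y)).trans ?_⟩
  have h := one_add_norm_add_sq_rpow_le r x (y - x)
  rw [add_sub_cancel, abs_of_nonneg hr, norm_sub_rev] at h
  rw [Real.rpow_neg (by positivity), Real.rpow_neg (by positivity), mul_assoc, mul_assoc]
  gcongr
  rw [← mul_assoc, ← div_eq_mul_inv, le_div_iff₀ (by positivity), inv_mul_le_iff₀ (by positivity)]
  linarith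

end Peetre

section SobolevMeasure

/-- The measure `(1 + |ξ|²)^s dξ`, whose `L²` norm is the `H^s(ℝ²)` norm on the Fourier side. -/
def sobolevMeasure (s : ℝ) : Measure R2 :=
  volume.withDensity fun ξ => ENNReal.ofReal ((1 + ‖ξ‖ ^ 2) ^ s)

/-- The Sobolev space `H^s(ℝ²)`, each distribution being represented by its Fourier transform. -/
abbrev FourierSobolev (s : ℝ) : Type := Lp ℂ 2 (sobolevMeasure s)

variable {s : ℝ}

instance : SigmaFinite (sobolevMeasure s) := SigmaFinite.withDensity_ofReal _

lemma continuous_one_add_norm_sq_rpow (r : ℝ) : Continuous fun ξ : R2 => (1 + ‖ξ‖ ^ 2) ^ r :=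
  Continuous.rpow_const (by fun_prop) fun ξ => .inl (by positivity)

lemma volume_absolutelyContinuous_sobolevMeasure : volume ≪ sobolevMeasure s :=
  withDensity_absolutelyContinuous' (by
    have := continuous_one_add_norm_sq_rpow s
    fun_prop) (.of_forall fun _ => (ENNReal.ofReal_pos.2 (by positivity)).ne')

lemma sobolevMeasure_absolutelyContinuous_volume : sobolevMeasure s ≪ volume :=
  withDensity_absolutelyContinuous _ _

lemma lintegral_sobolevMeasure (f : R2 → ENNReal) :
    ∫⁻ ξ, f ξ ∂sobolevMeasure s = ∫⁻ ξ, ENNReal.ofReal ((1 + ‖ξ‖ ^ 2) ^ s) * f ξ :=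
  lintegral_withDensity_eq_lintegral_mul_non_measurable _
    (by have := continuous_one_add_norm_sq_rpow s; fun_prop)
    (.of_forall fun _ => ENNReal.ofReal_lt_top) f

lemma integral_sobolevMeasure {E : Type*} [NormedAddCommGroup E] [NormedSpace ℝ E] (f : R2 → E) :
    ∫ ξ, f ξ ∂sobolevMeasure s = ∫ ξ, (1 + ‖ξ‖ ^ 2) ^ s • f ξ := by
  rw [sobolevMeasure, integral_withDensity_eq_integral_toReal_smul
    (by have := continuous_one_add_norm_sq_rpow s; fun_prop)
    (.of_forall fun _ => ENNReal.ofReal_lt_top)]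
  congr! 3
  exact ENNReal.toReal_ofReal (by positivity)

lemma integrable_sobolevMeasure_iff {E : Type*} [NormedAddCommGroup E] [NormedSpace ℝ E]
    {f : R2 → E} :
    Integrable f (sobolevMeasure s) ↔ Integrable fun ξ => (1 + ‖ξ‖ ^ 2) ^ s • f ξ := by
  rw [sobolevMeasure, integrable_withDensity_iff_integrable_smul'
    (by have := continuous_one_add_norm_sq_rpow s; fun_prop)
    (.of_forall fun _ => ENNReal.ofReal_lt_top)]
  congr! 3 with ξ
  exact ENNReal.toReal_ofReal (by positivity)

lemma memLp_two_sobolevMeasure_iff {f : R2 → ℂ} (hf : AEStronglyMeasurable f) :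
    MemLp f 2 (sobolevMeasure s) ↔ Integrable fun ξ => (1 + ‖ξ‖ ^ 2) ^ s * ‖f ξ‖ ^ 2 := by
  rw [memLp_two_iff_integrable_sq_norm (hf.mono_ac sobolevMeasure_absolutelyContinuous_volume),
    integrable_sobolevMeasure_iff]
  rfl

lemma aestronglyMeasurable_of_sobolevMeasure {f : R2 → ℂ}
    (hf : AEStronglyMeasurable f (sobolevMeasure s)) : AEStronglyMeasurable f :=
  hf.mono_ac volume_absolutelyContinuous_sobolevMeasure

lemma ae_of_ae_sobolevMeasure {p : R2 → Prop} (h : ∀ᵐ ξ ∂sobolevMeasure s, p ξ) : ∀ᵐ ξ, p ξ :=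
  volume_absolutelyContinuous_sobolevMeasure.ae_le h

lemma ae_sobolevMeasure_of_ae {p : R2 → Prop} (h : ∀ᵐ ξ, p ξ) : ∀ᵐ ξ ∂sobolevMeasure s, p ξ :=
  sobolevMeasure_absolutelyContinuous_volume.ae_le h

lemma norm_sq_eq_integral {α : Type*} [MeasurableSpace α] {μ : Measure α} (f : Lp ℂ 2 μ) :
    ‖f‖ ^ 2 = ∫ x, ‖f x‖ ^ 2 ∂μ := by
  have h := congrArg RCLike.re (inner_self_eq_norm_sq_to_K (𝕜 := ℂ) f)
  rw [L2.inner_def, ← integral_re (L2.integrable_inner f f)] at h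
  simpa [← ofReal_pow] using h.symm

/-- The rapid decay that makes a function pair with `FourierSobolev s`: the weight
`(1 + |ξ|²)^(-(|s| + 2))` lies in the dual space. -/
lemma memLp_rpow_mul_rpow (s : ℝ) : MemLp (fun ξ : R2 => (1 + ‖ξ‖ ^ 2) ^ (-(|s| + 2) - s)) 2
    (sobolevMeasure s) := by
  have hmeas := (continuous_one_add_norm_sq_rpow (-(|s| + 2) - s)).aestronglyMeasurable
    (μ := sobolevMeasure s)
  rw [memLp_two_iff_integrable_sq hmeas, integrable_sobolevMeasure_iff]
  have hint : Integrable fun ξ : R2 => (1 + ‖ξ‖ ^ 2) ^ (-(3 : ℝ) / 2) :=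
    integrable_rpow_neg_one_add_norm_sq (by simp; norm_num)
  refine hint.mono' (by
    have := continuous_one_add_norm_sq_rpow s
    have := continuous_one_add_norm_sq_rpow (-(|s| + 2) - s)
    exact Continuous.aestronglyMeasurable (by fun_prop)) (.of_forall fun ξ => ?_)
  rw [Real.norm_of_nonneg (by positivity), smul_eq_mul, ← Real.rpow_mul_natCast (by positivity),
    ← Real.rpow_add (by positivity)]
  refine Real.rpow_le_rpow_of_exponent_le (by nlinarith [norm_nonneg ξ]) ?_
  push_cast
  linarith [abs_nonneg s, neg_abs_le s]

lemma integrable_norm_mul_rpow (f : FourierSobolev s) :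
    Integrable fun ξ => ‖f ξ‖ * (1 + ‖ξ‖ ^ 2) ^ (-(|s| + 2)) := by
  have h := (Lp.memLp f).norm.integrable_mul (memLp_rpow_mul_rpow s)
  rw [integrable_sobolevMeasure_iff] at h
  refine h.congr (.of_forall fun ξ => ?_)
  simp only [Pi.mul_apply, smul_eq_mul]
  rw [mul_left_comm, ← Real.rpow_add (by positivity), add_sub_cancel]

lemma exists_integral_norm_mul_rpow_le (s : ℝ) : ∃ C, ∀ f : FourierSobolev s,
    ∫ ξ, ‖f ξ‖ * (1 + ‖ξ‖ ^ 2) ^ (-(|s| + 2)) ≤ C * ‖f‖ := by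
  refine ⟨(∫ ξ, ((1 + ‖ξ‖ ^ 2) ^ (-(|s| + 2) - s)) ^ (2 : ℝ) ∂sobolevMeasure s) ^ (1 / (2 : ℝ)),
    fun f => ?_⟩
  have h := integral_mul_le_Lp_mul_Lq_of_nonneg (p := 2) (q := 2) (μ := sobolevMeasure s)
    (f := fun ξ => ‖f ξ‖) (g := fun ξ => (1 + ‖ξ‖ ^ 2) ^ (-(|s| + 2) - s))
    (by norm_num [Real.holderConjugate_iff]) (.of_forall fun _ => norm_nonneg _)
    (.of_forall fun ξ => Real.rpow_nonneg (by positivity) _)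
    (by rw [ENNReal.ofReal_ofNat]; exact (Lp.memLp f).norm)
    (by rw [ENNReal.ofReal_ofNat]; exact memLp_rpow_mul_rpow s)
  have hf : (∫ ξ, ‖f ξ‖ ^ (2 : ℝ) ∂sobolevMeasure s) ^ (1 / (2 : ℝ)) = ‖f‖ := by
    simp only [Real.rpow_two]
    rw [← norm_sq_eq_integral, ← Real.sqrt_eq_rpow, Real.sqrt_sq (norm_nonneg f)]
  rw [hf, integral_sobolevMeasure] at h
  refine (le_of_eq (integral_congr_ae (.of_forall fun ξ => ?_))).trans (h.trans_eq (mul_comm _ _))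
  simp only [smul_eq_mul]
  rw [mul_left_comm, ← Real.rpow_add (by positivity), add_sub_cancel]

end SobolevMeasure

section Convolution

open ContinuousLinearMap (mul)
open scoped Convolution

variable {s : ℝ}

lemma integrable_mul_of_norm_le_rpow (f : FourierSobolev s) {g : R2 → ℂ} {C : ℝ}
    (hg : AEStronglyMeasurable g) (hC : ∀ ξ, ‖g ξ‖ ≤ C * (1 + ‖ξ‖ ^ 2) ^ (-(|s| + 2))) :
    Integrable fun ξ => f ξ * g ξ := by
  refine ((integrable_norm_mul_rpow f).const_mul C).mono'
    ((aestronglyMeasurable_of_sobolevMeasure (Lp.aestronglyMeasurable f)).mul hg)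
    (.of_forall fun ξ => ?_)
  calc ‖f ξ * g ξ‖ ≤ ‖f ξ‖ * (C * (1 + ‖ξ‖ ^ 2) ^ (-(|s| + 2))) := by
        rw [norm_mul]
        gcongr
        exact hC ξ
    _ = C * (‖f ξ‖ * (1 + ‖ξ‖ ^ 2) ^ (-(|s| + 2))) := by ring

lemma integrable_mul_schwartz (f : FourierSobolev s) (g : 𝓢(R2, ℂ)) :
    Integrable fun ξ => f ξ * g ξ :=
  have ⟨_, hC⟩ := exists_norm_le_rpow g (|s| + 2)
  integrable_mul_of_norm_le_rpow f g.continuous.aestronglyMeasurable hC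

lemma exists_norm_mul_sub_le (s : ℝ) (k : 𝓢(R2, ℂ)) :
    ∃ C, 0 ≤ C ∧ ∀ (f : FourierSobolev s) (ξ η : R2), ‖f η * k (ξ - η)‖ ≤
      C * (1 + ‖ξ‖ ^ 2) ^ (|s| + 2) * (‖f η‖ * (1 + ‖η‖ ^ 2) ^ (-(|s| + 2))) := by
  obtain ⟨C, hC0, hC⟩ := exists_norm_sub_le k (r := |s| + 2) (by positivity)
  refine ⟨C, hC0, fun f ξ η => ?_⟩
  rw [norm_mul, mul_left_comm]
  gcongr
  exact hC ξ η

lemma integrable_mul_schwartz_sub (f : FourierSobolev s) (k : 𝓢(R2, ℂ)) (ξ : R2) :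
    Integrable fun η => f η * k (ξ - η) :=
  have ⟨_, _, hC⟩ := exists_norm_sub_le k (r := |s| + 2) (by positivity)
  integrable_mul_of_norm_le_rpow f (by fun_prop) (hC ξ)

lemma exists_norm_convolution_le (s : ℝ) (k : 𝓢(R2, ℂ)) :
    ∃ C, ∀ (f : FourierSobolev s) (ξ : R2),
      ‖(f ⋆[mul ℂ ℂ] k) ξ‖ ≤ C * (1 + ‖ξ‖ ^ 2) ^ (|s| + 2) * ‖f‖ := by
  obtain ⟨C, hC0, hC⟩ := exists_norm_mul_sub_le s k
  obtain ⟨M, hM⟩ := exists_integral_norm_mul_rpow_le s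
  refine ⟨C * M, fun f ξ => ?_⟩
  calc ‖(f ⋆[mul ℂ ℂ] k) ξ‖
      ≤ ∫ η, C * (1 + ‖ξ‖ ^ 2) ^ (|s| + 2) * (‖f η‖ * (1 + ‖η‖ ^ 2) ^ (-(|s| + 2))) :=
        norm_integral_le_of_norm_le ((integrable_norm_mul_rpow f).const_mul _)
          (.of_forall (hC f ξ))
    _ ≤ C * (1 + ‖ξ‖ ^ 2) ^ (|s| + 2) * (M * ‖f‖) := by
        rw [integral_const_mul]
        gcongr
        exact hM f
    _ = C * M * (1 + ‖ξ‖ ^ 2) ^ (|s| + 2) * ‖f‖ := by ring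

lemma continuous_convolution_schwartz (f : FourierSobolev s) (k : 𝓢(R2, ℂ)) :
    Continuous (f ⋆[mul ℂ ℂ] k) := by
  obtain ⟨C, hC0, hC⟩ := exists_norm_mul_sub_le s k
  refine continuous_iff_continuousAt.2 fun ξ₀ => ?_
  refine continuousAt_of_dominated (bound := fun η => C * (2 + ‖ξ₀‖ ^ 2) ^ (|s| + 2) *
      (‖f η‖ * (1 + ‖η‖ ^ 2) ^ (-(|s| + 2))))
    (.of_forall fun ξ => (integrable_mul_schwartz_sub f k ξ).aestronglyMeasurable) ?_
    ((integrable_norm_mul_rpow f).const_mul _)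
    (.of_forall fun η => Continuous.continuousAt (by fun_prop))
  have hlt : ∀ᶠ ξ in 𝓝 ξ₀, ‖ξ‖ ^ 2 < 1 + ‖ξ₀‖ ^ 2 :=
    (show Continuous fun ξ : R2 => ‖ξ‖ ^ 2 by fun_prop).continuousAt.eventually_lt_const
      (by linarith)
  filter_upwards [hlt] with ξ hξ
  refine .of_forall fun η => (hC f ξ η).trans ?_
  gcongr ?_ * ?_ ^ _ * _
  linarith

lemma lintegral_mul_sq_le {α : Type*} [MeasurableSpace α] {μ : Measure α} {f g : α → ENNReal}
    (hf : AEMeasurable f μ) (hg : AEMeasurable g μ) :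
    (∫⁻ x, f x * g x ∂μ) ^ 2 ≤ (∫⁻ x, f x ^ 2 * g x ∂μ) * ∫⁻ x, g x ∂μ := by
  have h := ENNReal.lintegral_mul_le_Lp_mul_Lq μ (p := 2) (q := 2)
    (by norm_num [Real.holderConjugate_iff]) (f := fun x => f x * g x ^ (1 / 2 : ℝ))
    (g := fun x => g x ^ (1 / 2 : ℝ)) (by fun_prop) (by fun_prop)
  have hsqrt : ∀ a : ENNReal, (a ^ (1 / 2 : ℝ)) ^ (2 : ℝ) = a := fun a => by
    rw [← ENNReal.rpow_mul]; norm_num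
  have hmul : ∀ x, f x * g x ^ (1 / 2 : ℝ) * g x ^ (1 / 2 : ℝ) = f x * g x := fun x => by
    rw [mul_assoc, ← ENNReal.rpow_add_of_nonneg _ _ (by norm_num) (by norm_num)]; norm_num
  simp only [Pi.mul_apply, hmul, ENNReal.mul_rpow_of_nonneg _ _ zero_le_two, hsqrt] at h
  calc (∫⁻ x, f x * g x ∂μ) ^ 2
      ≤ ((∫⁻ x, f x ^ 2 * g x ∂μ) ^ (1 / 2 : ℝ) * (∫⁻ x, g x ∂μ) ^ (1 / 2 : ℝ)) ^ 2 := by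
        gcongr
        simpa only [ENNReal.rpow_two] using h
    _ = _ := by
      rw [mul_pow, ← ENNReal.rpow_two, ← ENNReal.rpow_two, hsqrt, hsqrt]

lemma lintegral_weight_enorm_schwartz_lt_top (k : 𝓢(R2, ℂ)) (r : ℝ) :
    ∫⁻ ξ, ENNReal.ofReal ((1 + ‖ξ‖ ^ 2) ^ r) * ‖k ξ‖ₑ < ⊤ := by
  obtain ⟨C, hC⟩ := exists_norm_le_rpow k (r + 3 / 2)
  have hint : Integrable fun ξ : R2 => C * (1 + ‖ξ‖ ^ 2) ^ (-(3 : ℝ) / 2) :=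
    (integrable_rpow_neg_one_add_norm_sq (by simp; norm_num)).const_mul C
  refine lt_of_le_of_lt (lintegral_mono fun ξ => ?_) hint.lintegral_lt_top
  rw [← ofReal_norm, ← ENNReal.ofReal_mul (by positivity)]
  refine ENNReal.ofReal_le_ofReal ?_
  calc (1 + ‖ξ‖ ^ 2) ^ r * ‖k ξ‖
      ≤ (1 + ‖ξ‖ ^ 2) ^ r * (C * (1 + ‖ξ‖ ^ 2) ^ (-(r + 3 / 2))) := by gcongr; exact hC ξ
    _ = C * (1 + ‖ξ‖ ^ 2) ^ (-(3 : ℝ) / 2) := by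
      rw [mul_left_comm, ← Real.rpow_add (by positivity)]
      ring_nf

lemma lintegral_mul_lintegral_sub_le {G : Type*} [AddGroup G] [MeasurableSpace G]
    [MeasurableAdd₂ G] [MeasurableNeg G] {μ : Measure G} [SFinite μ] [μ.IsAddRightInvariant]
    {w v f g : G → ENNReal} {c : ENNReal} (hw : Measurable w) (hv : Measurable v)
    (hf : Measurable f) (hg : Measurable g) (h : ∀ x y, w x ≤ c * w y * v (x - y)) :
    ∫⁻ x, w x * ∫⁻ y, f y * g (x - y) ∂μ ∂μ ≤
      c * (∫⁻ z, v z * g z ∂μ) * ∫⁻ y, w y * f y ∂μ := by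
  have hshift : ∀ y, ∫⁻ x, v (x - y) * g (x - y) ∂μ = ∫⁻ z, v z * g z ∂μ :=
    lintegral_sub_right_eq_self fun z => v z * g z
  calc ∫⁻ x, w x * ∫⁻ y, f y * g (x - y) ∂μ ∂μ
      = ∫⁻ x, ∫⁻ y, w x * (f y * g (x - y)) ∂μ ∂μ :=
        lintegral_congr fun x => (lintegral_const_mul _ (by fun_prop)).symm
    _ ≤ ∫⁻ x, ∫⁻ y, c * (w y * f y) * (v (x - y) * g (x - y)) ∂μ ∂μ := by
        refine lintegral_mono fun x => lintegral_mono fun y => ?_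
        calc w x * (f y * g (x - y)) ≤ c * w y * v (x - y) * (f y * g (x - y)) := by
              gcongr
              exact h x y
          _ = c * (w y * f y) * (v (x - y) * g (x - y)) := by ring
    _ = ∫⁻ y, c * (w y * f y) * ∫⁻ x, v (x - y) * g (x - y) ∂μ ∂μ := by
        rw [lintegral_lintegral_swap (by fun_prop)]
        exact lintegral_congr fun y => lintegral_const_mul _ (by fun_prop)
    _ = c * (∫⁻ z, v z * g z ∂μ) * ∫⁻ y, w y * f y ∂μ := by
        simp only [hshift]
        rw [lintegral_mul_const _ (by fun_prop), lintegral_const_mul _ (by fun_prop)]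
        ring

/-- Schur's test, with the weights compared by Peetre's inequality. -/
lemma lintegral_weight_enorm_convolution_sq_le (f : FourierSobolev s) (k : 𝓢(R2, ℂ)) :
    ∫⁻ ξ, ENNReal.ofReal ((1 + ‖ξ‖ ^ 2) ^ s) * ‖(f ⋆[mul ℂ ℂ] k) ξ‖ₑ ^ 2 ≤
      ENNReal.ofReal (2 ^ |s|) * (∫⁻ ζ, ENNReal.ofReal ((1 + ‖ζ‖ ^ 2) ^ |s|) * ‖k ζ‖ₑ) *
        (∫⁻ ζ, ‖k ζ‖ₑ) * ∫⁻ η, ENNReal.ofReal ((1 + ‖η‖ ^ 2) ^ s) * ‖f η‖ₑ ^ 2 := by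
  set w : ℝ → R2 → ENNReal := fun r ξ => ENNReal.ofReal ((1 + ‖ξ‖ ^ 2) ^ r) with hw
  have hwm : ∀ r, Measurable (w r) := fun r =>
    (continuous_one_add_norm_sq_rpow r).measurable.ennreal_ofReal
  have hfm : Measurable f := (Lp.stronglyMeasurable f).measurable
  have hkm : Measurable k := k.continuous.measurable
  have hpeetre : ∀ ξ η, w s ξ ≤ ENNReal.ofReal (2 ^ |s|) * w s η * w |s| (ξ - η) := fun ξ η => by
    rw [hw, ← ENNReal.ofReal_mul (by positivity), ← ENNReal.ofReal_mul (by positivity)]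
    exact ENNReal.ofReal_le_ofReal (by simpa using one_add_norm_add_sq_rpow_le s η (ξ - η))
  have hpoint : ∀ ξ, ‖(f ⋆[mul ℂ ℂ] k) ξ‖ₑ ^ 2 ≤
      (∫⁻ η, ‖f η‖ₑ ^ 2 * ‖k (ξ - η)‖ₑ) * ∫⁻ ζ, ‖k ζ‖ₑ := fun ξ => by
    rw [← lintegral_sub_left_eq_self (fun ζ => ‖k ζ‖ₑ) ξ]
    refine le_trans ?_ (lintegral_mul_sq_le (by fun_prop) (by fun_prop))
    gcongr
    exact (enorm_integral_le_lintegral_enorm fun η => f η * k (ξ - η)).trans_eq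
      (by simp only [enorm_mul])
  calc ∫⁻ ξ, w s ξ * ‖(f ⋆[mul ℂ ℂ] k) ξ‖ₑ ^ 2
      ≤ ∫⁻ ξ, w s ξ * (∫⁻ η, ‖f η‖ₑ ^ 2 * ‖k (ξ - η)‖ₑ) * ∫⁻ ζ, ‖k ζ‖ₑ :=
        lintegral_mono fun ξ => (mul_le_mul_right (hpoint ξ) (w s ξ)).trans_eq (mul_assoc ..).symm
    _ = (∫⁻ ξ, w s ξ * ∫⁻ η, ‖f η‖ₑ ^ 2 * ‖k (ξ - η)‖ₑ) * ∫⁻ ζ, ‖k ζ‖ₑ :=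
        lintegral_mul_const _ (by fun_prop)
    _ ≤ _ := by
        refine (mul_le_mul_left (lintegral_mul_lintegral_sub_le (hwm s) (hwm |s|)
          (hfm.enorm.pow_const 2) hkm.enorm hpeetre) _).trans_eq ?_
        ring

lemma convolution_add_coe (f g : FourierSobolev s) (k : 𝓢(R2, ℂ)) :
    (⇑(f + g) ⋆[mul ℂ ℂ] k) = (f ⋆[mul ℂ ℂ] k) + (g ⋆[mul ℂ ℂ] k) := by
  ext ξ
  refine (integral_congr_ae ?_).trans
    (integral_add (integrable_mul_schwartz_sub f k ξ) (integrable_mul_schwartz_sub g k ξ))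
  filter_upwards [ae_of_ae_sobolevMeasure (Lp.coeFn_add f g)] with η hη
  simp only [ContinuousLinearMap.mul_apply', hη, Pi.add_apply, add_mul]

lemma convolution_smul_coe (c : ℂ) (f : FourierSobolev s) (k : 𝓢(R2, ℂ)) :
    (⇑(c • f) ⋆[mul ℂ ℂ] k) = c • (f ⋆[mul ℂ ℂ] k) := by
  ext ξ
  refine (integral_congr_ae ?_).trans (integral_const_mul c fun η => f η * k (ξ - η))
  filter_upwards [ae_of_ae_sobolevMeasure (Lp.coeFn_smul c f)] with η hη
  simp only [ContinuousLinearMap.mul_apply', hη, Pi.smul_apply, smul_eq_mul, mul_assoc]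

/-- Evaluation `f ↦ (f ⋆ k) ξ` of a convolution, as a functional on `L²((1 + |ξ|²)^s dξ)`. -/
def convolutionEvalCLM (s : ℝ) (k : 𝓢(R2, ℂ)) (ξ : R2) : FourierSobolev s →L[ℂ] ℂ :=
  LinearMap.mkContinuousOfExistsBound
    { toFun := fun f => (f ⋆[mul ℂ ℂ] k) ξ
      map_add' := fun f g => congrFun (convolution_add_coe f g k) ξ
      map_smul' := fun c f => congrFun (convolution_smul_coe c f k) ξ }
    (have ⟨_, hC⟩ := exists_norm_convolution_le s k
    ⟨_, fun f => hC f ξ⟩)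

@[simp]
lemma convolutionEvalCLM_apply (k : 𝓢(R2, ℂ)) (ξ : R2) (f : FourierSobolev s) :
    convolutionEvalCLM s k ξ f = (f ⋆[mul ℂ ℂ] k) ξ := rfl

/-- Convolution with `k` is bounded from `L²((1 + |ξ|²)^s dξ)` to `L²(ν)`. -/
def IsConvolutionBounded (s : ℝ) (k : 𝓢(R2, ℂ)) (ν : Measure R2) : Prop :=
  ∃ C : ℝ≥0, ∀ f : FourierSobolev s, eLpNorm (f ⋆[mul ℂ ℂ] k) 2 ν ≤ C * ‖f‖ₑ

lemma eLpNorm_two_sq {α : Type*} [MeasurableSpace α] {μ : Measure α} (f : α → ℂ) :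
    eLpNorm f 2 μ ^ 2 = ∫⁻ x, ‖f x‖ₑ ^ 2 ∂μ := by
  simpa using eLpNorm_nnreal_pow_eq_lintegral (f := f) (μ := μ) (p := 2) two_ne_zero

lemma isConvolutionBounded_sobolevMeasure (s : ℝ) (k : 𝓢(R2, ℂ)) :
    IsConvolutionBounded s k (sobolevMeasure s) := by
  let c := ENNReal.ofReal (2 ^ |s|) *
    (∫⁻ ζ, ENNReal.ofReal ((1 + ‖ζ‖ ^ 2) ^ |s|) * ‖k ζ‖ₑ) * (∫⁻ ζ, ‖k ζ‖ₑ)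
  have hc : c ≠ ⊤ :=
    ENNReal.mul_ne_top (ENNReal.mul_ne_top ENNReal.ofReal_ne_top
      (lintegral_weight_enorm_schwartz_lt_top k |s|).ne) k.integrable.2.ne
  refine ⟨NNReal.sqrt c.toNNReal, fun f =>
    (ENNReal.pow_le_pow_left_iff two_ne_zero).1 ?_⟩
  rw [mul_pow, ← ENNReal.coe_pow, NNReal.sq_sqrt, ENNReal.coe_toNNReal hc, Lp.enorm_def,
    eLpNorm_two_sq, eLpNorm_two_sq, lintegral_sobolevMeasure, lintegral_sobolevMeasure]
  exact lintegral_weight_enorm_convolution_sq_le f k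

lemma isConvolutionBounded_of_memLp (k : 𝓢(R2, ℂ)) {ν : Measure R2}
    (hν : MemLp (fun ξ : R2 => (1 + ‖ξ‖ ^ 2) ^ (|s| + 2)) 2 ν) : IsConvolutionBounded s k ν := by
  obtain ⟨C, hC⟩ := exists_norm_convolution_le s k
  refine ⟨C.toNNReal * (eLpNorm (fun ξ : R2 => (1 + ‖ξ‖ ^ 2) ^ (|s| + 2)) 2 ν).toNNReal,
    fun f => ?_⟩
  have h : ∀ ξ, ‖(f ⋆[mul ℂ ℂ] k) ξ‖ ≤ C * ‖f‖ * ‖(1 + ‖ξ‖ ^ 2) ^ (|s| + 2)‖ := fun ξ => by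
    rw [Real.norm_of_nonneg (by positivity), mul_right_comm]
    exact hC f ξ
  refine (eLpNorm_le_mul_eLpNorm_of_ae_le_mul (.of_forall h) 2).trans_eq ?_
  rw [ENNReal.coe_mul, ENNReal.coe_toNNReal hν.2.ne, ENNReal.ofReal_mul' (norm_nonneg f),
    ofReal_norm, ENNReal.ofReal, mul_right_comm]

namespace IsConvolutionBounded

variable {k : 𝓢(R2, ℂ)} {ν : Measure R2}

lemma memLp (h : IsConvolutionBounded s k ν) (f : FourierSobolev s) :
    MemLp (f ⋆[mul ℂ ℂ] k) 2 ν :=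
  have ⟨_, hC⟩ := h
  ⟨(continuous_convolution_schwartz f k).aestronglyMeasurable,
    (hC f).trans_lt (ENNReal.mul_lt_top ENNReal.coe_lt_top enorm_lt_top)⟩

/-- The operator `f ↦ f ⋆ k` from `L²((1 + |ξ|²)^s dξ)` to `L²(ν)`. -/
def clm (h : IsConvolutionBounded s k ν) : FourierSobolev s →L[ℂ] Lp ℂ 2 ν :=
  LinearMap.mkContinuousOfExistsBound
    { toFun := fun f => (h.memLp f).toLp
      map_add' := fun f g => by
        rw [← MemLp.toLp_add]
        simp only [convolution_add_coe]
      map_smul' := fun c f => by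
        rw [RingHom.id_apply, ← MemLp.toLp_const_smul]
        simp only [convolution_smul_coe] }
    (have ⟨C, hC⟩ := h
    ⟨C, fun f => by
      rw [← toReal_enorm, ← toReal_enorm, ← ENNReal.coe_toReal, ← ENNReal.toReal_mul]
      refine ENNReal.toReal_mono (ENNReal.mul_ne_top ENNReal.coe_ne_top enorm_ne_top) ?_
      exact (Lp.enorm_toLp (h.memLp f)).trans_le (hC f)⟩)

lemma coeFn_clm (h : IsConvolutionBounded s k ν) (f : FourierSobolev s) :
    h.clm f =ᵐ[ν] f ⋆[mul ℂ ℂ] k :=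
  (h.memLp f).coeFn_toLp

lemma norm_clm_sq (h : IsConvolutionBounded s k ν) (f : FourierSobolev s) :
    ‖h.clm f‖ ^ 2 = ∫ ξ, ‖(f ⋆[mul ℂ ℂ] k) ξ‖ ^ 2 ∂ν := by
  rw [norm_sq_eq_integral]
  refine integral_congr_ae ?_
  filter_upwards [h.coeFn_clm f] with ξ hξ
  rw [hξ]

end IsConvolutionBounded

lemma isCompletelyContinuous_convolution {k : 𝓢(R2, ℂ)} {ν : Measure R2}
    (hν : MemLp (fun ξ : R2 => (1 + ‖ξ‖ ^ 2) ^ (|s| + 2)) 2 ν) :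
    IsCompletelyContinuous (isConvolutionBounded_of_memLp k hν).clm := by
  intro u hu
  obtain ⟨C, hC⟩ := exists_norm_convolution_le s k
  obtain ⟨M, hM⟩ := hu.exists_norm_le
  have hpoint : ∀ ξ, Tendsto (fun n => ‖(u n ⋆[mul ℂ ℂ] k) ξ‖ ^ 2) atTop (𝓝 0) := fun ξ => by
    simpa using ((hu.map (convolutionEvalCLM s k ξ)).tendsto_zero.norm.pow 2)
  have hle : ∀ n ξ, ‖‖(u n ⋆[mul ℂ ℂ] k) ξ‖ ^ 2‖ ≤
      (|C| * M) ^ 2 * ((1 + ‖ξ‖ ^ 2) ^ (|s| + 2)) ^ 2 := fun n ξ => by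
    rw [Real.norm_of_nonneg (by positivity), ← mul_pow]
    gcongr
    calc ‖(u n ⋆[mul ℂ ℂ] k) ξ‖ ≤ C * (1 + ‖ξ‖ ^ 2) ^ (|s| + 2) * ‖u n‖ := hC _ ξ
      _ ≤ |C| * (1 + ‖ξ‖ ^ 2) ^ (|s| + 2) * M := by gcongr; exacts [le_abs_self C, hM n]
      _ = |C| * M * (1 + ‖ξ‖ ^ 2) ^ (|s| + 2) := by ring
  have hsq : Tendsto (fun n => ‖(isConvolutionBounded_of_memLp k hν).clm (u n)‖ ^ 2) atTop
      (𝓝 0) := by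
    simp only [IsConvolutionBounded.norm_clm_sq]
    simpa using tendsto_integral_of_dominated_convergence (μ := ν) _
      (fun n => ((continuous_convolution_schwartz (u n) k).norm.pow 2).aestronglyMeasurable)
      (hν.integrable_sq.const_mul _) (fun n => .of_forall (hle n)) (.of_forall hpoint)
  exact tendsto_zero_iff_norm_tendsto_zero.2 (by simpa using hsq.sqrt)

/-- Convolution with a Schwartz function, on the Fourier side of `H^s(ℝ²)`. -/
def convolutionCLM (s : ℝ) (k : 𝓢(R2, ℂ)) :
    FourierSobolev s →L[ℂ] FourierSobolev s :=
  (isConvolutionBounded_sobolevMeasure s k).clm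

lemma coeFn_convolutionCLM (k : 𝓢(R2, ℂ)) (f : FourierSobolev s) :
    convolutionCLM s k f =ᵐ[sobolevMeasure s] f ⋆[mul ℂ ℂ] k :=
  IsConvolutionBounded.coeFn_clm _ f

end Convolution

section Multiplier

variable {α : Type*} [MeasurableSpace α] {μ : Measure α} {m : α → ℂ}

/-- Multiplication by a bounded function on `L²(μ)`. -/
def mulCLM (hm : MemLp m ⊤ μ) : Lp ℂ 2 μ →L[ℂ] Lp ℂ 2 μ :=
  (ContinuousLinearMap.mul ℂ ℂ).holderL μ ⊤ 2 2 hm.toLp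

lemma coeFn_mulCLM (hm : MemLp m ⊤ μ) (f : Lp ℂ 2 μ) : mulCLM hm f =ᵐ[μ] fun x => m x * f x := by
  filter_upwards [(ContinuousLinearMap.mul ℂ ℂ).coeFn_holder (r := 2) hm.toLp f, hm.coeFn_toLp]
    with x h hx
  exact h.trans (by rw [hx, ContinuousLinearMap.mul_apply'])

lemma norm_mulCLM_sq (hm : MemLp m ⊤ μ) (f : Lp ℂ 2 μ) :
    ‖mulCLM hm f‖ ^ 2 = ∫ x, ‖m x * f x‖ ^ 2 ∂μ := by
  rw [norm_sq_eq_integral]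
  refine integral_congr_ae ?_
  filter_upwards [coeFn_mulCLM hm f] with x hx
  rw [hx]

lemma norm_mulCLM_sq_le (hm : MemLp m ⊤ μ) {t : Set α} (ht : MeasurableSet t) {ε : ℝ}
    (hε0 : 0 ≤ ε) (hε : ∀ x ∉ t, ‖m x‖ ^ 2 ≤ ε) (f : Lp ℂ 2 μ) :
    ‖mulCLM hm f‖ ^ 2 ≤ ε * ‖f‖ ^ 2 + ∫ x in t, ‖m x * f x‖ ^ 2 ∂μ := by
  have hint : Integrable (fun x => ‖m x * f x‖ ^ 2) μ :=
    ((Lp.memLp f).mul hm).integrable_norm_pow two_ne_zero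
  have hintf : Integrable (fun x => ε * ‖f x‖ ^ 2) μ :=
    ((Lp.memLp f).integrable_norm_pow two_ne_zero).const_mul ε
  rw [norm_mulCLM_sq, ← integral_add_compl ht hint, add_comm, norm_sq_eq_integral f,
    ← integral_const_mul]
  gcongr
  calc ∫ x in tᶜ, ‖m x * f x‖ ^ 2 ∂μ ≤ ∫ x in tᶜ, ε * ‖f x‖ ^ 2 ∂μ :=
        setIntegral_mono_on hint.integrableOn hintf.integrableOn ht.compl fun x hx => by
          rw [norm_mul, mul_pow]
          gcongr
          exact hε x hx
    _ ≤ ∫ x, ε * ‖f x‖ ^ 2 ∂μ :=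
        setIntegral_le_integral hintf (.of_forall fun x => by positivity)

lemma adjoint_mulCLM {a : α → ℝ} (ha : MemLp (fun x => (a x : ℂ)) ⊤ μ) :
    ContinuousLinearMap.adjoint (mulCLM ha) = mulCLM ha := by
  refine ContinuousLinearMap.ext fun f => ext_inner_left ℂ fun g => ?_
  rw [ContinuousLinearMap.adjoint_inner_right, L2.inner_def, L2.inner_def]
  refine integral_congr_ae ?_
  filter_upwards [coeFn_mulCLM ha f, coeFn_mulCLM ha g] with x hf hg
  rw [hf, hg, RCLike.inner_apply, RCLike.inner_apply, map_mul, conj_ofReal]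
  ring

end Multiplier

section VanishingMultiplier

variable {s : ℝ}

instance : IsLocallyFiniteMeasure (sobolevMeasure s) :=
  IsLocallyFiniteMeasure.withDensity_ofReal (continuous_one_add_norm_sq_rpow s)

lemma memLp_rpow_of_ae_norm_le {ν : Measure R2} [IsFiniteMeasure ν] {R : ℝ} {r : ℝ} (hr : 0 ≤ r)
    (hR : ∀ᵐ ξ ∂ν, ‖ξ‖ ≤ R) : MemLp (fun ξ : R2 => (1 + ‖ξ‖ ^ 2) ^ r) 2 ν := by
  refine MemLp.of_bound (continuous_one_add_norm_sq_rpow r).aestronglyMeasurable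
    ((1 + R ^ 2) ^ r) ?_
  filter_upwards [hR] with ξ hξ
  rw [Real.norm_of_nonneg (by positivity)]
  gcongr

lemma exists_norm_mulCLM_convolutionCLM_sq_le {m : R2 → ℂ} (hm : MemLp m ⊤ (sobolevMeasure s))
    (hm0 : Tendsto m (cocompact R2) (𝓝 0)) (k : 𝓢(R2, ℂ)) {ε : ℝ} (hε : 0 < ε) :
    ∃ (ν : Measure R2) (K : FourierSobolev s →L[ℂ] Lp ℂ 2 ν), IsCompletelyContinuous K ∧
      ∀ f, ‖mulCLM hm (convolutionCLM s k f)‖ ^ 2 ≤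
        ε * ‖convolutionCLM s k f‖ ^ 2 + ‖K f‖ ^ 2 := by
  have hsmall : ∀ᶠ ξ in cocompact R2, ‖m ξ‖ ^ 2 < ε := by
    have h := hm0.norm.pow 2
    rw [norm_zero, zero_pow two_ne_zero] at h
    exact h.eventually_lt_const hε
  obtain ⟨R, -, hR⟩ := (Metric.hasBasis_cobounded_compl_closedBall (0 : R2)).eventually_iff.1
    (Metric.cobounded_eq_cocompact (α := R2) ▸ hsmall)
  have hball : MeasurableSet (Metric.closedBall (0 : R2) R) :=
    Metric.isClosed_closedBall.measurableSet
  set ν := (sobolevMeasure s).restrict (Metric.closedBall 0 R)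
  have : IsFiniteMeasure ν := ⟨by
    rw [Measure.restrict_apply_univ]
    exact (isCompact_closedBall (0 : R2) R).measure_lt_top⟩
  have hν : MemLp (fun ξ : R2 => (1 + ‖ξ‖ ^ 2) ^ (|s| + 2)) 2 ν :=
    memLp_rpow_of_ae_norm_le (by positivity) <|
      (ae_restrict_mem hball).mono fun ξ hξ => by simpa using hξ
  refine ⟨ν, mulCLM (hm.restrict _) ∘L (isConvolutionBounded_of_memLp k hν).clm,
    (isCompletelyContinuous_convolution hν).clm_comp _, fun f => ?_⟩
  refine (norm_mulCLM_sq_le hm hball hε.le (fun ξ hξ => (hR hξ).le) _).trans_eq ?_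
  rw [ContinuousLinearMap.comp_apply, norm_mulCLM_sq (hm.restrict _)]
  congr 1
  refine integral_congr_ae ?_
  filter_upwards [ae_restrict_of_ae (coeFn_convolutionCLM k f),
    (isConvolutionBounded_of_memLp k hν).coeFn_clm f] with ξ h₁ h₂
  rw [h₁, h₂]

/-- Rellich's theorem: convolution localises, and `m` measures a loss of regularity. -/
lemma isCompletelyContinuous_mulCLM_comp_convolutionCLM {m : R2 → ℂ}
    (hm : MemLp m ⊤ (sobolevMeasure s)) (hm0 : Tendsto m (cocompact R2) (𝓝 0)) (k : 𝓢(R2, ℂ)) :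
    IsCompletelyContinuous (mulCLM hm ∘L convolutionCLM s k) :=
  .of_forall_norm_sq_le (convolutionCLM s k) fun _ hε =>
    have ⟨_, K, hK, h⟩ := exists_norm_mulCLM_convolutionCLM_sq_le hm hm0 k hε
    ⟨fun f => ‖K f‖ ^ 2, fun u hu => by simpa using (hK u hu).norm.pow 2, h⟩

end VanishingMultiplier

/-! ## Fourier transforms of test functions -/

section TestFourier

open scoped FourierTransform Convolution LineDeriv
open ContinuousLinearMap (mul)
open SchwartzMap (compCLMOfContinuousLinearEquiv smulLeftCLM)

lemma rdot_eq_inner (x ξ : R2) : rdot x ξ = inner ℝ x ξ := by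
  simp [rdot, PiLp.inner_apply, mul_comm]

lemma rdot_comm (x ξ : R2) : rdot x ξ = rdot ξ x := by
  simp only [rdot, mul_comm]

lemma rdot_smul_right (c : ℝ) (x ξ : R2) : rdot x (c • ξ) = c * rdot x ξ := by
  simp only [rdot_eq_inner, real_inner_smul_right]

lemma two_pi_inv_ne_zero : (2 * π)⁻¹ ≠ 0 := by positivity

lemma testFT_eq_fourierInv (φ : R2 → ℂ) (ξ : R2) : testFT φ ξ = 𝓕⁻ φ ((2 * π)⁻¹ • ξ) := by
  rw [Real.fourierInv_eq', testFT]
  refine integral_congr_ae (.of_forall fun x => ?_)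
  have h : 2 * π * ((2 * π)⁻¹ * rdot x ξ) = rdot x ξ := by field_simp
  simp only [← rdot_eq_inner, rdot_smul_right, h, smul_eq_mul, mul_comm I]

/-- The dilation `ξ ↦ (2π)⁻¹ ξ`, relating `testFT` to the normalization `e^{2πi x·ξ}`. -/
def angularDilation : R2 ≃L[ℝ] R2 :=
  ContinuousLinearEquiv.smulLeft (Units.mk0 _ two_pi_inv_ne_zero)

@[simp]
lemma angularDilation_apply (ξ : R2) : angularDilation ξ = (2 * π)⁻¹ • ξ := rfl

/-- `testFT` as a continuous operator on the Schwartz space. -/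
def testFTCLM : 𝓢(R2, ℂ) →L[ℂ] 𝓢(R2, ℂ) :=
  compCLMOfContinuousLinearEquiv ℂ angularDilation ∘L
    (FourierTransform.fourierInvCLM ℂ 𝓢(R2, ℂ))

lemma coe_testFTCLM (φ : 𝓢(R2, ℂ)) : ⇑(testFTCLM φ) = testFT φ := by
  ext ξ
  rw [testFT_eq_fourierInv, ← SchwartzMap.fourierInv_coe]
  rfl

/-- The Schwartz function `mulKernel χ` with `testFT (mulKernel χ) = χ`: convolution with it on
the Fourier side is multiplication by `χ` in physical space. -/
def mulKernel : 𝓢(R2, ℂ) →L[ℂ] 𝓢(R2, ℂ) :=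
  ((((2 * π) ^ 2)⁻¹ : ℝ) : ℂ) • (compCLMOfContinuousLinearEquiv ℂ angularDilation ∘L
    (FourierTransform.fourierCLM ℂ 𝓢(R2, ℂ)))

lemma mulKernel_apply (χ : 𝓢(R2, ℂ)) (ζ : R2) :
    mulKernel χ ζ = ((((2 * π) ^ 2)⁻¹ : ℝ) : ℂ) * 𝓕 χ ((2 * π)⁻¹ • ζ) := rfl

lemma mulKernel_neg (χ : 𝓢(R2, ℂ)) (ζ : R2) :
    mulKernel χ (-ζ) = ((((2 * π) ^ 2)⁻¹ : ℝ) : ℂ) * testFT χ ζ := by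
  rw [mulKernel_apply, testFT_eq_fourierInv, SchwartzMap.fourier_coe,
    Real.fourierInv_eq_fourier_neg, smul_neg]

lemma testFT_mulKernel (χ : 𝓢(R2, ℂ)) : testFT (mulKernel χ) = χ := by
  ext x
  have h := Measure.integral_comp_smul (volume : Measure R2)
    (fun v => Complex.exp ((↑(2 * π * inner ℝ v x) : ℂ) * I) • 𝓕 χ v) (2 * π)⁻¹
  have hinv : ∫ v, Complex.exp ((↑(2 * π * inner ℝ v x) : ℂ) * I) • 𝓕 χ v = χ x := by
    rw [← Real.fourierInv_eq', ← SchwartzMap.fourierInv_coe, FourierPair.fourierInv_fourier_eq]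
  have hdet : |((2 * π)⁻¹ ^ 2)⁻¹| = (2 * π) ^ 2 := by
    rw [abs_of_nonneg (by positivity), inv_pow, inv_inv]
  rw [hinv, finrank_euclideanSpace_fin, hdet, Complex.real_smul] at h
  calc testFT (mulKernel χ) x
      = ((((2 * π) ^ 2)⁻¹ : ℝ) : ℂ) * ∫ ζ : R2,
          Complex.exp ((↑(2 * π * inner ℝ ((2 * π)⁻¹ • ζ) x) : ℂ) * I) • 𝓕 χ ((2 * π)⁻¹ • ζ) := by
        rw [testFT, ← integral_const_mul]
        refine integral_congr_ae (.of_forall fun ζ => ?_)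
        have h2π : 2 * π * ((2 * π)⁻¹ * rdot ζ x) = rdot ζ x := by field_simp
        simp only [mulKernel_apply, real_inner_smul_left, ← rdot_eq_inner, h2π,
          smul_eq_mul, mul_comm I]
        ring
    _ = χ x := by
        rw [h, ← mul_assoc, ← ofReal_mul, inv_mul_cancel₀ (by positivity), ofReal_one, one_mul]

lemma integral_testFT_smul_mul_eq (c : ℝ) {f g : R2 → ℂ} (hf : Integrable f)
    (hg : Integrable g) : ∫ ξ, testFT f (c • ξ) * g ξ = ∫ x, f x * testFT g (c • x) := by
  let L : R2 →ₗ[ℝ] R2 →ₗ[ℝ] ℝ := -((2 * π)⁻¹ * c) • innerₗ R2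
  have hL (φ : R2 → ℂ) :
      VectorFourier.fourierIntegral 𝐞 volume L φ = fun ξ => testFT φ (c • ξ) := by
    ext ξ
    refine integral_congr_ae (.of_forall fun x => ?_)
    have h2π : 2 * π * ((2 * π)⁻¹ * c * rdot x ξ) = c * rdot x ξ := by field_simp
    simp only [L, Circle.smul_def, Real.fourierChar_apply, LinearMap.smul_apply, rdot_smul_right,
      innerₗ_apply_apply, ← rdot_eq_inner, smul_eq_mul, neg_mul, neg_neg, h2π, mul_comm I]
  have hflip : L.flip = L := by
    ext x ξ
    simp [L, real_inner_comm]
  have hcont : Continuous fun p : R2 × R2 => L p.1 p.2 :=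
    (continuous_fst.inner continuous_snd).const_smul _
  have h := VectorFourier.integral_fourierIntegral_smul_eq_flip (L := L) (μ := volume)
    (ν := volume) Real.continuous_fourierChar hcont hf hg
  simpa only [hflip, hL, smul_eq_mul] using h

lemma integral_testFT_mul_eq {f g : R2 → ℂ} (hf : Integrable f) (hg : Integrable g) :
    ∫ ξ, testFT f ξ * g ξ = ∫ x, f x * testFT g x := by
  simpa only [one_smul] using integral_testFT_smul_mul_eq 1 hf hg

lemma testFT_comp_sub (φ : R2 → ℂ) (z ξ : R2) :
    testFT (fun x => φ (x - z)) ξ = Complex.exp (I * rdot z ξ) * testFT φ ξ := by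
  rw [testFT, ← integral_add_right_eq_self _ z, testFT, ← integral_const_mul]
  refine integral_congr_ae (.of_forall fun x => ?_)
  simp only [add_sub_cancel_right, rdot_eq_inner, inner_add_left, ofReal_add, mul_add, exp_add]
  ring

lemma testFT_exp_mul (φ : R2 → ℂ) (η ξ : R2) :
    testFT (fun x => Complex.exp (I * rdot x η) * φ x) ξ = testFT φ (ξ + η) := by
  refine integral_congr_ae (.of_forall fun x => ?_)
  simp only [rdot_eq_inner, inner_add_right, ofReal_add, mul_add, exp_add]
  ring

/-- The pointwise product of two Schwartz functions. -/
def schwartzMul (χ φ : 𝓢(R2, ℂ)) : 𝓢(R2, ℂ) := smulLeftCLM ℂ χ φ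

@[simp]
lemma schwartzMul_apply (χ φ : 𝓢(R2, ℂ)) (x : R2) : schwartzMul χ φ x = χ x * φ x :=
  SchwartzMap.smulLeftCLM_apply_apply χ.hasTemperateGrowth φ x

lemma integral_mulKernel_sub_mul_testFT (χ φ : 𝓢(R2, ℂ)) (η : R2) :
    ∫ ξ, mulKernel χ (ξ - η) * testFT φ ξ = testFT (schwartzMul χ φ) η := by
  rw [← integral_testFT_mul_eq (f := fun ξ => mulKernel χ (ξ - η))
    ((mulKernel χ).integrable.comp_sub_right η) φ.integrable]
  refine integral_congr_ae (.of_forall fun x => ?_)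
  simp only [testFT_comp_sub, testFT_mulKernel, schwartzMul_apply, rdot_eq_inner, real_inner_comm]
  ring

variable {s : ℝ}

lemma integrable_mul_schwartz_sub_mul (f : FourierSobolev s) (k g : 𝓢(R2, ℂ)) :
    Integrable (fun p : R2 × R2 => f p.2 * k (p.1 - p.2) * g p.1) (volume.prod volume) := by
  obtain ⟨C, hC0, hC⟩ := exists_norm_mul_sub_le s k
  obtain ⟨D, hD⟩ := exists_norm_le_rpow g (|s| + 4)
  have hint : Integrable fun ξ : R2 => (1 + ‖ξ‖ ^ 2) ^ (-(4 : ℝ) / 2) :=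
    integrable_rpow_neg_one_add_norm_sq (by simp; norm_num)
  have hf := aestronglyMeasurable_of_sobolevMeasure (Lp.aestronglyMeasurable f)
  refine ((hint.const_mul (C * D)).mul_prod (integrable_norm_mul_rpow f)).mono'
    ((hf.comp_snd.mul (by fun_prop)).mul (by fun_prop)) (.of_forall fun ⟨ξ, η⟩ => ?_)
  calc ‖f η * k (ξ - η) * g ξ‖
      ≤ C * (1 + ‖ξ‖ ^ 2) ^ (|s| + 2) * (‖f η‖ * (1 + ‖η‖ ^ 2) ^ (-(|s| + 2))) *
        (D * (1 + ‖ξ‖ ^ 2) ^ (-(|s| + 4))) := by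
        rw [norm_mul]
        gcongr
        exacts [hC f ξ η, hD ξ]
    _ = C * D * ((1 + ‖ξ‖ ^ 2) ^ (|s| + 2) * (1 + ‖ξ‖ ^ 2) ^ (-(|s| + 4))) *
        (‖f η‖ * (1 + ‖η‖ ^ 2) ^ (-(|s| + 2))) := by ring
    _ = C * D * (1 + ‖ξ‖ ^ 2) ^ (-(4 : ℝ) / 2) *
        (‖f η‖ * (1 + ‖η‖ ^ 2) ^ (-(|s| + 2))) := by
        rw [← Real.rpow_add (by positivity)]
        ring_nf

lemma integral_convolution_mul_testFT (f : FourierSobolev s) (χ φ : 𝓢(R2, ℂ)) :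
    ∫ ξ, (f ⋆[mul ℂ ℂ] mulKernel χ) ξ * testFT φ ξ = ∫ η, f η * testFT (schwartzMul χ φ) η := by
  have hswap := integrable_mul_schwartz_sub_mul f (mulKernel χ) (testFTCLM φ)
  rw [coe_testFTCLM] at hswap
  calc ∫ ξ, (f ⋆[mul ℂ ℂ] mulKernel χ) ξ * testFT φ ξ
      = ∫ ξ, ∫ η, f η * mulKernel χ (ξ - η) * testFT φ ξ := by
        simp only [convolution, ContinuousLinearMap.mul_apply', ← integral_mul_const]
    _ = ∫ η, ∫ ξ, f η * mulKernel χ (ξ - η) * testFT φ ξ := integral_integral_swap hswap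
    _ = ∫ η, f η * testFT (schwartzMul χ φ) η := by
        simp only [mul_assoc, integral_const_mul, integral_mulKernel_sub_mul_testFT]

lemma convolution_mulKernel_zero (f : R2 → ℂ) (φ : 𝓢(R2, ℂ)) :
    (f ⋆[mul ℂ ℂ] mulKernel φ) 0 = ((((2 * π) ^ 2)⁻¹ : ℝ) : ℂ) * ∫ ξ, f ξ * testFT φ ξ := by
  rw [← integral_const_mul]
  refine integral_congr_ae (.of_forall fun η => ?_)
  simp only [ContinuousLinearMap.mul_apply', zero_sub, mulKernel_neg]
  ring

lemma testFTCLM_lineDeriv (φ : 𝓢(R2, ℂ)) (v ξ : R2) :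
    testFTCLM (∂_{v} φ) ξ = -(I * rdot v ξ * testFTCLM φ ξ) := by
  have htg : (inner ℝ · v).HasTemperateGrowth := ((innerSL ℝ).flip v).hasTemperateGrowth
  change 𝓕⁻ (∂_{v} φ) _ = -(I * rdot v ξ * 𝓕⁻ φ _)
  rw [SchwartzMap.fourierInv_lineDerivOp_eq]
  simp only [smul_apply, SchwartzMap.smulLeftCLM_apply_apply htg, angularDilation_apply,
    ContinuousLinearEquiv.coe_coe, real_inner_smul_left, real_inner_comm v ξ, rdot_eq_inner,
    real_smul, smul_eq_mul]
  push_cast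
  field_simp

/-- Multiplication of a Schwartz function by the `l`-th coordinate. -/
def coordMul (l : Fin 2) : 𝓢(R2, ℂ) →L[ℂ] 𝓢(R2, ℂ) := smulLeftCLM ℂ fun y : R2 => (y l : ℂ)

@[simp]
lemma coordMul_apply (l : Fin 2) (φ : 𝓢(R2, ℂ)) (y : R2) : coordMul l φ y = y l * φ y :=
  SchwartzMap.smulLeftCLM_apply_apply
    (ofRealCLM ∘L EuclideanSpace.proj (𝕜 := ℝ) l).hasTemperateGrowth φ y

lemma lineDeriv_testFTCLM (φ : 𝓢(R2, ℂ)) (v : R2) :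
    ∂_{v} (testFTCLM φ) = I • ∑ l, (v l : ℂ) • testFTCLM (coordMul l φ) := by
  have htg : (inner ℝ · ((2 * π)⁻¹ • v)).HasTemperateGrowth :=
    ((innerSL ℝ).flip _).hasTemperateGrowth
  have h : (2 * π * I) • smulLeftCLM ℂ (inner ℝ · ((2 * π)⁻¹ • v)) φ =
      I • ∑ l, (v l : ℂ) • coordMul l φ := by
    ext y
    rw [smul_apply, SchwartzMap.smulLeftCLM_apply_apply htg]
    simp only [smul_apply, inner_smul_right, ← rdot_eq_inner, rdot, Fin.sum_univ_two, add_apply,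
      coordMul_apply, real_smul, smul_eq_mul]
    push_cast
    field_simp
  calc ∂_{v} (testFTCLM φ)
      = compCLMOfContinuousLinearEquiv ℂ angularDilation (∂_{angularDilation v} (𝓕⁻ φ)) :=
        SchwartzMap.lineDerivOp_compCLMOfContinuousLinearEquiv ..
    _ = testFTCLM (I • ∑ l, (v l : ℂ) • coordMul l φ) := by
        rw [SchwartzMap.lineDerivOp_fourierInv_eq, angularDilation_apply, h]
        rfl
    _ = I • ∑ l, (v l : ℂ) • testFTCLM (coordMul l φ) := by simp only [map_smul, map_sum]

lemma ae_eq_zero_of_testFT_eq_zero {g : R2 → ℂ} (hg : Integrable g) (h : testFT g = 0) :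
    g =ᵐ[volume] 0 := by
  refine ae_eq_zero_of_integral_contDiff_smul_eq_zero hg.locallyIntegrable fun φ hφ hφc => ?_
  have hcs : HasCompactSupport fun x => (φ x : ℂ) := hφc.comp_left (g := ofReal) ofReal_zero
  let ψ : 𝓢(R2, ℂ) := hcs.toSchwartzMap (ofRealCLM.contDiff.comp hφ)
  calc ∫ x, φ x • g x = ∫ x, testFT (mulKernel ψ) x * g x := by
        simp only [testFT_mulKernel, real_smul]
        rfl
    _ = ∫ x, mulKernel ψ x * testFT g x := integral_testFT_mul_eq (mulKernel ψ).integrable hg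
    _ = 0 := by simp [h]

lemma exists_testFT_ne_zero (ξ₀ : R2) :
    ∃ φ : 𝓢(R2, ℂ), HasCompactSupport φ ∧ testFT φ ξ₀ ≠ 0 := by
  let b : ContDiffBump (0 : R2) := default
  have hb : HasCompactSupport fun x => (b x : ℂ) :=
    b.hasCompactSupport.comp_left (g := ofReal) ofReal_zero
  have hb' : ContDiff ℝ ∞ fun x => (b x : ℂ) := ofRealCLM.contDiff.comp b.contDiff
  have hexp : ContDiff ℝ ∞ fun x => Complex.exp (I * rdot x (-ξ₀)) := by
    simp only [rdot_eq_inner]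
    exact (contDiff_const.mul (ofRealCLM.contDiff.comp (contDiff_id.inner ℝ contDiff_const))).cexp
  have hc : HasCompactSupport fun x => Complex.exp (I * rdot x (-ξ₀)) * b x := hb.mul_left
  refine ⟨hc.toSchwartzMap (hexp.mul hb'), hc, ?_⟩
  have h : testFT (hc.toSchwartzMap (hexp.mul hb')) ξ₀ = ((∫ x, b x : ℝ) : ℂ) := by
    refine (testFT_exp_mul (fun x => (b x : ℂ)) (-ξ₀) ξ₀).trans ?_
    simp [testFT, rdot, integral_complex_ofReal]
  rw [h]
  exact_mod_cast (b.integral_pos (μ := volume)).ne'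

lemma hasCompactSupport_compSubConstCLM {φ : 𝓢(R2, ℂ)} (hφ : HasCompactSupport φ) (z : R2) :
    HasCompactSupport (φ.compSubConstCLM ℂ z) :=
  hφ.comp_homeomorph (Homeomorph.subRight z)

lemma ae_eq_zero_of_forall_integral_mul_testFT {F : R2 → ℂ}
    (hF : ∀ φ : 𝓢(R2, ℂ), HasCompactSupport φ → Integrable fun ξ => F ξ * testFT φ ξ)
    (h : ∀ φ : 𝓢(R2, ℂ), HasCompactSupport φ → ∫ ξ, F ξ * testFT φ ξ = 0) : F =ᵐ[volume] 0 := by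
  have hprod : ∀ φ : 𝓢(R2, ℂ), HasCompactSupport φ →
      (fun ξ => F ξ * testFT φ ξ) =ᵐ[volume] 0 := fun φ hφ => by
    refine ae_eq_zero_of_testFT_eq_zero (hF φ hφ) (funext fun z => ?_)
    refine Eq.trans ?_ (h _ (hasCompactSupport_compSubConstCLM hφ z))
    refine integral_congr_ae (.of_forall fun ξ => ?_)
    change _ = F ξ * testFT (fun x => φ (x - z)) ξ
    rw [testFT_comp_sub, rdot_comm z]
    ring
  refine measure_null_of_locally_null _ fun ξ₀ _ => ?_
  obtain ⟨φ, hφ, hφ0⟩ := exists_testFT_ne_zero ξ₀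
  have hopen : IsOpen {ξ | testFT φ ξ ≠ 0} := by
    rw [← coe_testFTCLM]
    exact isOpen_ne_fun (testFTCLM φ).continuous continuous_const
  refine ⟨_, inter_mem_nhdsWithin _ (hopen.mem_nhds hφ0), measure_mono_null ?_ (hprod φ hφ)⟩
  rintro ξ ⟨hFξ, hφξ⟩
  exact mul_ne_zero hFξ hφξ

end TestFourier

section Support

open scoped Convolution LineDeriv ZeroAtInfty
open ContinuousLinearMap (mul)

variable {s : ℝ}

lemma integrable_mul_testFT (f : FourierSobolev s) (φ : 𝓢(R2, ℂ)) :
    Integrable fun ξ => f ξ * testFT φ ξ := by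
  rw [← coe_testFTCLM]
  exact integrable_mul_schwartz f (testFTCLM φ)

/-- The pairing `f ↦ ∫ f testFT φ`, that is, `(2π)²` times the action of the distribution with
Fourier transform `f` on the test function `φ`. -/
def pairing (s : ℝ) (φ : 𝓢(R2, ℂ)) : FourierSobolev s →L[ℂ] ℂ :=
  (((2 * π) ^ 2 : ℝ) : ℂ) • convolutionEvalCLM s (mulKernel φ) 0

lemma pairing_apply (φ : 𝓢(R2, ℂ)) (f : FourierSobolev s) :
    pairing s φ f = ∫ ξ, f ξ * testFT φ ξ := by
  rw [pairing, smul_apply, convolutionEvalCLM_apply, convolution_mulKernel_zero, smul_eq_mul,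
    ← mul_assoc, ← ofReal_mul, mul_inv_cancel₀ (by positivity), ofReal_one, one_mul]

lemma pairing_sub (φ ψ : 𝓢(R2, ℂ)) : pairing s (φ - ψ) = pairing s φ - pairing s ψ := by
  ext f
  rw [sub_apply, pairing_apply, pairing_apply, pairing_apply,
    ← integral_sub (integrable_mul_testFT f φ) (integrable_mul_testFT f ψ)]
  simp only [← coe_testFTCLM, map_sub, sub_apply, mul_sub]

lemma pairing_sum {ι : Type*} (t : Finset ι) (φ : ι → 𝓢(R2, ℂ)) :
    pairing s (∑ i ∈ t, φ i) = ∑ i ∈ t, pairing s (φ i) := by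
  ext f
  simp only [sum_apply, pairing_apply]
  rw [← integral_finsetSum _ fun i _ => integrable_mul_testFT f (φ i)]
  simp only [← coe_testFTCLM, map_sum, sum_apply, Finset.mul_sum]

lemma eq_of_forall_pairing_eq {f g : FourierSobolev s}
    (h : ∀ φ : 𝓢(R2, ℂ), HasCompactSupport φ → pairing s φ f = pairing s φ g) : f = g := by
  rw [← sub_eq_zero, Lp.eq_zero_iff_ae_eq_zero]
  refine ae_sobolevMeasure_of_ae <| ae_eq_zero_of_forall_integral_mul_testFT
    (fun φ _ => integrable_mul_testFT (f - g) φ) fun φ hφ => ?_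
  rw [← pairing_apply, map_sub, h φ hφ, sub_self]

lemma pairing_convolutionCLM (χ φ : 𝓢(R2, ℂ)) (f : FourierSobolev s) :
    pairing s φ (convolutionCLM s (mulKernel χ) f) = pairing s (schwartzMul χ φ) f := by
  rw [pairing_apply, pairing_apply, ← integral_convolution_mul_testFT]
  refine integral_congr_ae ?_
  filter_upwards [ae_of_ae_sobolevMeasure (coeFn_convolutionCLM (mulKernel χ) f)] with ξ hξ
  rw [hξ]

/-- The distributions in `H^s(ℝ²)` supported in `K`. -/
def supportedIn (s : ℝ) (K : Set R2) : Submodule ℂ (FourierSobolev s) :=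
  ⨅ (φ : 𝓢(R2, ℂ)) (_ : HasCompactSupport φ) (_ : Disjoint (tsupport φ) K), (pairing s φ).ker

lemma mem_supportedIn {K : Set R2} {f : FourierSobolev s} :
    f ∈ supportedIn s K ↔ ∀ φ : 𝓢(R2, ℂ), HasCompactSupport φ → Disjoint (tsupport φ) K →
      pairing s φ f = 0 := by
  simp only [supportedIn, Submodule.mem_iInf, LinearMap.mem_ker, ContinuousLinearMap.coe_coe]

lemma isClosed_supportedIn (K : Set R2) : IsClosed (supportedIn s K : Set (FourierSobolev s)) := by
  simp only [supportedIn, Submodule.coe_iInf]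
  exact isClosed_iInter fun φ => isClosed_iInter fun _ => isClosed_iInter fun _ =>
    (pairing s φ).isClosed_ker

lemma tsupport_schwartzMul_subset_left (χ φ : 𝓢(R2, ℂ)) :
    tsupport (schwartzMul χ φ) ⊆ tsupport χ :=
  closure_mono fun x hx hχ => hx (by rw [schwartzMul_apply, hχ, zero_mul])

lemma tsupport_schwartzMul_subset_right (χ φ : 𝓢(R2, ℂ)) :
    tsupport (schwartzMul χ φ) ⊆ tsupport φ :=
  closure_mono fun x hx hφ => hx (by rw [schwartzMul_apply, hφ, mul_zero])

lemma hasCompactSupport_schwartzMul (χ : 𝓢(R2, ℂ)) {φ : 𝓢(R2, ℂ)} (hφ : HasCompactSupport φ) :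
    HasCompactSupport (schwartzMul χ φ) :=
  hφ.of_isClosed_subset (isClosed_tsupport _) (tsupport_schwartzMul_subset_right χ φ)

lemma convolutionCLM_mem_supportedIn {K : Set R2} {f : FourierSobolev s}
    (hf : f ∈ supportedIn s K) (χ : 𝓢(R2, ℂ)) :
    convolutionCLM s (mulKernel χ) f ∈ supportedIn s (K ∩ tsupport χ) := by
  refine mem_supportedIn.2 fun φ hφ hdisj => ?_
  rw [pairing_convolutionCLM]
  refine mem_supportedIn.1 hf _ (hasCompactSupport_schwartzMul χ hφ) ?_
  exact Set.disjoint_left.2 fun x hx hxK => Set.disjoint_left.1 hdisj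
    (tsupport_schwartzMul_subset_right χ φ hx) ⟨hxK, tsupport_schwartzMul_subset_left χ φ hx⟩

lemma sum_convolutionCLM_eq_self {ι : Type*} [Fintype ι] {χ : ι → 𝓢(R2, ℂ)} {K : Set R2}
    (hχ : ∀ᶠ x in 𝓝ˢ K, ∑ j, χ j x = 1) {f : FourierSobolev s} (hf : f ∈ supportedIn s K) :
    ∑ j, convolutionCLM s (mulKernel (χ j)) f = f := by
  refine eq_of_forall_pairing_eq fun φ hφ => ?_
  let ψ := ∑ j, schwartzMul (χ j) φ - φ
  have hψ : ∀ x, ψ x = (∑ j, χ j x - 1) * φ x := fun x => by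
    simp only [ψ, sub_apply, sum_apply, schwartzMul_apply, sub_mul, one_mul,
      Finset.sum_mul]
  have hψφ : tsupport ψ ⊆ tsupport φ :=
    closure_mono fun x hx hφx => hx (by rw [hψ, hφx, mul_zero])
  have hdisj : Disjoint (tsupport ψ) K := by
    rw [Set.disjoint_right]
    intro x hx
    rw [notMem_tsupport_iff_eventuallyEq]
    filter_upwards [(eventually_nhdsSet_iff_forall.1 hχ) x hx] with y hy
    rw [hψ, hy, sub_self, zero_mul, Pi.zero_apply]
  have h := mem_supportedIn.1 hf ψ (hφ.of_isClosed_subset (isClosed_tsupport _) hψφ) hdisj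
  rw [pairing_sub, pairing_sum, sub_apply, sub_eq_zero, sum_apply] at h
  simp only [map_sum, pairing_convolutionCLM, h]

lemma memLp_top_zeroAtInfty (m : C₀(R2, ℂ)) (μ : Measure R2) : MemLp m ⊤ μ :=
  memLp_top_of_bound m.continuous.aestronglyMeasurable ‖m.toBCF‖
    (.of_forall m.toBCF.norm_coe_le_norm)

/-- The Fourier multiplier of the averaged translation
`φ ↦ ∫_0^1 ∫ ψ(y) φ(· - ty) dy dt`, which spreads supports along segments. -/
def segmentMultiplier (ψ : 𝓢(R2, ℂ)) : C₀(R2, ℂ) where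
  toFun ξ := ∫ t in (0 : ℝ)..1, testFTCLM ψ (-t • ξ)
  continuous_toFun := intervalIntegral.continuous_parametric_intervalIntegral_of_continuous'
    (by fun_prop) 0 1
  zero_at_infty' := by
    obtain ⟨C, hC⟩ := exists_norm_le_rpow (testFTCLM ψ) 0
    have hbound : ∀ ξ, ‖testFTCLM ψ ξ‖ ≤ C := by simpa using hC
    have hlim : ∀ t ∈ Set.uIoc (0 : ℝ) 1,
        Tendsto (fun ξ : R2 => testFTCLM ψ (-t • ξ)) (cocompact R2) (𝓝 0) := fun t ht => by
      rw [Set.uIoc_of_le zero_le_one] at ht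
      exact (zero_at_infty (testFTCLM ψ)).comp
        (Homeomorph.smulOfNeZero (-t) (neg_ne_zero.2 ht.1.ne')).isClosedEmbedding.tendsto_cocompact
    have : (cocompact R2).IsCountablyGenerated := by
      rw [← Metric.cobounded_eq_cocompact, ← comap_norm_atTop]
      infer_instance
    simpa using intervalIntegral.tendsto_integral_filter_of_dominated_convergence (fun _ => C)
      (.of_forall fun ξ => Continuous.aestronglyMeasurable (by fun_prop))
      (.of_forall fun ξ => .of_forall fun t _ => hbound _) intervalIntegrable_const
      (.of_forall hlim)

lemma segmentMultiplier_apply (ψ : 𝓢(R2, ℂ)) (ξ : R2) :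
    segmentMultiplier ψ ξ = ∫ t in (0 : ℝ)..1, testFTCLM ψ (-t • ξ) := rfl

lemma sum_mul_segmentMultiplier_coordMul (ρ : 𝓢(R2, ℂ)) (ξ : R2) :
    I * ∑ l, (ξ l : ℂ) * segmentMultiplier (coordMul l ρ) ξ = testFT ρ 0 - testFT ρ (-ξ) := by
  have hderiv : ∀ t : ℝ, HasDerivAt (fun t : ℝ => testFTCLM ρ (-t • ξ))
      (-(I * ∑ l, (ξ l : ℂ) * testFTCLM (coordMul l ρ) (-t • ξ))) t := fun t => by
    have hline : HasDerivAt (fun t : ℝ => -t • ξ) (-ξ) t := by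
      simpa using (hasDerivAt_neg t).smul_const ξ
    refine (((testFTCLM ρ).differentiableAt.hasFDerivAt).comp_hasDerivAt t hline).congr_deriv ?_
    rw [map_neg, ← SchwartzMap.lineDerivOp_apply_eq_fderiv, lineDeriv_testFTCLM]
    simp only [smul_apply, sum_apply, smul_eq_mul]
  have hint (l : Fin 2) : IntervalIntegrable
      (fun t : ℝ => (ξ l : ℂ) * testFTCLM (coordMul l ρ) (-t • ξ)) volume 0 1 :=
    Continuous.intervalIntegrable (by fun_prop) 0 1
  have hcont : Continuous fun t : ℝ =>
      -(I * ∑ l, (ξ l : ℂ) * testFTCLM (coordMul l ρ) (-t • ξ)) := by fun_prop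
  have h := intervalIntegral.integral_eq_sub_of_hasDerivAt (fun t _ => hderiv t)
    (hcont.intervalIntegrable 0 1)
  rw [intervalIntegral.integral_neg, intervalIntegral.integral_const_mul,
    intervalIntegral.integral_finsetSum fun l _ => hint l] at h
  simp only [intervalIntegral.integral_const_mul, ← segmentMultiplier_apply] at h
  simp only [neg_zero, zero_smul, neg_smul, one_smul, coe_testFTCLM] at h
  rw [← neg_sub, ← h, neg_neg]

lemma pairing_mulCLM {m : R2 → ℂ} (hm : MemLp m ⊤ (sobolevMeasure s)) (φ : 𝓢(R2, ℂ))
    (f : FourierSobolev s) : pairing s φ (mulCLM hm f) = ∫ ξ, m ξ * (f ξ * testFT φ ξ) := by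
  rw [pairing_apply]
  refine integral_congr_ae ?_
  filter_upwards [ae_of_ae_sobolevMeasure (coeFn_mulCLM hm f)] with ξ hξ
  rw [hξ, mul_assoc]

lemma testFT_mul_testFT (f : FourierSobolev s) (φ : 𝓢(R2, ℂ)) (z : R2) :
    testFT (fun ξ => f ξ * testFT φ ξ) z = pairing s (φ.compSubConstCLM ℂ z) f := by
  rw [pairing_apply]
  refine integral_congr_ae (.of_forall fun ξ => ?_)
  change _ = f ξ * testFT (fun x => φ (x - z)) ξ
  simp only [testFT_comp_sub, rdot_comm z]
  ring

lemma pairing_segmentMultiplier (ψ φ : 𝓢(R2, ℂ)) (f : FourierSobolev s) :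
    pairing s φ (mulCLM (memLp_top_zeroAtInfty (segmentMultiplier ψ) _) f) =
      ∫ t in (0 : ℝ)..1, ∫ y, ψ y * pairing s (φ.compSubConstCLM ℂ (-t • y)) f := by
  obtain ⟨C, hC⟩ := exists_norm_le_rpow (testFTCLM ψ) 0
  have hbound : ∀ ξ, ‖testFTCLM ψ ξ‖ ≤ C := by simpa using hC
  have hh := integrable_mul_testFT f φ
  have : IsFiniteMeasure (volume.restrict (Set.uIoc (0 : ℝ) 1)) := by
    rw [Set.uIoc_of_le zero_le_one]
    infer_instance
  have hint : Integrable (Function.uncurry fun (t : ℝ) (ξ : R2) =>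
      testFTCLM ψ (-t • ξ) * (f ξ * testFT φ ξ))
      ((volume.restrict (Set.uIoc 0 1)).prod volume) := by
    refine (hh.comp_snd _).bdd_mul (c := C) ?_ (.of_forall fun p => hbound _)
    exact Continuous.aestronglyMeasurable (by fun_prop)
  rw [pairing_mulCLM]
  calc ∫ ξ, segmentMultiplier ψ ξ * (f ξ * testFT φ ξ)
      = ∫ ξ, ∫ t in (0 : ℝ)..1, testFTCLM ψ (-t • ξ) * (f ξ * testFT φ ξ) := by
        simp only [segmentMultiplier_apply, intervalIntegral.integral_mul_const]
    _ = ∫ t in (0 : ℝ)..1, ∫ ξ, testFTCLM ψ (-t • ξ) * (f ξ * testFT φ ξ) :=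
        (intervalIntegral_integral_swap hint).symm
    _ = _ := by
        simp only [coe_testFTCLM, integral_testFT_smul_mul_eq _ ψ.integrable hh,
          testFT_mul_testFT]

/-- The segments from points of `K ∩ N` in a direction of `B` stay in `K`. -/
def IsInward (K N B : Set R2) : Prop :=
  ∀ x ∈ K ∩ N, ∀ t ∈ Set.Icc (0 : ℝ) 1, ∀ y ∈ B, x + t • y ∈ K

lemma mulCLM_segmentMultiplier_mem_supportedIn {K N : Set R2} {ψ : 𝓢(R2, ℂ)}
    (hψ : IsInward K N (Function.support ψ)) {f : FourierSobolev s}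
    (hf : f ∈ supportedIn s (K ∩ N)) :
    mulCLM (memLp_top_zeroAtInfty (segmentMultiplier ψ) _) f ∈ supportedIn s K := by
  refine mem_supportedIn.2 fun φ hφ hdisj => ?_
  rw [pairing_segmentMultiplier]
  refine intervalIntegral.integral_zero_ae (.of_forall fun t ht => ?_)
  rw [Set.uIoc_of_le zero_le_one] at ht
  refine integral_eq_zero_of_ae (.of_forall fun y => ?_)
  rcases eq_or_ne (ψ y) 0 with hy | hy
  · simp [hy]
  suffices pairing s (φ.compSubConstCLM ℂ (-t • y)) f = 0 by
    simp only [this, mul_zero, Pi.zero_apply]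
  refine mem_supportedIn.1 hf _ (hasCompactSupport_compSubConstCLM hφ _) ?_
  refine Set.disjoint_left.2 fun x hx hxK => ?_
  refine Set.disjoint_left.1 hdisj (?_ : x + t • y ∈ _) (hψ x hxK t ⟨ht.1.le, ht.2⟩ y hy)
  have h := tsupport_comp_subset_preimage φ (f := fun x => x - -t • y) (by fun_prop) hx
  simpa [neg_smul, sub_neg_eq_add] using h

end Support

section Geometry

open scoped Manifold

lemma IsInward.mono {K N N' B B' : Set R2} (h : IsInward K N B) (hN : N' ⊆ N) (hB : B' ⊆ B) :
    IsInward K N' B' :=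
  fun x hx t ht y hy => h x ⟨hx.1, hN hx.2⟩ t ht y (hB hy)

lemma IsInward.closure {K N B : Set R2} (h : IsInward K N B) (hN : IsOpen N) :
    IsInward (closure K) N B := fun x hx t ht y hy =>
  map_mem_closure (f := fun x => x + t • y) (by fun_prop) (hN.closure_inter hx)
    fun z hz => h z hz t ht y hy

lemma add_smul_mem_ball {x z y : R2} {δ t : ℝ} (hz : z ∈ Metric.ball x δ) (ht : t ∈ Set.Icc 0 1)
    (hy : y ∈ Metric.ball 0 δ) : z + t • y ∈ Metric.ball x (2 * δ) := by
  rw [mem_ball_iff_norm] at hz ⊢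
  rw [mem_ball_zero_iff] at hy
  calc ‖z + t • y - x‖ = ‖z - x + t • y‖ := by rw [add_sub_right_comm]
    _ ≤ ‖z - x‖ + t * ‖y‖ := by
        grw [norm_add_le, norm_smul, Real.norm_of_nonneg ht.1]
    _ < 2 * δ := by nlinarith [mul_le_of_le_one_left (norm_nonneg y) ht.2]

lemma isInward_of_epigraph {Γ : Set R2} {x : R2} {δ : ℝ} {e : R2 ≃ₗᵢ[ℝ] R2} {L : ℝ≥0} {f : ℝ → ℝ}
    (hf : LipschitzWith L f) (hΓ : ∀ y ∈ Metric.ball x (2 * δ), y ∈ Γ ↔ f (e y 0) < e y 1) :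
    IsInward Γ (Metric.ball x δ) ({y | L * |e y 0| < e y 1} ∩ Metric.ball 0 δ) := by
  rintro z ⟨hzΓ, hzδ⟩ t ht y ⟨hycone, hyδ⟩
  have hδ : δ ≤ 2 * δ := by linarith [Metric.pos_of_mem_ball hzδ]
  have hz := (hΓ z (Metric.ball_subset_ball hδ hzδ)).1 hzΓ
  rw [hΓ _ (add_smul_mem_ball hzδ ht hyδ)]
  have hlip : f (e z 0 + t * e y 0) - f (e z 0) ≤ t * (L * |e y 0|) := by
    have h := hf.dist_le_mul (e z 0 + t * e y 0) (e z 0)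
    rw [Real.dist_eq, Real.dist_eq, add_sub_cancel_left, abs_mul, abs_of_nonneg ht.1] at h
    linarith [le_abs_self (f (e z 0 + t * e y 0) - f (e z 0))]
  have hcone : t * (L * |e y 0|) ≤ t * e y 1 := by
    gcongr
    exacts [ht.1, hycone.le]
  simp only [map_add, map_smul, PiLp.add_apply, PiLp.smul_apply, smul_eq_mul]
  linarith

lemma nonempty_cone_inter_ball (e : R2 ≃ₗᵢ[ℝ] R2) (L : ℝ) {δ : ℝ} (hδ : 0 < δ) :
    ({y | L * |e y 0| < e y 1} ∩ Metric.ball 0 δ).Nonempty := by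
  refine ⟨e.symm (EuclideanSpace.single 1 (δ / 2)), ?_, ?_⟩
  · simpa using hδ
  · simpa [abs_of_pos hδ] using hδ

lemma IsLipschitzDomain.exists_isInward {Γ : Set R2} (hΓ : IsLipschitzDomain Γ) {x : R2}
    (hx : x ∈ closure Γ) : ∃ δ > 0, ∃ B : Set R2, IsOpen B ∧ B.Nonempty ∧
      IsInward (closure Γ) (Metric.ball x δ) B := by
  obtain ⟨hopen, -, -, hfrontier⟩ := hΓ
  by_cases hxΓ : x ∈ Γ
  · obtain ⟨ε, hε, hεΓ⟩ := Metric.isOpen_iff.1 hopen x hxΓ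
    refine ⟨ε / 2, by positivity, Metric.ball 0 (ε / 2), Metric.isOpen_ball,
      ⟨0, Metric.mem_ball_self (by positivity)⟩, ?_⟩
    refine IsInward.closure (fun z hz t ht y hy => hεΓ ?_) Metric.isOpen_ball
    simpa [mul_div_cancel₀] using add_smul_mem_ball hz.2 ht hy
  · obtain ⟨e, L, f, U, hf, hU, hxU, hΓU⟩ := hfrontier x ⟨hx, by rwa [hopen.interior_eq]⟩
    obtain ⟨ε, hε, hεU⟩ := Metric.isOpen_iff.1 hU x hxU
    refine ⟨ε / 2, by positivity, _, ?_, nonempty_cone_inter_ball e L (half_pos hε),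
      (isInward_of_epigraph hf fun y hy => hΓU y (hεU ?_)).closure Metric.isOpen_ball⟩
    · exact (isOpen_lt (by fun_prop) (by fun_prop)).inter Metric.isOpen_ball
    · rwa [mul_div_cancel₀ ε two_ne_zero] at hy

lemma exists_testFT_zero_eq_one {B : Set R2} (hB : IsOpen B) (hne : B.Nonempty) :
    ∃ ρ : 𝓢(R2, ℂ), testFT ρ 0 = 1 ∧ Function.support ρ ⊆ B := by
  obtain ⟨y₀, hy₀⟩ := hne
  obtain ⟨r, hr, hrB⟩ := Metric.isOpen_iff.1 hB y₀ hy₀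
  let b : ContDiffBump y₀ := ⟨r / 2, r, half_pos hr, half_lt_self hr⟩
  have hc : HasCompactSupport fun y => (b.normed volume y : ℂ) :=
    b.hasCompactSupport_normed.comp_left (g := ofReal) ofReal_zero
  refine ⟨hc.toSchwartzMap (ofRealCLM.contDiff.comp b.contDiff_normed), ?_, fun y hy => hrB ?_⟩
  · calc ∫ y, exp (I * (rdot y 0 : ℂ)) * (b.normed volume y : ℂ)
        = ∫ y, (b.normed volume y : ℂ) := by simp [rdot]
      _ = 1 := by rw [integral_complex_ofReal, b.integral_normed, ofReal_one]
  · have h : y ∈ Function.support (b.normed volume) := fun h => hy (ofReal_eq_zero.2 h)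
    rwa [b.support_normed_eq] at h

/-- A finite smooth partition of unity `χ` near `K`, with mollifiers `ρ j` of integral one whose
support consists of directions along which `K ∩ tsupport (χ j)` is pushed into `K`. -/
structure InwardPartition (K : Set R2) where
  ι : Type
  fintype : Fintype ι
  χ : ι → 𝓢(R2, ℂ)
  ρ : ι → 𝓢(R2, ℂ)
  sum_χ : ∀ᶠ x in 𝓝ˢ K, ∑ j, χ j x = 1
  testFT_ρ_zero : ∀ j, testFT (ρ j) 0 = 1
  isInward : ∀ j, IsInward K (tsupport (χ j)) (Function.support (ρ j))

attribute [instance] InwardPartition.fintype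

lemma exists_partition_of_isCompact {K : Set R2} (hK : IsCompact K) {δ : R2 → ℝ}
    (hδ : ∀ x ∈ K, 0 < δ x) : ∃ (t : Finset R2) (χ : t → 𝓢(R2, ℂ)), (∀ x ∈ t, x ∈ K) ∧
      (∀ᶠ x in 𝓝ˢ K, ∑ j, χ j x = 1) ∧ ∀ j, tsupport (χ j) ⊆ Metric.ball (j : R2) (δ j) := by
  obtain ⟨t, htK, hcov⟩ := hK.elim_nhds_subcover (fun x => Metric.ball x (δ x))
    fun x hx => Metric.ball_mem_nhds x (hδ x hx)
  obtain ⟨ε, hε, hεt⟩ := hK.exists_cthickening_subset_open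
    (isOpen_biUnion fun _ _ => Metric.isOpen_ball) hcov
  obtain ⟨f, hf⟩ := SmoothPartitionOfUnity.exists_isSubordinate (ι := t) 𝓘(ℝ, R2)
    Metric.isClosed_cthickening (fun x => Metric.ball (x : R2) (δ x))
    (fun _ => Metric.isOpen_ball) (hεt.trans_eq (Set.biUnion_eq_iUnion _ _))
  have hsupp : ∀ j, HasCompactSupport (f j) := fun j =>
    (isCompact_closedBall (j : R2) (δ j)).of_isClosed_subset isClosed_closure
      ((hf j).trans Metric.ball_subset_closedBall)
  have hc : ∀ j, HasCompactSupport fun x => (f j x : ℂ) := fun j =>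
    (hsupp j).comp_left (g := ofReal) ofReal_zero
  refine ⟨t, fun j => (hc j).toSchwartzMap (ofRealCLM.contDiff.comp (f j).contMDiff.contDiff),
    htK, ?_, fun j => (tsupport_comp_subset ofReal_zero _).trans (hf j)⟩
  filter_upwards [mem_nhdsSet_iff_exists.2 ⟨_, Metric.isOpen_thickening,
    Metric.self_subset_thickening hε K, Metric.thickening_subset_cthickening ε K⟩] with x hx
  have h := f.sum_eq_one hx
  rw [finsum_eq_sum_of_fintype] at h
  calc ∑ j, (f j x : ℂ) = (∑ j, f j x : ℝ) := (ofReal_sum _ _).symm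
    _ = 1 := by rw [h, ofReal_one]

lemma nonempty_inwardPartition_of_isCompact {K : Set R2} (hK : IsCompact K)
    (h : ∀ x ∈ K, ∃ δ > 0, ∃ B : Set R2, IsOpen B ∧ B.Nonempty ∧
      IsInward K (Metric.ball x δ) B) : Nonempty (InwardPartition K) := by
  choose! δ hδ B hB hne hin using h
  obtain ⟨t, χ, htK, hsum, hχ⟩ := exists_partition_of_isCompact hK hδ
  choose ρ hρ hρB using fun j : t =>
    exists_testFT_zero_eq_one (hB j (htK j j.2)) (hne j (htK j j.2))
  exact ⟨⟨t, inferInstance, χ, ρ, hsum, hρ, fun j => (hin j (htK j j.2)).mono (hχ j) (hρB j)⟩⟩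

lemma IsLipschitzDomain.nonempty_inwardPartition {Γ : Set R2} (hΓ : IsLipschitzDomain Γ) :
    Nonempty (InwardPartition (closure Γ)) :=
  nonempty_inwardPartition_of_isCompact hΓ.2.1.isCompact_closure fun _ hx => hΓ.exists_isInward hx

end Geometry

section DivSpace

open scoped LineDeriv ZeroAtInfty

variable {s : ℝ} {K : Set R2}

/-- The partial derivative of a Schwartz function in the `l`-th coordinate direction. -/
def coordDeriv (l : Fin 2) (φ : 𝓢(R2, ℂ)) : 𝓢(R2, ℂ) := ∂_{EuclideanSpace.single l (1 : ℝ)} φ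

lemma mul_testFT_coordDeriv (f : FourierSobolev s) (φ : 𝓢(R2, ℂ)) (l : Fin 2) (ξ : R2) :
    f ξ * testFT (coordDeriv l φ) ξ = -(I * (ξ l * f ξ) * testFT φ ξ) := by
  have hl : rdot (EuclideanSpace.single l 1) ξ = ξ l := by
    simp [rdot_eq_inner, EuclideanSpace.inner_single_left]
  rw [← coe_testFTCLM, coordDeriv, testFTCLM_lineDeriv, coe_testFTCLM, hl]
  ring

/-- `g` is the distributional divergence of the vector field with components `f`: the pairing of
`g` with a test function `φ` is minus the pairing of `f` with the gradient of `φ`. -/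
def IsDivergence (f : Fin 2 → FourierSobolev s) (g : FourierSobolev s) : Prop :=
  ∀ φ : 𝓢(R2, ℂ), HasCompactSupport φ →
    pairing s φ g = -∑ l, pairing s (coordDeriv l φ) (f l)

lemma integrable_divergence_mul_testFT (f : Fin 2 → FourierSobolev s) (φ : 𝓢(R2, ℂ)) :
    Integrable fun ξ => (I * ∑ l, (ξ l : ℂ) * f l ξ) * testFT φ ξ := by
  refine (integrable_finsetSum Finset.univ fun l _ =>
    (integrable_mul_testFT (f l) (coordDeriv l φ)).neg).congr ?_
  refine .of_forall fun ξ => ?_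
  simp only [Pi.neg_apply, mul_testFT_coordDeriv, neg_neg, Finset.mul_sum, Finset.sum_mul]

lemma neg_sum_pairing_coordDeriv (f : Fin 2 → FourierSobolev s) (φ : 𝓢(R2, ℂ)) :
    -∑ l, pairing s (coordDeriv l φ) (f l) =
      ∫ ξ, (I * ∑ l, (ξ l : ℂ) * f l ξ) * testFT φ ξ := by
  simp only [pairing_apply]
  rw [← integral_finsetSum _ fun l _ => integrable_mul_testFT (f l) _, ← integral_neg]
  refine integral_congr_ae (.of_forall fun ξ => ?_)
  simp only [mul_testFT_coordDeriv, Finset.sum_neg_distrib, neg_neg, Finset.mul_sum,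
    Finset.sum_mul]

lemma isDivergence_iff {f : Fin 2 → FourierSobolev s} {g : FourierSobolev s} :
    IsDivergence f g ↔ ∀ᵐ ξ, g ξ = I * ∑ l, (ξ l : ℂ) * f l ξ := by
  simp only [IsDivergence, neg_sum_pairing_coordDeriv]
  simp only [pairing_apply]
  refine ⟨fun h => ?_, fun h φ _ => integral_congr_ae ?_⟩
  · have hint (φ : 𝓢(R2, ℂ)) := (integrable_mul_testFT g φ).sub
      (integrable_divergence_mul_testFT f φ)
    have h0 := ae_eq_zero_of_forall_integral_mul_testFT
      (F := fun ξ => g ξ - I * ∑ l, (ξ l : ℂ) * f l ξ)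
      (fun φ _ => (hint φ).congr (.of_forall fun ξ => (sub_mul _ _ _).symm)) fun φ hφ => by
        simp only [sub_mul]
        rw [integral_sub (integrable_mul_testFT g φ) (integrable_divergence_mul_testFT f φ),
          h φ hφ, sub_self]
    filter_upwards [h0] with ξ hξ using sub_eq_zero.1 hξ
  · filter_upwards [h] with ξ hξ
    rw [hξ]

lemma IsDivergence.mem_supportedIn {f : Fin 2 → FourierSobolev s} {g : FourierSobolev s}
    (h : IsDivergence f g) (hf : ∀ l, f l ∈ supportedIn s K) : g ∈ supportedIn s K := by
  refine _root_.mem_supportedIn.2 fun φ hφ hdisj => ?_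
  rw [h φ hφ, Finset.sum_eq_zero fun l _ => ?_, neg_zero]
  have hsupp := SchwartzMap.tsupport_lineDerivOp_subset (EuclideanSpace.single l (1 : ℝ)) φ
  exact _root_.mem_supportedIn.1 (hf l) _ (hφ.of_isClosed_subset (isClosed_tsupport _) hsupp)
    (hdisj.mono_left hsupp)

/-- The triples `(V₀, V₁, div V)` with `V` a vector field of regularity `s` supported in `K` whose
divergence has regularity `s`, as a subspace of the Hilbert space of all triples. -/
def divSubmodule (s : ℝ) (K : Set R2) :
    Submodule ℂ (PiLp 2 fun _ : Fin 3 => FourierSobolev s) where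
  carrier := {F | (∀ l : Fin 2, F l.castSucc ∈ supportedIn s K) ∧
    IsDivergence (fun l => F l.castSucc) (F (Fin.last 2))}
  zero_mem' := ⟨fun _ => zero_mem _, fun φ _ => by simp⟩
  add_mem' hF hG := ⟨fun l => add_mem (hF.1 l) (hG.1 l), fun φ hφ => by
    simp only [PiLp.add_apply, map_add, hF.2 φ hφ, hG.2 φ hφ, Finset.sum_add_distrib, neg_add]⟩
  smul_mem' c F hF := ⟨fun l => Submodule.smul_mem _ c (hF.1 l), fun φ hφ => by
    simp only [PiLp.smul_apply, map_smul, hF.2 φ hφ, smul_neg, Finset.smul_sum]⟩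

lemma isClosed_divSubmodule :
    IsClosed (divSubmodule s K : Set (PiLp 2 fun _ : Fin 3 => FourierSobolev s)) := by
  change IsClosed {F : PiLp 2 fun _ : Fin 3 => FourierSobolev s | _ ∧ _}
  simp only [IsDivergence, Set.ofPred_and, Set.ofPred_forall]
  refine (isClosed_iInter fun l => (isClosed_supportedIn K).preimage (by fun_prop)).inter
    (isClosed_iInter fun φ => isClosed_iInter fun _ => isClosed_eq (by fun_prop) (by fun_prop))

/-- The Hilbert space of vector fields of regularity `s` supported in `K` whose divergence has
regularity `s`, with the graph norm of the divergence. -/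
abbrev DivSpace (s : ℝ) (K : Set R2) : Type := divSubmodule s K

instance : CompleteSpace (DivSpace s K) := isClosed_divSubmodule.completeSpace_coe

instance : SecondCountableTopology (FourierSobolev s) :=
  have : Fact ((2 : ENNReal) ≠ ⊤) := ⟨ENNReal.ofNat_ne_top⟩
  inferInstance

instance : TopologicalSpace.SeparableSpace (DivSpace s K) :=
  have := TopologicalSpace.Subtype.secondCountableTopology
    (divSubmodule s K : Set (PiLp 2 fun _ : Fin 3 => FourierSobolev s))
  inferInstance

namespace DivSpace

/-- The `l`-th component of a vector field. -/
def component (l : Fin 2) : DivSpace s K →L[ℂ] FourierSobolev s :=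
  PiLp.proj 2 (fun _ : Fin 3 => FourierSobolev s) l.castSucc ∘L (divSubmodule s K).subtypeL

/-- The divergence of a vector field. -/
def div : DivSpace s K →L[ℂ] FourierSobolev s :=
  PiLp.proj 2 (fun _ : Fin 3 => FourierSobolev s) (Fin.last 2) ∘L (divSubmodule s K).subtypeL

lemma component_mem_supportedIn (F : DivSpace s K) (l : Fin 2) :
    component l F ∈ supportedIn s K := F.2.1 l

lemma isDivergence (F : DivSpace s K) : IsDivergence (fun l => component l F) (div F) := F.2.2

lemma ext {F G : DivSpace s K} (h : ∀ l, component l F = component l G) : F = G := by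
  have hdiv : div F = div G := eq_of_forall_pairing_eq fun φ hφ => by
    simp only [F.isDivergence φ hφ, G.isDivergence φ hφ, h]
  exact Subtype.ext (PiLp.ext (Fin.lastCases hdiv h))

lemma inner_eq (F G : DivSpace s K) :
    inner ℂ F G = ∑ l, inner ℂ (component l F) (component l G) + inner ℂ (div F) (div G) := by
  rw [Submodule.coe_inner, PiLp.inner_apply, Fin.sum_univ_castSucc]
  rfl

lemma norm_sq_eq (F : DivSpace s K) : ‖F‖ ^ 2 = ∑ l, ‖component l F‖ ^ 2 + ‖div F‖ ^ 2 := by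
  rw [Submodule.coe_norm, PiLp.norm_sq_eq_of_L2, Fin.sum_univ_castSucc]
  rfl

variable {E : Type*} [NormedAddCommGroup E] [NormedSpace ℂ E]

/-- The operator into `DivSpace s K` with prescribed components and divergence. -/
def lift (f : Fin 2 → E →L[ℂ] FourierSobolev s) (g : E →L[ℂ] FourierSobolev s)
    (hf : ∀ l x, f l x ∈ supportedIn s K) (hg : ∀ x, IsDivergence (fun l => f l x) (g x)) :
    E →L[ℂ] DivSpace s K :=
  ((PiLp.continuousLinearEquiv 2 ℂ fun _ : Fin 3 => FourierSobolev s).symm.toContinuousLinearMap ∘L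
    ContinuousLinearMap.pi ![f 0, f 1, g]).codRestrict (divSubmodule s K) fun x =>
      ⟨Fin.forall_fin_two.2 ⟨hf 0 x, hf 1 x⟩, by
        refine (congrArg (IsDivergence · (g x)) (funext fun l => ?_)).mp (hg x)
        fin_cases l <;> rfl⟩

variable {f : Fin 2 → E →L[ℂ] FourierSobolev s} {g : E →L[ℂ] FourierSobolev s}
  {hf : ∀ l x, f l x ∈ supportedIn s K} {hg : ∀ x, IsDivergence (fun l => f l x) (g x)}

@[simp]
lemma component_lift (l : Fin 2) (x : E) : component l (lift f g hf hg x) = f l x := by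
  fin_cases l <;> rfl

end DivSpace

/-- The function `ξ ↦ testFT ρ (-ξ)`, as a multiplier vanishing at infinity. -/
def testFTReflection (ρ : 𝓢(R2, ℂ)) : C₀(R2, ℂ) :=
  (((2 * π) ^ 2 : ℝ) : ℂ) • (mulKernel ρ).toZeroAtInfty

lemma testFTReflection_apply (ρ : 𝓢(R2, ℂ)) (ξ : R2) :
    testFTReflection ρ ξ = testFT ρ (-ξ) := by
  have h : (((2 * π) ^ 2 : ℝ) : ℂ) ≠ 0 := by
    exact_mod_cast (by positivity : (0 : ℝ) < (2 * π) ^ 2).ne'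
  rw [testFTReflection, ZeroAtInftyContinuousMap.smul_apply, SchwartzMap.toZeroAtInfty_apply,
    ← neg_neg ξ, mulKernel_neg, neg_neg, smul_eq_mul, ofReal_inv, mul_inv_cancel_left₀ h]

namespace InwardPartition

open DivSpace (component div lift)

variable (P : InwardPartition K)

/-- The part of the divergence of a vector field localized by the `j`-th cutoff. -/
def localDiv (s : ℝ) (j : P.ι) : DivSpace s K →L[ℂ] FourierSobolev s :=
  convolutionCLM s (mulKernel (P.χ j)) ∘L div

lemma sum_localDiv (F : DivSpace s K) : ∑ j, P.localDiv s j F = div F :=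
  sum_convolutionCLM_eq_self P.sum_χ
    (F.isDivergence.mem_supportedIn F.component_mem_supportedIn)

/-- The sum of the localized divergences, each multiplied by its own Fourier multiplier. -/
def localMul (s : ℝ) (m : P.ι → C₀(R2, ℂ)) : DivSpace s K →L[ℂ] FourierSobolev s :=
  ∑ j, mulCLM (memLp_top_zeroAtInfty (m j) _) ∘L P.localDiv s j

lemma isCompletelyContinuous_localMul (m : P.ι → C₀(R2, ℂ)) :
    IsCompletelyContinuous (P.localMul s m) :=
  .sum fun j _ => (isCompletelyContinuous_mulCLM_comp_convolutionCLM _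
    (m j).zero_at_infty' _).comp_clm div

lemma coeFn_localMul (m : P.ι → C₀(R2, ℂ)) (F : DivSpace s K) :
    ∀ᵐ ξ, P.localMul s m F ξ = ∑ j, m j ξ * P.localDiv s j F ξ := by
  rw [localMul, sum_apply]
  filter_upwards [ae_of_ae_sobolevMeasure (Lp.coeFn_finsetSum Finset.univ fun j =>
      (mulCLM (memLp_top_zeroAtInfty (m j) _) ∘L P.localDiv s j) F),
    eventually_countable_forall.2 fun j => ae_of_ae_sobolevMeasure
      (coeFn_mulCLM (memLp_top_zeroAtInfty (m j) _) (P.localDiv s j F))] with ξ hsum hmul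
  rw [hsum, Finset.sum_apply]
  exact Finset.sum_congr rfl fun j _ => hmul j

/-- The `l`-th component of a vector field supported in `K` whose divergence is the divergence of
the given field up to `remainder`. It averages the translates of `localDiv j` along the segments
from `0` to points `y`, with the vectorial weight `ρ j y • y`. -/
def potential (s : ℝ) (l : Fin 2) : DivSpace s K →L[ℂ] FourierSobolev s :=
  P.localMul s fun j => segmentMultiplier (coordMul l (P.ρ j))

/-- The sum of the localized divergences, the `j`-th one mollified by `ρ j`. -/
def remainder (s : ℝ) : DivSpace s K →L[ℂ] FourierSobolev s :=
  P.localMul s fun j => testFTReflection (P.ρ j)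

lemma potential_mem_supportedIn (l : Fin 2) (F : DivSpace s K) :
    P.potential s l F ∈ supportedIn s K := by
  rw [potential, localMul, sum_apply]
  refine sum_mem fun j _ => mulCLM_segmentMultiplier_mem_supportedIn
    ((P.isInward j).mono subset_rfl fun y hy hρ => hy ?_)
    (convolutionCLM_mem_supportedIn (F.isDivergence.mem_supportedIn F.component_mem_supportedIn) _)
  rw [coordMul_apply, hρ, mul_zero]

lemma isDivergence_potential (F : DivSpace s K) :
    IsDivergence (fun l => P.potential s l F) (div F - P.remainder s F) := by
  rw [isDivergence_iff, ← P.sum_localDiv F]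
  filter_upwards [ae_of_ae_sobolevMeasure (Lp.coeFn_sub (∑ j, P.localDiv s j F) _),
    ae_of_ae_sobolevMeasure (Lp.coeFn_finsetSum Finset.univ fun j => P.localDiv s j F),
    P.coeFn_localMul (fun j => testFTReflection (P.ρ j)) F,
    eventually_countable_forall.2 fun l =>
      P.coeFn_localMul (fun j => segmentMultiplier (coordMul l (P.ρ j))) F] with ξ h1 h2 h3 h4
  have hj (j : P.ι) : P.localDiv s j F ξ - testFTReflection (P.ρ j) ξ * P.localDiv s j F ξ =
      I * (∑ l, (ξ l : ℂ) * segmentMultiplier (coordMul l (P.ρ j)) ξ) * P.localDiv s j F ξ := by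
    rw [sum_mul_segmentMultiplier_coordMul, P.testFT_ρ_zero, testFTReflection_apply, sub_mul,
      one_mul]
  rw [h1, Pi.sub_apply, h2, remainder, h3, Finset.sum_apply, ← Finset.sum_sub_distrib]
  simp only [hj, potential, h4, Finset.mul_sum, Finset.sum_mul]
  rw [Finset.sum_comm]
  simp only [mul_assoc]

/-- The operator `2 * potential - 1` on vector fields: up to completely continuous operators it
preserves the divergence and reverses the components. -/
def reflection (s : ℝ) : DivSpace s K →L[ℂ] DivSpace s K :=
  lift (fun l => (2 : ℂ) • P.potential s l - component l) (div - (2 : ℂ) • P.remainder s)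
    (fun l F => sub_mem (Submodule.smul_mem _ _ (P.potential_mem_supportedIn l F))
      (F.component_mem_supportedIn l))
    fun F φ hφ => by
      have hP := P.isDivergence_potential F φ hφ
      have hF := F.isDivergence φ hφ
      simp only [map_sub, map_smul, sub_apply, smul_apply, Finset.sum_sub_distrib, smul_eq_mul,
        ← Finset.mul_sum] at hP hF ⊢
      linear_combination 2 * hP - hF

lemma div_reflection (F : DivSpace s K) :
    div (P.reflection s F) = div F - (2 : ℂ) • P.remainder s F := rfl

lemma component_reflection (l : Fin 2) (F : DivSpace s K) :
    component l (P.reflection s F) = (2 : ℂ) • P.potential s l F - component l F :=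
  DivSpace.component_lift l F

lemma isCompletelyContinuous_div_reflection_sub :
    IsCompletelyContinuous (div ∘L P.reflection s - div) := by
  have h : div ∘L P.reflection s - div = (-2 : ℂ) • P.remainder s := by
    ext1 F
    simp only [sub_apply, ContinuousLinearMap.coe_comp, Function.comp_apply, div_reflection,
      smul_apply]
    module
  rw [h]
  exact IsCompletelyContinuous.const_smul (P.isCompletelyContinuous_localMul _) _

lemma isCompletelyContinuous_component_reflection_add (l : Fin 2) :
    IsCompletelyContinuous (component l ∘L P.reflection s + component l) := by
  have h : component l ∘L P.reflection s + component l = (2 : ℂ) • P.potential s l := by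
    ext1 F
    simp only [add_apply, ContinuousLinearMap.coe_comp, Function.comp_apply,
      component_reflection, smul_apply, sub_add_cancel]
  rw [h]
  exact IsCompletelyContinuous.const_smul (P.isCompletelyContinuous_localMul _) _

end InwardPartition

end DivSpace

section SymbolForm

open ContinuousLinearMap (adjoint coe_comp)
open scoped InnerProduct InnerProductSpace ComplexConjugate

variable {α E : Type*} [MeasurableSpace α] {μ : Measure α} {m n : α → ℂ}
  [NormedAddCommGroup E] [InnerProductSpace ℂ E]

lemma integrable_mul_mul_conj (hm : MemLp m ⊤ μ) (f g : Lp ℂ 2 μ) :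
    Integrable (fun x => m x * (g x * conj (f x))) μ := by
  refine (L2.integrable_inner f (mulCLM hm g)).congr ?_
  filter_upwards [coeFn_mulCLM hm g] with x hx
  rw [hx, RCLike.inner_apply, mul_assoc]

lemma inner_mulCLM (hm : MemLp m ⊤ μ) (f g : Lp ℂ 2 μ) :
    ⟪f, mulCLM hm g⟫_ℂ = ∫ x, m x * (g x * conj (f x)) ∂μ := by
  rw [L2.inner_def]
  refine integral_congr_ae ?_
  filter_upwards [coeFn_mulCLM hm g] with x hx
  rw [hx, RCLike.inner_apply, mul_assoc]

lemma integrable_mul_conj_sub (hm : MemLp m ⊤ μ) (hn : MemLp n ⊤ μ) (f g f' g' : Lp ℂ 2 μ) :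
    Integrable (fun x => m x * (g x * conj (f x)) - n x * (g' x * conj (f' x))) μ :=
  (integrable_mul_mul_conj hm f g).sub (integrable_mul_mul_conj hn f' g')

lemma re_inner_mulCLM_self {a : α → ℝ} (ha : MemLp (fun x => (a x : ℂ)) ⊤ μ) (f : Lp ℂ 2 μ) :
    RCLike.re ⟪f, mulCLM ha f⟫_ℂ = ∫ x, a x * ‖f x‖ ^ 2 ∂μ := by
  have h (x : α) : (a x : ℂ) * (f x * conj (f x)) = ((a x * ‖f x‖ ^ 2 : ℝ) : ℂ) := by
    rw [mul_conj, normSq_eq_norm_sq]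
    push_cast
    rfl
  rw [inner_mulCLM, integral_congr_ae (.of_forall h), integral_complex_ofReal,
    RCLike.re_to_complex, ofReal_re]

lemma integrable_mul_norm_sq {a : α → ℝ} (ha : MemLp (fun x => (a x : ℂ)) ⊤ μ) (f : Lp ℂ 2 μ) :
    Integrable (fun x => a x * ‖f x‖ ^ 2) μ := by
  refine (integrable_mul_mul_conj ha f f).re.congr (.of_forall fun x => ?_)
  simp only [mul_conj, normSq_eq_norm_sq, RCLike.re_to_complex, ← ofReal_mul, ofReal_re]

variable [CompleteSpace E]

/-- The operator of the sesquilinear form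
`(f, g) ↦ ∫ m * (D g) * conj (D f) - ∫ n * (R g) * conj (R f)`. -/
def symbolForm (D R : E →L[ℂ] Lp ℂ 2 μ) (hm : MemLp m ⊤ μ) (hn : MemLp n ⊤ μ) : E →L[ℂ] E :=
  D† ∘L mulCLM hm ∘L D - R† ∘L mulCLM hn ∘L R

variable {D R : E →L[ℂ] Lp ℂ 2 μ}

lemma inner_symbolForm (hm : MemLp m ⊤ μ) (hn : MemLp n ⊤ μ) (f g : E) :
    ⟪f, symbolForm D R hm hn g⟫_ℂ =
      ∫ x, (m x * (D g x * conj (D f x)) - n x * (R g x * conj (R f x))) ∂μ := by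
  rw [integral_sub (integrable_mul_mul_conj hm _ _) (integrable_mul_mul_conj hn _ _),
    ← inner_mulCLM hm, ← inner_mulCLM hn, symbolForm, sub_apply, inner_sub_right]
  simp only [coe_comp, Function.comp_apply, ContinuousLinearMap.adjoint_inner_right]

lemma isSelfAdjoint_symbolForm {a b : α → ℝ} (ha : MemLp (fun x => (a x : ℂ)) ⊤ μ)
    (hb : MemLp (fun x => (b x : ℂ)) ⊤ μ) : IsSelfAdjoint (symbolForm D R ha hb) := by
  rw [ContinuousLinearMap.isSelfAdjoint_iff', symbolForm, map_sub]
  simp only [ContinuousLinearMap.adjoint_comp, ContinuousLinearMap.adjoint_adjoint, adjoint_mulCLM,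
    ContinuousLinearMap.comp_assoc]

lemma isCompletelyContinuous_symbolForm (hD : IsCompletelyContinuous D)
    (hR : IsCompletelyContinuous R) (hm : MemLp m ⊤ μ) (hn : MemLp n ⊤ μ) :
    IsCompletelyContinuous (symbolForm D R hm hn) :=
  (hD.clm_comp (D† ∘L mulCLM hm)).sub (hR.clm_comp (R† ∘L mulCLM hn))

end SymbolForm

section PolarComponents

open ContinuousLinearMap (coe_comp)

variable {E : Type*} [NormedAddCommGroup E] [InnerProductSpace ℂ E] {μ : Measure R2}

/-- The `l`-th coordinate of the unit vector in the direction of `ξ` (zero at `ξ = 0`). -/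
def dirCoord (l : Fin 2) (ξ : R2) : ℂ := (ξ l / ‖ξ‖ : ℝ)

lemma memLp_top_dirCoord (l : Fin 2) (μ : Measure R2) : MemLp (dirCoord l) ⊤ μ := by
  refine memLp_top_of_bound (Measurable.aestronglyMeasurable ?_) 1 (.of_forall fun ξ => ?_)
  · unfold dirCoord
    fun_prop
  · rw [dirCoord, norm_real, norm_div, norm_norm]
    exact div_le_one_of_le₀ (PiLp.norm_apply_le ξ l) (norm_nonneg ξ)

/-- The component of a vector-valued Fourier transform in the direction of the frequency. -/
def radialPart (T : Fin 2 → E →L[ℂ] Lp ℂ 2 μ) : E →L[ℂ] Lp ℂ 2 μ :=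
  mulCLM (memLp_top_dirCoord 0 μ) ∘L T 0 + mulCLM (memLp_top_dirCoord 1 μ) ∘L T 1

/-- The component of a vector-valued Fourier transform orthogonal to the frequency. -/
def angularPart (T : Fin 2 → E →L[ℂ] Lp ℂ 2 μ) : E →L[ℂ] Lp ℂ 2 μ :=
  mulCLM (memLp_top_dirCoord 1 μ) ∘L T 0 - mulCLM (memLp_top_dirCoord 0 μ) ∘L T 1

variable {T : Fin 2 → E →L[ℂ] Lp ℂ 2 μ}

lemma coeFn_radialPart (x : E) :
    ∀ᵐ ξ ∂μ, radialPart T x ξ = dotFt (T 0 x) (T 1 x) ξ / ‖ξ‖ := by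
  filter_upwards [Lp.coeFn_add (mulCLM (memLp_top_dirCoord 0 μ) (T 0 x))
    (mulCLM (memLp_top_dirCoord 1 μ) (T 1 x)), coeFn_mulCLM (memLp_top_dirCoord 0 μ) (T 0 x),
    coeFn_mulCLM (memLp_top_dirCoord 1 μ) (T 1 x)] with ξ hadd h0 h1
  refine hadd.trans ?_
  rw [Pi.add_apply, h0, h1, dirCoord, dirCoord, dotFt]
  push_cast
  ring

lemma coeFn_angularPart (x : E) :
    ∀ᵐ ξ ∂μ, angularPart T x ξ = curlFt (T 0 x) (T 1 x) ξ / ‖ξ‖ := by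
  filter_upwards [Lp.coeFn_sub (mulCLM (memLp_top_dirCoord 1 μ) (T 0 x))
    (mulCLM (memLp_top_dirCoord 0 μ) (T 1 x)), coeFn_mulCLM (memLp_top_dirCoord 1 μ) (T 0 x),
    coeFn_mulCLM (memLp_top_dirCoord 0 μ) (T 1 x)] with ξ hsub h0 h1
  refine hsub.trans ?_
  rw [Pi.sub_apply, h0, h1, dirCoord, dirCoord, curlFt]
  push_cast
  ring

lemma IsCompletelyContinuous.radialPart (hT : ∀ l, IsCompletelyContinuous (T l)) :
    IsCompletelyContinuous (radialPart T) :=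
  ((hT 0).clm_comp _).add ((hT 1).clm_comp _)

lemma IsCompletelyContinuous.angularPart (hT : ∀ l, IsCompletelyContinuous (T l)) :
    IsCompletelyContinuous (angularPart T) :=
  ((hT 0).clm_comp _).sub ((hT 1).clm_comp _)

lemma norm_dotFt_sq_add_norm_curlFt_sq (f g : R2 → ℂ) (ξ : R2) :
    ‖dotFt f g ξ‖ ^ 2 + ‖curlFt f g ξ‖ ^ 2 = ‖ξ‖ ^ 2 * (‖f ξ‖ ^ 2 + ‖g ξ‖ ^ 2) := by
  simp only [dotFt, curlFt, EuclideanSpace.norm_sq_eq, Fin.sum_univ_two, ← normSq_eq_norm_sq,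
    normSq_apply, Real.norm_eq_abs, sq_abs, add_re, sub_re, mul_re, add_im, sub_im, mul_im,
    ofReal_re, ofReal_im]
  ring

end PolarComponents

section Garding

open DivSpace (component div)
open scoped InnerProduct InnerProductSpace

variable {s : ℝ} {K : Set R2}

namespace InwardPartition

variable (P : InwardPartition K)

lemma sum_convolutionCLM_component (l : Fin 2) :
    ∑ j, convolutionCLM s (mulKernel (P.χ j)) ∘L component l =
      (component l : DivSpace s K →L[ℂ] FourierSobolev s) := by
  ext1 F
  rw [sum_apply]
  exact sum_convolutionCLM_eq_self P.sum_χ (F.component_mem_supportedIn l)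

include P in
lemma isCompletelyContinuous_mulCLM_comp_component {m : R2 → ℂ}
    (hm : MemLp m ⊤ (sobolevMeasure s)) (hm0 : Tendsto m (cocompact R2) (𝓝 0)) (l : Fin 2) :
    IsCompletelyContinuous (mulCLM hm ∘L (component l : DivSpace s K →L[ℂ] FourierSobolev s)) := by
  rw [← P.sum_convolutionCLM_component, ContinuousLinearMap.comp_finsetSum]
  exact .sum fun j _ =>
    (isCompletelyContinuous_mulCLM_comp_convolutionCLM hm hm0 (mulKernel (P.χ j))).comp_clm _

lemma isCompletelyContinuous_angularPart_reflection_add :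
    IsCompletelyContinuous (angularPart component ∘L P.reflection s + angularPart component) := by
  convert IsCompletelyContinuous.angularPart (T := fun l => component l ∘L P.reflection s +
    component l) (P.isCompletelyContinuous_component_reflection_add ·) using 1
  ext1 F
  simp only [angularPart, add_apply, sub_apply, ContinuousLinearMap.coe_comp, Function.comp_apply,
    map_add]
  abel

end InwardPartition

/-- The pointwise Gårding inequality: `N`, `d`, `q` stand for the squared norms of a vector field,
its divergence and its angular part at a frequency of norm `r`. -/
lemma garding_pointwise {N d q r a b c R : ℝ} (hc : 0 ≤ c) (hd : 0 ≤ d) (hq : 0 ≤ q) (hN : 0 ≤ N)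
    (hR : 0 < R) (hr : 0 ≤ r) (ha : 0 ≤ a) (hb : 0 ≤ b) (hac : R ≤ r → c ≤ a) (hbc : R ≤ r → c ≤ b)
    (h : d + r ^ 2 * q = r ^ 2 * N) :
    min (c * R ^ 2) 1 / (1 + R ^ 2) * (N + d) ≤ a * d + b * q + if r < R then N else 0 := by
  rw [div_mul_eq_mul_div, div_le_iff₀ (by positivity)]
  split_ifs with hrR
  · calc min (c * R ^ 2) 1 * (N + d) ≤ 1 * (N + d) := by
          gcongr
          exact min_le_right _ _
      _ ≤ N * (1 + R ^ 2) := by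
          have : d ≤ R ^ 2 * N := by
            have : r ^ 2 * N ≤ R ^ 2 * N := by gcongr
            have : 0 ≤ r ^ 2 * q := by positivity
            linarith
          linarith
      _ ≤ (a * d + b * q + N) * (1 + R ^ 2) := by
          gcongr
          have : 0 ≤ a * d + b * q := by positivity
          linarith
  · have hrR := not_lt.1 hrR
    have hRN : R ^ 2 * N ≤ d + R ^ 2 * q := by
      refine le_of_mul_le_mul_left ?_ (pow_pos (hR.trans_le hrR) 2)
      have : R ^ 2 * d ≤ r ^ 2 * d := by gcongr
      linear_combination this - R ^ 2 * h
    calc min (c * R ^ 2) 1 * (N + d) ≤ c * R ^ 2 * (N + d) := by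
          gcongr
          exact min_le_left _ _
      _ = c * (R ^ 2 * N + R ^ 2 * d) := by ring
      _ ≤ c * (d + R ^ 2 * q + R ^ 2 * d + q) := by
          refine mul_le_mul_of_nonneg_left ?_ hc
          linarith
      _ = (c * d + c * q) * (1 + R ^ 2) := by ring
      _ ≤ (a * d + b * q + 0) * (1 + R ^ 2) := by
          rw [add_zero]
          gcongr
          exacts [hac hrR, hbc hrR]

variable {a b : R2 → ℝ}

lemma ae_norm_div_sq_add (F : DivSpace s K) : ∀ᵐ ξ ∂sobolevMeasure s,
    ‖div F ξ‖ ^ 2 + ‖ξ‖ ^ 2 * ‖angularPart component F ξ‖ ^ 2 =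
      ‖ξ‖ ^ 2 * (‖component 0 F ξ‖ ^ 2 + ‖component 1 F ξ‖ ^ 2) := by
  filter_upwards [ae_sobolevMeasure_of_ae (isDivergence_iff.1 F.isDivergence),
    coeFn_angularPart F] with ξ hdiv hang
  rw [← norm_dotFt_sq_add_norm_curlFt_sq, hdiv, hang, norm_mul, norm_I, one_mul,
    Fin.sum_univ_two, norm_div, norm_real, norm_norm]
  rcases eq_or_ne ξ 0 with rfl | hξ
  · simp [curlFt, dotFt]
  · rw [div_pow, mul_div_cancel₀ _ (pow_ne_zero 2 (norm_ne_zero_iff.2 hξ))]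
    rfl

lemma garding_symbolForm (ha : MemLp (fun ξ => (a ξ : ℂ)) ⊤ (sobolevMeasure s))
    (hb : MemLp (fun ξ => (b ξ : ℂ)) ⊤ (sobolevMeasure s)) {c R : ℝ} (hc : 0 ≤ c) (hR : 0 < R)
    (ha0 : ∀ ξ, 0 ≤ a ξ) (hb0 : ∀ ξ, 0 ≤ b ξ) (hac : ∀ ξ, R ≤ ‖ξ‖ → c ≤ a ξ)
    (hbc : ∀ ξ, R ≤ ‖ξ‖ → c ≤ b ξ)
    (hi : MemLp ((Metric.ball (0 : R2) R).indicator (1 : R2 → ℂ)) ⊤ (sobolevMeasure s))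
    (F : DivSpace s K) :
    min (c * R ^ 2) 1 / (1 + R ^ 2) * ‖F‖ ^ 2 ≤
      RCLike.re ⟪div F, mulCLM ha (div F)⟫_ℂ +
        RCLike.re ⟪angularPart component F, mulCLM hb (angularPart component F)⟫_ℂ +
        ∑ l, ‖mulCLM hi (component l F)‖ ^ 2 := by
  have hint (f : FourierSobolev s) : Integrable (fun ξ => ‖f ξ‖ ^ 2) (sobolevMeasure s) :=
    (Lp.memLp f).integrable_norm_pow two_ne_zero
  have hinti (f : FourierSobolev s) : Integrable (fun ξ => ‖(Metric.ball (0 : R2) R).indicator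
      (1 : R2 → ℂ) ξ * f ξ‖ ^ 2) (sobolevMeasure s) :=
    ((Lp.memLp f).mul hi).integrable_norm_pow two_ne_zero
  simp only [DivSpace.norm_sq_eq, re_inner_mulCLM_self, Fin.sum_univ_two, norm_mulCLM_sq]
  simp only [norm_sq_eq_integral]
  rw [← integral_add (hint _) (hint _), ← integral_add ((hint _).fun_add (hint _)) (hint _),
    ← integral_add (integrable_mul_norm_sq ha _) (integrable_mul_norm_sq hb _),
    ← integral_add (hinti _) (hinti _), ← integral_add ((integrable_mul_norm_sq ha _).fun_add
      (integrable_mul_norm_sq hb _)) ((hinti _).fun_add (hinti _)), ← integral_const_mul]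
  refine integral_mono_ae ((((hint _).fun_add (hint _)).fun_add (hint _)).const_mul _)
    (((integrable_mul_norm_sq ha _).fun_add (integrable_mul_norm_sq hb _)).fun_add
      ((hinti _).fun_add (hinti _))) ?_
  filter_upwards [ae_norm_div_sq_add F] with ξ hξ
  refine (garding_pointwise hc (sq_nonneg _) (sq_nonneg _) (by positivity) hR (norm_nonneg ξ)
    (ha0 ξ) (hb0 ξ) (hac ξ) (hbc ξ) hξ).trans_eq (congrArg _ ?_)
  by_cases h : ‖ξ‖ < R <;> simp [h]

theorem InwardPartition.isWeaklyProper_symbolForm (P : InwardPartition K)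
    (ha : MemLp (fun ξ => (a ξ : ℂ)) ⊤ (sobolevMeasure s))
    (hb : MemLp (fun ξ => (b ξ : ℂ)) ⊤ (sobolevMeasure s)) {c R : ℝ} (hc : 0 < c) (hR : 0 < R)
    (ha0 : ∀ ξ, 0 ≤ a ξ) (hb0 : ∀ ξ, 0 ≤ b ξ) (hac : ∀ ξ, R ≤ ‖ξ‖ → c ≤ a ξ)
    (hbc : ∀ ξ, R ≤ ‖ξ‖ → c ≤ b ξ) :
    IsWeaklyProper (symbolForm (div : DivSpace s K →L[ℂ] _) (angularPart component) ha hb) := by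
  have hi : MemLp ((Metric.ball (0 : R2) R).indicator (1 : R2 → ℂ)) ⊤ (sobolevMeasure s) :=
    (memLp_top_const 1).indicator measurableSet_ball
  have hi0 : Tendsto ((Metric.ball (0 : R2) R).indicator (1 : R2 → ℂ)) (cocompact R2) (𝓝 0) :=
    tendsto_const_nhds.congr' <| mem_of_superset
      (isCompact_closedBall (0 : R2) R).compl_mem_cocompact fun ξ hξ =>
        (Set.indicator_of_notMem (fun h => hξ (Metric.ball_subset_closedBall h)) _).symm
  refine .of_reflection P.isCompletelyContinuous_div_reflection_sub
    P.isCompletelyContinuous_angularPart_reflection_add ?_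
  refine .of_garding (c := min (c * R ^ 2) 1 / (1 + R ^ 2)) (by positivity)
    (fun l => P.isCompletelyContinuous_mulCLM_comp_component hi hi0 l) fun F => ?_
  simpa only [add_apply, ContinuousLinearMap.coe_comp, Function.comp_apply, inner_add_right,
    ContinuousLinearMap.adjoint_inner_right, map_add] using
    garding_symbolForm ha hb hc.le hR ha0 hb0 hac hbc hi F

end Garding

section HighFrequency

open DivSpace (component div)
open scoped InnerProductSpace ComplexConjugate

variable {k : ℝ}

/-- The symbol of the radial part of the form at frequencies `‖ξ‖ ≥ 2 * k`, relative to
`sobolevMeasure (-1/2)` and to the divergence. -/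
def highRadialSymbol (k : ℝ) (ξ : R2) : ℝ :=
  if 2 * k ≤ ‖ξ‖ then √(1 + ‖ξ‖ ^ 2) * √(‖ξ‖ ^ 2 - k ^ 2) / ‖ξ‖ ^ 2 else 0

/-- The symbol of the angular part of the form at frequencies `‖ξ‖ ≥ 2 * k`, relative to
`sobolevMeasure (-1/2)`. -/
def highAngularSymbol (k : ℝ) (ξ : R2) : ℝ :=
  if 2 * k ≤ ‖ξ‖ then √(1 + ‖ξ‖ ^ 2) * k ^ 2 / √(‖ξ‖ ^ 2 - k ^ 2) else 0

lemma measurableSet_two_mul_le_norm (k : ℝ) : MeasurableSet {ξ : R2 | 2 * k ≤ ‖ξ‖} :=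
  measurableSet_le measurable_const measurable_norm

lemma sqrt_sq_sub_sq_le {r : ℝ} (hr : 0 ≤ r) (k : ℝ) : √(r ^ 2 - k ^ 2) ≤ r :=
  Real.sqrt_le_left hr |>.2 (sub_le_self _ (sq_nonneg k))

lemma le_two_mul_sqrt_sq_sub_sq {r : ℝ} (hk : 0 ≤ k) (hr : 2 * k ≤ r) :
    r ≤ 2 * √(r ^ 2 - k ^ 2) := by
  have : r / 2 ≤ √(r ^ 2 - k ^ 2) := Real.le_sqrt_of_sq_le (by nlinarith)
  linarith

lemma le_sqrt_one_add_sq (r : ℝ) : r ≤ √(1 + r ^ 2) :=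
  Real.le_sqrt_of_sq_le (by linarith)

lemma sqrt_one_add_sq_le {r : ℝ} (hk : 0 < k) (hr : 2 * k ≤ r) :
    √(1 + r ^ 2) ≤ (1 + 1 / (2 * k)) * r := by
  have hr0 : 0 < r := by linarith
  have : 1 ≤ 1 / (2 * k) * r := by
    rwa [one_div_mul_eq_div, one_le_div (by positivity)]
  calc √(1 + r ^ 2) ≤ 1 + r := Real.sqrt_le_left (by positivity) |>.2 (by nlinarith)
    _ ≤ (1 + 1 / (2 * k)) * r := by linarith

lemma highRadialSymbol_nonneg (k : ℝ) (ξ : R2) : 0 ≤ highRadialSymbol k ξ := by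
  unfold highRadialSymbol
  positivity

lemma highAngularSymbol_nonneg (k : ℝ) (ξ : R2) : 0 ≤ highAngularSymbol k ξ := by
  unfold highAngularSymbol
  positivity

lemma half_le_highRadialSymbol (hk : 0 < k) {ξ : R2} (hξ : 2 * k ≤ ‖ξ‖) :
    1 / 2 ≤ highRadialSymbol k ξ := by
  have hr : 0 < ‖ξ‖ := by linarith
  rw [highRadialSymbol, if_pos hξ, le_div_iff₀ (by positivity)]
  calc 1 / 2 * ‖ξ‖ ^ 2 = ‖ξ‖ * (‖ξ‖ / 2) := by ring
    _ ≤ √(1 + ‖ξ‖ ^ 2) * √(‖ξ‖ ^ 2 - k ^ 2) := by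
        gcongr
        · exact le_sqrt_one_add_sq _
        · linarith [le_two_mul_sqrt_sq_sub_sq hk.le hξ]

lemma sq_le_highAngularSymbol (hk : 0 < k) {ξ : R2} (hξ : 2 * k ≤ ‖ξ‖) :
    k ^ 2 ≤ highAngularSymbol k ξ := by
  have hr : 0 < ‖ξ‖ := by linarith
  have hq : 0 < √(‖ξ‖ ^ 2 - k ^ 2) := by linarith [le_two_mul_sqrt_sq_sub_sq hk.le hξ]
  rw [highAngularSymbol, if_pos hξ, le_div_iff₀ hq, mul_comm]
  exact mul_le_mul_of_nonneg_right ((sqrt_sq_sub_sq_le hr.le k).trans (le_sqrt_one_add_sq _))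
    (sq_nonneg k)

lemma highRadialSymbol_le (hk : 0 < k) (ξ : R2) : highRadialSymbol k ξ ≤ 1 + 1 / (2 * k) := by
  unfold highRadialSymbol
  split_ifs with hξ
  swap
  · positivity
  have hr : 0 < ‖ξ‖ := by linarith
  rw [div_le_iff₀ (by positivity)]
  calc √(1 + ‖ξ‖ ^ 2) * √(‖ξ‖ ^ 2 - k ^ 2) ≤ (1 + 1 / (2 * k)) * ‖ξ‖ * ‖ξ‖ := by
        gcongr
        · exact sqrt_one_add_sq_le hk hξ
        · exact sqrt_sq_sub_sq_le hr.le k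
    _ = (1 + 1 / (2 * k)) * ‖ξ‖ ^ 2 := by ring

lemma highAngularSymbol_le (hk : 0 < k) (ξ : R2) :
    highAngularSymbol k ξ ≤ 2 * k ^ 2 * (1 + 1 / (2 * k)) := by
  unfold highAngularSymbol
  split_ifs with hξ
  swap
  · positivity
  have hr := le_two_mul_sqrt_sq_sub_sq hk.le hξ
  have hq : 0 < √(‖ξ‖ ^ 2 - k ^ 2) := by linarith
  rw [div_le_iff₀ hq]
  calc √(1 + ‖ξ‖ ^ 2) * k ^ 2 ≤ (1 + 1 / (2 * k)) * (2 * √(‖ξ‖ ^ 2 - k ^ 2)) * k ^ 2 := by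
        gcongr
        exact (sqrt_one_add_sq_le hk hξ).trans (by gcongr)
    _ = 2 * k ^ 2 * (1 + 1 / (2 * k)) * √(‖ξ‖ ^ 2 - k ^ 2) := by ring

lemma memLp_top_highRadialSymbol (hk : 0 < k) (μ : Measure R2) :
    MemLp (fun ξ => (highRadialSymbol k ξ : ℂ)) ⊤ μ := by
  refine memLp_top_of_bound (Measurable.aestronglyMeasurable ?_) (1 + 1 / (2 * k))
    (.of_forall fun ξ => ?_)
  · exact measurable_ofReal.comp <| .ite (measurableSet_two_mul_le_norm k) (by fun_prop)
      measurable_const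
  · rw [norm_real, Real.norm_of_nonneg (highRadialSymbol_nonneg k ξ)]
    exact highRadialSymbol_le hk ξ

lemma memLp_top_highAngularSymbol (hk : 0 < k) (μ : Measure R2) :
    MemLp (fun ξ => (highAngularSymbol k ξ : ℂ)) ⊤ μ := by
  refine memLp_top_of_bound (Measurable.aestronglyMeasurable ?_) (2 * k ^ 2 * (1 + 1 / (2 * k)))
    (.of_forall fun ξ => ?_)
  · exact measurable_ofReal.comp <| .ite (measurableSet_two_mul_le_norm k) (by fun_prop)
      measurable_const
  · rw [norm_real, Real.norm_of_nonneg (highAngularSymbol_nonneg k ξ)]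
    exact highAngularSymbol_le hk ξ

lemma indicator_Bintegrand_eq_smul (hk : 0 < k) (F₀ F₁ G₀ G₁ : R2 → ℂ) (ξ : R2) :
    {ξ | 2 * k ≤ ‖ξ‖}.indicator (Bintegrand k F₀ F₁ G₀ G₁) ξ = (1 + ‖ξ‖ ^ 2) ^ (-(1 / 2) : ℝ) •
      (highRadialSymbol k ξ * (I * dotFt F₀ F₁ ξ * conj (I * dotFt G₀ G₁ ξ)) -
        highAngularSymbol k ξ * (curlFt F₀ F₁ ξ / ‖ξ‖ * conj (curlFt G₀ G₁ ξ / ‖ξ‖))) := by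
  by_cases hξ : 2 * k ≤ ‖ξ‖
  · have hr : 0 < ‖ξ‖ := by linarith
    have hq : 0 < √(‖ξ‖ ^ 2 - k ^ 2) := by linarith [le_two_mul_sqrt_sq_sub_sq hk.le hξ]
    have hw : (1 + ‖ξ‖ ^ 2) ^ (-(1 / 2) : ℝ) = (√(1 + ‖ξ‖ ^ 2))⁻¹ := by
      rw [Real.rpow_neg (by positivity), Real.sqrt_eq_rpow]
    have hw0 : (√(1 + ‖ξ‖ ^ 2) : ℂ) ≠ 0 := ofReal_ne_zero.2 (by positivity)
    have hr0 : (‖ξ‖ : ℂ) ≠ 0 := ofReal_ne_zero.2 hr.ne'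
    have hq0 : (√(‖ξ‖ ^ 2 - k ^ 2) : ℂ) ≠ 0 := ofReal_ne_zero.2 hq.ne'
    have hq2 : ((‖ξ‖ ^ 2 - k ^ 2 : ℝ) : ℂ) = (√(‖ξ‖ ^ 2 - k ^ 2) : ℂ) ^ 2 := by
      rw [← ofReal_pow, Real.sq_sqrt (Real.sqrt_pos.1 hq).le]
    rw [Set.indicator_of_mem (by exact hξ), highRadialSymbol, highAngularSymbol, if_pos hξ,
      if_pos hξ, hw, Bintegrand, hq2, g0hat, if_neg (by linarith), real_smul]
    simp only [map_mul, map_div₀, conj_I, conj_ofReal]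
    push_cast
    field_simp
    linear_combination ((√(‖ξ‖ ^ 2 - k ^ 2) : ℂ) ^ 2 * dotFt F₀ F₁ ξ * conj (dotFt G₀ G₁ ξ)) * I_sq
  · rw [Set.indicator_of_notMem (by exact hξ), highRadialSymbol, highAngularSymbol, if_neg hξ,
      if_neg hξ]
    simp only [ofReal_zero, zero_mul, sub_zero, smul_zero]

variable {K : Set R2}

/-- The contribution of the frequencies `‖ξ‖ ≥ 2 * k` to the form. -/
def highForm (hk : 0 < k) (K : Set R2) : DivSpace (-(1 / 2)) K →L[ℂ] DivSpace (-(1 / 2)) K :=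
  symbolForm div (angularPart component) (memLp_top_highRadialSymbol hk _)
    (memLp_top_highAngularSymbol hk _)

lemma InwardPartition.isWeaklyProper_highForm (P : InwardPartition K) (hk : 0 < k) :
    IsWeaklyProper (highForm hk K) :=
  P.isWeaklyProper_symbolForm _ _ (c := min (1 / 2) (k ^ 2)) (R := 2 * k) (by positivity)
    (by positivity) (highRadialSymbol_nonneg k) (highAngularSymbol_nonneg k)
    (fun _ hξ => min_le_of_left_le (half_le_highRadialSymbol hk hξ))
    (fun _ hξ => min_le_of_right_le (sq_le_highAngularSymbol hk hξ))

lemma ae_highForm_integrand_eq (hk : 0 < k) (F G : DivSpace (-(1 / 2)) K) :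
    ∀ᵐ ξ, (1 + ‖ξ‖ ^ 2) ^ (-(1 / 2) : ℝ) • (highRadialSymbol k ξ * (div G ξ * conj (div F ξ)) -
        highAngularSymbol k ξ *
          (angularPart component G ξ * conj (angularPart component F ξ))) =
      {ξ | 2 * k ≤ ‖ξ‖}.indicator
        (Bintegrand k (component 0 G) (component 1 G) (component 0 F) (component 1 F)) ξ := by
  filter_upwards [isDivergence_iff.1 F.isDivergence, isDivergence_iff.1 G.isDivergence,
    ae_of_ae_sobolevMeasure (coeFn_angularPart F),
    ae_of_ae_sobolevMeasure (coeFn_angularPart G)] with ξ hF hG hF' hG'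
  rw [hF, hG, hF', hG', indicator_Bintegrand_eq_smul hk]
  simp only [Fin.sum_univ_two]
  rfl

lemma inner_highForm (hk : 0 < k) (F G : DivSpace (-(1 / 2)) K) :
    ⟪F, highForm hk K G⟫_ℂ = ∫ ξ in {ξ | 2 * k ≤ ‖ξ‖},
      Bintegrand k (component 0 G) (component 1 G) (component 0 F) (component 1 F) ξ := by
  rw [highForm, inner_symbolForm, integral_sobolevMeasure,
    integral_congr_ae (ae_highForm_integrand_eq hk F G),
    integral_indicator (measurableSet_two_mul_le_norm k)]

lemma integrableOn_Bintegrand_high (hk : 0 < k) (F G : DivSpace (-(1 / 2)) K) :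
    IntegrableOn (Bintegrand k (component 0 G) (component 1 G) (component 0 F) (component 1 F))
      {ξ | 2 * k ≤ ‖ξ‖} := by
  rw [← integrable_indicator_iff (measurableSet_two_mul_le_norm k)]
  exact (integrable_sobolevMeasure_iff.1 (integrable_mul_conj_sub (memLp_top_highRadialSymbol hk _)
    (memLp_top_highAngularSymbol hk _) _ _ _ _)).congr (ae_highForm_integrand_eq hk F G)

end HighFrequency

section LowFrequency

open DivSpace (component)
open ContinuousLinearMap (mul)
open scoped Convolution InnerProductSpace ComplexConjugate

lemma measurable_g0hat (k : ℝ) : Measurable (g0hat k) :=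
  .ite (measurableSet_lt measurable_norm measurable_const) (by fun_prop) (by fun_prop)

lemma norm_g0hat {k : ℝ} (hk : 0 ≤ k) (ξ : R2) : ‖g0hat k ξ‖ = (√|‖ξ‖ ^ 2 - k ^ 2|)⁻¹ := by
  have hr := norm_nonneg ξ
  unfold g0hat
  split_ifs with h
  · rw [norm_div, norm_I, norm_real, Real.norm_of_nonneg (Real.sqrt_nonneg _), one_div,
      abs_sub_comm, abs_of_nonneg (by nlinarith)]
  · rw [norm_div, norm_one, norm_real, Real.norm_of_nonneg (Real.sqrt_nonneg _), one_div,
      abs_of_nonneg (by nlinarith)]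

variable {k : ℝ}

lemma norm_g0hat_le (hk : 0 < k) (ξ : R2) :
    ‖g0hat k ξ‖ ≤ (√k)⁻¹ * |‖ξ‖ - k| ^ (-(1 / 2) : ℝ) := by
  have hr := norm_nonneg ξ
  rw [norm_g0hat hk.le ξ, Real.rpow_neg (abs_nonneg _), ← Real.sqrt_eq_rpow, ← mul_inv,
    ← Real.sqrt_mul hk.le]
  rcases eq_or_ne ‖ξ‖ k with h | h
  · simp [h]
  · have hpos : 0 < k * |‖ξ‖ - k| := mul_pos hk (abs_pos.2 (sub_ne_zero.2 h))
    refine inv_anti₀ (Real.sqrt_pos.2 hpos) (Real.sqrt_le_sqrt ?_)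
    rw [sq_sub_sq, abs_mul, abs_of_pos (show 0 < ‖ξ‖ + k by linarith)]
    gcongr
    linarith

lemma intervalIntegrable_abs_rpow {r : ℝ} (hr : -1 < r) (a b : ℝ) :
    IntervalIntegrable (fun x => |x| ^ r) volume a b := by
  have hneg : IntervalIntegrable (fun x : ℝ => (-x) ^ r) volume a b := by
    simpa using (intervalIntegral.intervalIntegrable_rpow' (a := -a) (b := -b) hr).comp_sub_left 0
  refine ((intervalIntegral.intervalIntegrable_rpow' hr).norm.add hneg.norm).mono_fun
    (Measurable.aestronglyMeasurable (by fun_prop)) (.of_forall fun x => ?_)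
  beta_reduce
  rw [Real.norm_of_nonneg (by positivity), Real.norm_of_nonneg (by positivity)]
  rcases abs_cases x with ⟨hx, -⟩ | ⟨hx, -⟩
  · rw [hx]
    exact (le_abs_self _).trans (le_add_of_nonneg_right (norm_nonneg _))
  · rw [hx]
    exact (le_abs_self _).trans (le_add_of_nonneg_left (norm_nonneg _))

lemma integrableOn_g0hat (hk : 0 < k) (R : ℝ) : IntegrableOn (g0hat k) (Metric.ball 0 R) := by
  have hrad : IntegrableOn (fun y : ℝ => y ^ 1 • |y - k| ^ (-(1 / 2) : ℝ)) (Set.Ioo 0 R) := by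
    have h := (intervalIntegrable_abs_rpow (r := -(1 / 2)) (by norm_num) (0 - k)
      (R - k)).comp_sub_right k
    simp only [sub_add_cancel] at h
    exact (h.continuousOn_mul (g := fun y => y ^ 1) (by fun_prop)).1.mono_set
      Set.Ioo_subset_Ioc_self
  have hball : IntegrableOn (fun ξ : R2 => |‖ξ‖ - k| ^ (-(1 / 2) : ℝ)) (Metric.ball 0 R) := by
    refine (integrableOn_fun_norm_addHaar volume (f := fun y => |y - k| ^ (-(1 / 2) : ℝ))).2 ?_
    rwa [finrank_euclideanSpace_fin]
  exact (hball.const_mul (√k)⁻¹).mono' (measurable_g0hat k).aestronglyMeasurable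
    (.of_forall (norm_g0hat_le hk))

/-- The measure `‖ĝ₀(ξ)‖ dξ` on the frequencies `‖ξ‖ < 2 * k`, in which the integrable singularity
of the symbol at `‖ξ‖ = k` is absorbed. -/
def lowMeasure (k : ℝ) : Measure R2 :=
  (volume.restrict (Metric.ball 0 (2 * k))).withDensity fun ξ => (‖g0hat k ξ‖₊ : ENNReal)

lemma lowMeasure_absolutelyContinuous_volume (k : ℝ) : lowMeasure k ≪ volume :=
  (withDensity_absolutelyContinuous _ _).trans Measure.restrict_le_self.absolutelyContinuous

lemma ae_lowMeasure_norm_lt (k : ℝ) : ∀ᵐ ξ ∂lowMeasure k, ‖ξ‖ < 2 * k :=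
  (withDensity_absolutelyContinuous _ _).ae_le <|
    (ae_restrict_mem Metric.isOpen_ball.measurableSet).mono fun _ => mem_ball_zero_iff.1

lemma isFiniteMeasure_lowMeasure (hk : 0 < k) : IsFiniteMeasure (lowMeasure k) :=
  isFiniteMeasure_withDensity (integrableOn_g0hat hk (2 * k)).2.ne

lemma integral_lowMeasure (f : R2 → ℂ) :
    ∫ ξ, f ξ ∂lowMeasure k = ∫ ξ in Metric.ball 0 (2 * k), ‖g0hat k ξ‖ • f ξ :=
  integral_withDensity_eq_integral_smul (measurable_g0hat k).nnnorm f

lemma integrable_lowMeasure_iff {f : R2 → ℂ} : Integrable f (lowMeasure k) ↔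
    IntegrableOn (fun ξ => ‖g0hat k ξ‖ • f ξ) (Metric.ball 0 (2 * k)) :=
  integrable_withDensity_iff_integrable_smul (measurable_g0hat k).nnnorm

lemma memLp_rpow_lowMeasure (hk : 0 < k) (s : ℝ) :
    MemLp (fun ξ : R2 => (1 + ‖ξ‖ ^ 2) ^ (|s| + 2)) 2 (lowMeasure k) :=
  have := isFiniteMeasure_lowMeasure hk
  memLp_rpow_of_ae_norm_le (by positivity) ((ae_lowMeasure_norm_lt k).mono fun _ => le_of_lt)

/-- The symbol of the radial part of the form at frequencies `‖ξ‖ < 2 * k`, relative to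
`lowMeasure k`. -/
def lowRadialSymbol (k : ℝ) (ξ : R2) : ℂ := g0hat k ξ / ‖g0hat k ξ‖ * (‖ξ‖ ^ 2 - k ^ 2 : ℝ)

/-- The symbol of the angular part of the form at frequencies `‖ξ‖ < 2 * k`, relative to
`lowMeasure k`. -/
def lowAngularSymbol (k : ℝ) (ξ : R2) : ℂ := g0hat k ξ / ‖g0hat k ξ‖ * (k ^ 2 : ℝ)

lemma norm_div_norm_le_one (z : ℂ) : ‖z / ‖z‖‖ ≤ 1 := by
  rw [norm_div, norm_real, norm_norm]
  exact div_self_le_one _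

lemma memLp_top_lowRadialSymbol (k : ℝ) : MemLp (lowRadialSymbol k) ⊤ (lowMeasure k) := by
  have hg := measurable_g0hat k
  refine memLp_top_of_bound (Measurable.aestronglyMeasurable ?_) (4 * k ^ 2) ?_
  · unfold lowRadialSymbol
    fun_prop
  · filter_upwards [ae_lowMeasure_norm_lt k] with ξ hξ
    have hr : ‖ξ‖ ^ 2 ≤ (2 * k) ^ 2 := by gcongr
    rw [lowRadialSymbol, norm_mul, norm_real]
    refine (mul_le_of_le_one_left (norm_nonneg _) (norm_div_norm_le_one _)).trans ?_
    refine abs_le.2 ⟨?_, ?_⟩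
    all_goals nlinarith [sq_nonneg k, sq_nonneg ‖ξ‖]

lemma memLp_top_lowAngularSymbol (k : ℝ) (μ : Measure R2) : MemLp (lowAngularSymbol k) ⊤ μ := by
  have hg := measurable_g0hat k
  refine memLp_top_of_bound (Measurable.aestronglyMeasurable ?_) (k ^ 2) (.of_forall fun ξ => ?_)
  · unfold lowAngularSymbol
    fun_prop
  · rw [lowAngularSymbol, norm_mul, norm_real, Real.norm_of_nonneg (sq_nonneg k)]
    exact mul_le_of_le_one_left (sq_nonneg k) (norm_div_norm_le_one _)

lemma Bintegrand_eq_norm_smul (k : ℝ) (F₀ F₁ G₀ G₁ : R2 → ℂ) (ξ : R2) :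
    Bintegrand k F₀ F₁ G₀ G₁ ξ = ‖g0hat k ξ‖ •
      (lowRadialSymbol k ξ * (dotFt F₀ F₁ ξ / ‖ξ‖ * conj (dotFt G₀ G₁ ξ / ‖ξ‖)) -
        lowAngularSymbol k ξ * (curlFt F₀ F₁ ξ / ‖ξ‖ * conj (curlFt G₀ G₁ ξ / ‖ξ‖))) := by
  have hg : ‖g0hat k ξ‖ * (g0hat k ξ / ‖g0hat k ξ‖) = g0hat k ξ := by
    rcases eq_or_ne (g0hat k ξ) 0 with h | h
    · simp only [h, zero_div, mul_zero]
    · exact mul_div_cancel₀ _ (ofReal_ne_zero.2 (norm_ne_zero_iff.2 h))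
  rw [Bintegrand, lowRadialSymbol, lowAngularSymbol, real_smul]
  nth_rw 1 [← hg]
  simp only [map_div₀, conj_ofReal]
  push_cast
  ring

variable {s : ℝ} {K : Set R2} {ν : Measure R2}

namespace InwardPartition

variable (P : InwardPartition K)

/-- The Fourier transform of the `l`-th component of a vector field supported in `K`, as an element
of `L²(ν)`; it is the sum of its convolutions with the transforms of the partition of unity. -/
def componentLp (hν : MemLp (fun ξ : R2 => (1 + ‖ξ‖ ^ 2) ^ (|s| + 2)) 2 ν) (l : Fin 2) :
    DivSpace s K →L[ℂ] Lp ℂ 2 ν :=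
  ∑ j, (isConvolutionBounded_of_memLp (mulKernel (P.χ j)) hν).clm ∘L component l

lemma isCompletelyContinuous_componentLp
    (hν : MemLp (fun ξ : R2 => (1 + ‖ξ‖ ^ 2) ^ (|s| + 2)) 2 ν) (l : Fin 2) :
    IsCompletelyContinuous (P.componentLp hν l) :=
  .sum fun _ _ => (isCompletelyContinuous_convolution hν).comp_clm _

lemma ae_eq_sum_convolution {f : FourierSobolev s} (hf : f ∈ supportedIn s K) :
    ∀ᵐ ξ, f ξ = ∑ j, (f ⋆[mul ℂ ℂ] mulKernel (P.χ j)) ξ := by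
  refine ae_of_ae_sobolevMeasure (s := s) ?_
  filter_upwards [Lp.coeFn_finsetSum Finset.univ fun j => convolutionCLM s (mulKernel (P.χ j)) f,
    eventually_all.2 fun j => coeFn_convolutionCLM (mulKernel (P.χ j)) f] with ξ hsum hconv
  rw [sum_convolutionCLM_eq_self P.sum_χ hf, Finset.sum_apply] at hsum
  simp only [hsum, hconv]

lemma coeFn_componentLp (hν : MemLp (fun ξ : R2 => (1 + ‖ξ‖ ^ 2) ^ (|s| + 2)) 2 ν)
    (hac : ν ≪ volume) (l : Fin 2) (F : DivSpace s K) :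
    ∀ᵐ ξ ∂ν, P.componentLp hν l F ξ = component l F ξ := by
  filter_upwards [Lp.coeFn_finsetSum Finset.univ fun j =>
      (isConvolutionBounded_of_memLp (mulKernel (P.χ j)) hν).clm (component l F),
    eventually_all.2 fun j => (isConvolutionBounded_of_memLp (mulKernel (P.χ j)) hν).coeFn_clm
      (component l F), hac.ae_le (P.ae_eq_sum_convolution (F.component_mem_supportedIn l))]
    with ξ hsum hconv hF
  rw [hF, componentLp, sum_apply]
  refine hsum.trans ?_
  simp only [Finset.sum_apply, hconv]

/-- The contribution of the frequencies `‖ξ‖ < 2 * k` to the form. -/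
def lowForm (hk : 0 < k) : DivSpace (-(1 / 2)) K →L[ℂ] DivSpace (-(1 / 2)) K :=
  symbolForm (radialPart (P.componentLp (memLp_rpow_lowMeasure hk _)))
    (angularPart (P.componentLp (memLp_rpow_lowMeasure hk _)))
    (memLp_top_lowRadialSymbol k) (memLp_top_lowAngularSymbol k _)

lemma isCompletelyContinuous_lowForm (hk : 0 < k) : IsCompletelyContinuous (P.lowForm hk) :=
  isCompletelyContinuous_symbolForm (.radialPart (P.isCompletelyContinuous_componentLp _))
    (.angularPart (P.isCompletelyContinuous_componentLp _)) _ _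

lemma ae_lowForm_integrand_eq (hk : 0 < k) (F G : DivSpace (-(1 / 2)) K) :
    let T := P.componentLp (s := -(1 / 2)) (memLp_rpow_lowMeasure hk _)
    ∀ᵐ ξ ∂lowMeasure k, lowRadialSymbol k ξ * (radialPart T G ξ * conj (radialPart T F ξ)) -
        lowAngularSymbol k ξ * (angularPart T G ξ * conj (angularPart T F ξ)) =
      lowRadialSymbol k ξ * (dotFt (component 0 G) (component 1 G) ξ / ‖ξ‖ *
          conj (dotFt (component 0 F) (component 1 F) ξ / ‖ξ‖)) -
        lowAngularSymbol k ξ * (curlFt (component 0 G) (component 1 G) ξ / ‖ξ‖ *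
          conj (curlFt (component 0 F) (component 1 F) ξ / ‖ξ‖)) := by
  intro T
  have hT (H : DivSpace (-(1 / 2)) K) : ∀ᵐ ξ ∂lowMeasure k, ∀ l, T l H ξ = component l H ξ :=
    eventually_all.2 fun l => P.coeFn_componentLp _ (lowMeasure_absolutelyContinuous_volume k) l H
  filter_upwards [hT F, hT G, coeFn_radialPart (T := T) F, coeFn_radialPart (T := T) G,
    coeFn_angularPart (T := T) F, coeFn_angularPart (T := T) G] with ξ hF hG hrF hrG haF haG
  simp only [hrF, hrG, haF, haG, dotFt, curlFt, hF, hG]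

lemma inner_lowForm (hk : 0 < k) (F G : DivSpace (-(1 / 2)) K) :
    ⟪F, P.lowForm hk G⟫_ℂ = ∫ ξ in Metric.ball 0 (2 * k),
      Bintegrand k (component 0 G) (component 1 G) (component 0 F) (component 1 F) ξ := by
  rw [lowForm, inner_symbolForm, integral_congr_ae (P.ae_lowForm_integrand_eq hk F G),
    integral_lowMeasure]
  simp only [← Bintegrand_eq_norm_smul]

include P in
lemma integrableOn_Bintegrand_low (hk : 0 < k) (F G : DivSpace (-(1 / 2)) K) :
    IntegrableOn (Bintegrand k (component 0 G) (component 1 G) (component 0 F) (component 1 F))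
      (Metric.ball 0 (2 * k)) := by
  have h := integrable_lowMeasure_iff.1 ((integrable_mul_conj_sub (memLp_top_lowRadialSymbol k)
    (memLp_top_lowAngularSymbol k _) _ _ _ _).congr (P.ae_lowForm_integrand_eq hk F G))
  simpa only [← Bintegrand_eq_norm_smul] using h

end InwardPartition

end LowFrequency

section FormOperator

open DivSpace (component)
open scoped InnerProductSpace

variable {k : ℝ} {K : Set R2}

namespace InwardPartition

variable (P : InwardPartition K)

/-- The operator of the sesquilinear form of the variational problem. -/
def formOperator (hk : 0 < k) : DivSpace (-(1 / 2)) K →L[ℂ] DivSpace (-(1 / 2)) K :=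
  highForm hk K + P.lowForm hk

lemma isFredholmOfIndexZero_formOperator (hk : 0 < k) :
    IsFredholmOfIndexZero (P.formOperator hk) :=
  (P.isWeaklyProper_highForm hk).isFredholmOfIndexZero_add (isSelfAdjoint_symbolForm _ _)
    (P.isCompletelyContinuous_lowForm hk)

lemma inner_formOperator (hk : 0 < k) (F G : DivSpace (-(1 / 2)) K) :
    ⟪F, P.formOperator hk G⟫_ℂ =
      ∫ ξ, Bintegrand k (component 0 G) (component 1 G) (component 0 F) (component 1 F) ξ := by
  have hcompl : {ξ : R2 | 2 * k ≤ ‖ξ‖}ᶜ = Metric.ball 0 (2 * k) := by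
    ext ξ
    simp
  have hlow := P.integrableOn_Bintegrand_low hk F G
  rw [formOperator, add_apply, inner_add_right, inner_highForm, P.inner_lowForm]
  rw [← hcompl] at hlow ⊢
  have hint := (integrableOn_Bintegrand_high hk F G).union hlow
  rw [Set.union_compl_self, integrableOn_univ] at hint
  exact integral_add_compl (measurableSet_two_mul_le_norm k) hint

end InwardPartition

end FormOperator

section FunctionSpaces

open DivSpace (component div)
open scoped ComplexConjugate Convolution InnerProduct InnerProductSpace
open ContinuousLinearMap (adjoint_inner_left mul)

variable {s : ℝ} {Γ : Set R2}

namespace HTildeElt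

attribute [ext] HTildeElt

/-- The Fourier transform of an element of `H̃^s(Γ)`, as an element of `FourierSobolev s`. -/
def toFourierSobolev (f : HTildeElt s Γ) : FourierSobolev s :=
  ((memLp_two_sobolevMeasure_iff f.cont.aestronglyMeasurable).2 f.mem).toLp

lemma coeFn_toFourierSobolev (f : HTildeElt s Γ) : ∀ᵐ ξ, f.toFourierSobolev ξ = f.ft ξ :=
  ae_of_ae_sobolevMeasure (MemLp.coeFn_toLp _)

instance : Zero (HTildeElt s Γ) := ⟨0, continuous_zero, by simp, by simp⟩

lemma ft_zero : (0 : HTildeElt s Γ).ft = 0 := rfl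

lemma toFourierSobolev_injective :
    Function.Injective (toFourierSobolev : HTildeElt s Γ → FourierSobolev s) := fun f g h => by
  refine HTildeElt.ext (Continuous.ae_eq_iff_eq volume f.cont g.cont |>.1 ?_)
  filter_upwards [f.coeFn_toFourierSobolev, g.coeFn_toFourierSobolev] with ξ hf hg
  rw [← hf, ← hg, h]

lemma coeFn_sum_toFourierSobolev {n : ℕ} (c : Fin n → ℂ) (e : Fin n → HTildeElt s Γ) :
    ∀ᵐ ξ, (∑ i, c i • (e i).toFourierSobolev) ξ = ∑ i, c i * (e i).ft ξ := by
  filter_upwards [ae_of_ae_sobolevMeasure (Lp.coeFn_finsetSum Finset.univ fun i =>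
      c i • (e i).toFourierSobolev), eventually_all.2 fun i => (e i).coeFn_toFourierSobolev,
    eventually_all.2 fun i => ae_of_ae_sobolevMeasure (Lp.coeFn_smul (c i)
      (e i).toFourierSobolev)] with ξ hsum he hsmul
  simp only [hsum, Finset.sum_apply, hsmul, Pi.smul_apply, he, smul_eq_mul]

lemma toFourierSobolev_eq_sum_iff {n : ℕ} {f : HTildeElt s Γ} {e : Fin n → HTildeElt s Γ}
    {c : Fin n → ℂ} :
    f.toFourierSobolev = ∑ i, c i • (e i).toFourierSobolev ↔
      ∀ ξ, f.ft ξ = ∑ i, c i * (e i).ft ξ := by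
  have hcont : Continuous fun ξ => ∑ i, c i * (e i).ft ξ :=
    continuous_finsetSum _ fun i _ => continuous_const.mul (e i).cont
  rw [← funext_iff, ← f.cont.ae_eq_iff_eq volume hcont]
  constructor
  · intro h
    filter_upwards [f.coeFn_toFourierSobolev, coeFn_sum_toFourierSobolev c e] with ξ hf he
    rw [← hf, ← he, h]
  · intro h
    refine Lp.ext (ae_sobolevMeasure_of_ae ?_)
    filter_upwards [h, f.coeFn_toFourierSobolev, coeFn_sum_toFourierSobolev c e] with ξ h hf he
    rw [hf, he, h]

lemma toFourierSobolev_mem_supportedIn (f : HTildeElt s Γ) :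
    f.toFourierSobolev ∈ supportedIn s (closure Γ) := by
  refine mem_supportedIn.2 fun φ hφ hdisj => ?_
  rw [pairing_apply, ← f.supp φ (φ.smooth ⊤) hφ hdisj.inter_eq]
  refine integral_congr_ae ?_
  filter_upwards [f.coeFn_toFourierSobolev] with ξ hξ
  rw [hξ]

/-- The transforms of distributions with compact support have a continuous representative, namely
the sum of the convolutions with the transforms of the partition of unity. -/
lemma exists_toFourierSobolev_eq (P : InwardPartition (closure Γ)) {f : FourierSobolev s}
    (hf : f ∈ supportedIn s (closure Γ)) : ∃ g : HTildeElt s Γ, g.toFourierSobolev = f := by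
  have hae := P.ae_eq_sum_convolution hf
  have hcont : Continuous fun ξ => ∑ j, (f ⋆[mul ℂ ℂ] mulKernel (P.χ j)) ξ :=
    continuous_finsetSum _ fun j _ => continuous_convolution_schwartz f _
  have hmem : MemLp (fun ξ => ∑ j, (f ⋆[mul ℂ ℂ] mulKernel (P.χ j)) ξ) 2 (sobolevMeasure s) :=
    (Lp.memLp f).ae_eq (ae_sobolevMeasure_of_ae hae)
  let g : HTildeElt s Γ :=
    { ft := fun ξ => ∑ j, (f ⋆[mul ℂ ℂ] mulKernel (P.χ j)) ξ
      cont := hcont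
      mem := (memLp_two_sobolevMeasure_iff hcont.aestronglyMeasurable).1 hmem
      supp := fun φ hφ hcpt hdisj => by
        have h := mem_supportedIn.1 hf (hcpt.toSchwartzMap hφ) hcpt
          (Set.disjoint_iff_inter_eq_empty.2 hdisj)
        rw [pairing_apply] at h
        refine (integral_congr_ae ?_).trans h
        filter_upwards [hae] with ξ hξ
        rw [hξ]
        rfl }
  refine ⟨g, Lp.ext (ae_sobolevMeasure_of_ae ?_)⟩
  filter_upwards [hae, g.coeFn_toFourierSobolev] with ξ h1 h2
  rw [h1, h2]

end HTildeElt

namespace Xelt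

attribute [ext] Xelt

lemma continuous_divFt (V : Xelt Γ) : Continuous (divFt V) := by
  have h1 := V.c1.cont
  have h2 := V.c2.cont
  unfold divFt dotFt
  fun_prop

lemma memLp_divFt (V : Xelt Γ) : MemLp (divFt V) 2 (sobolevMeasure (-(1 / 2))) :=
  (memLp_two_sobolevMeasure_iff V.continuous_divFt.aestronglyMeasurable).2 <| by
    simpa only [divFt, norm_mul, norm_I, one_mul] using V.divMem

lemma isDivergence_toLp_divFt (V : Xelt Γ) :
    IsDivergence ![V.c1.toFourierSobolev, V.c2.toFourierSobolev] (V.memLp_divFt.toLp _) := by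
  rw [isDivergence_iff]
  filter_upwards [V.c1.coeFn_toFourierSobolev, V.c2.coeFn_toFourierSobolev,
    ae_of_ae_sobolevMeasure V.memLp_divFt.coeFn_toLp] with ξ h1 h2 hdiv
  simp only [hdiv, Fin.sum_univ_two, Matrix.cons_val_zero, Matrix.cons_val_one, h1, h2, divFt,
    dotFt]

/-- The Fourier transforms of the components and of the divergence of `V ∈ X`, as an element of
`DivSpace`. -/
def toDivSpace (V : Xelt Γ) : DivSpace (-(1 / 2)) (closure Γ) :=
  ⟨WithLp.toLp 2 ![V.c1.toFourierSobolev, V.c2.toFourierSobolev, V.memLp_divFt.toLp _],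
    Fin.forall_fin_two.2 ⟨V.c1.toFourierSobolev_mem_supportedIn,
      V.c2.toFourierSobolev_mem_supportedIn⟩, by
    refine (congrArg (IsDivergence · _) (funext fun l => ?_)).mp V.isDivergence_toLp_divFt
    fin_cases l <;> rfl⟩

lemma coeFn_component_zero (V : Xelt Γ) : ∀ᵐ ξ, component 0 V.toDivSpace ξ = V.c1.ft ξ :=
  V.c1.coeFn_toFourierSobolev

lemma coeFn_component_one (V : Xelt Γ) : ∀ᵐ ξ, component 1 V.toDivSpace ξ = V.c2.ft ξ :=
  V.c2.coeFn_toFourierSobolev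

lemma coeFn_div (V : Xelt Γ) : ∀ᵐ ξ, div V.toDivSpace ξ = divFt V ξ :=
  ae_of_ae_sobolevMeasure V.memLp_divFt.coeFn_toLp

lemma toDivSpace_eq_iff {V : Xelt Γ} {F : DivSpace (-(1 / 2)) (closure Γ)} :
    V.toDivSpace = F ↔
      V.c1.toFourierSobolev = component 0 F ∧ V.c2.toFourierSobolev = component 1 F := by
  refine ⟨?_, fun ⟨h0, h1⟩ => DivSpace.ext (Fin.forall_fin_two.2 ⟨h0, h1⟩)⟩
  rintro rfl
  exact ⟨rfl, rfl⟩

lemma toDivSpace_bijective (P : InwardPartition (closure Γ)) :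
    Function.Bijective (toDivSpace : Xelt Γ → _) := by
  refine ⟨fun V W h => ?_, fun F => ?_⟩
  · obtain ⟨h0, h1⟩ := toDivSpace_eq_iff.1 h
    exact Xelt.ext (HTildeElt.toFourierSobolev_injective h0)
      (HTildeElt.toFourierSobolev_injective h1)
  · obtain ⟨f, hf⟩ := HTildeElt.exists_toFourierSobolev_eq P (F.component_mem_supportedIn 0)
    obtain ⟨g, hg⟩ := HTildeElt.exists_toFourierSobolev_eq P (F.component_mem_supportedIn 1)
    refine ⟨⟨f, g, ?_⟩, toDivSpace_eq_iff.2 ⟨hf, hg⟩⟩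
    refine ((memLp_two_sobolevMeasure_iff (aestronglyMeasurable_of_sobolevMeasure
      (Lp.aestronglyMeasurable _))).1 (Lp.memLp (div F))).congr ?_
    filter_upwards [isDivergence_iff.1 F.isDivergence, f.coeFn_toFourierSobolev,
      g.coeFn_toFourierSobolev] with ξ hdiv hfξ hgξ
    rw [hdiv, Fin.sum_univ_two, ← hf, ← hg, hfξ, hgξ, norm_mul, norm_I, one_mul, dotFt]

lemma toDivSpace_eq_sum_iff {n : ℕ} {W : Xelt Γ} {e : Fin n → Xelt Γ} {c : Fin n → ℂ} :
    W.toDivSpace = ∑ i, c i • (e i).toDivSpace ↔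
      (∀ ξ, W.c1.ft ξ = ∑ i, c i * (e i).c1.ft ξ) ∧
        ∀ ξ, W.c2.ft ξ = ∑ i, c i * (e i).c2.ft ξ := by
  simp only [toDivSpace_eq_iff, map_sum, map_smul]
  exact and_congr HTildeElt.toFourierSobolev_eq_sum_iff HTildeElt.toFourierSobolev_eq_sum_iff

lemma toDivSpace_mem_span_iff {n : ℕ} {W : Xelt Γ} {e : Fin n → Xelt Γ} :
    W.toDivSpace ∈ Submodule.span ℂ (Set.range fun i => (e i).toDivSpace) ↔
      ∃ c : Fin n → ℂ, (∀ ξ, W.c1.ft ξ = ∑ i, c i * (e i).c1.ft ξ) ∧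
        ∀ ξ, W.c2.ft ξ = ∑ i, c i * (e i).c2.ft ξ := by
  simp only [Submodule.mem_span_range_iff_exists_fun, eq_comm (b := W.toDivSpace),
    toDivSpace_eq_sum_iff]

lemma toDivSpace_eq_zero_iff {W : Xelt Γ} :
    W.toDivSpace = 0 ↔ ∀ ξ, W.c1.ft ξ = 0 ∧ W.c2.ft ξ = 0 := by
  simpa only [Finset.univ_eq_empty, Finset.sum_empty, ← forall_and] using
    toDivSpace_eq_sum_iff (W := W) (e := Fin.elim0) (c := Fin.elim0)

instance : Zero (Xelt Γ) := ⟨0, 0, by simp [dotFt, HTildeElt.ft_zero]⟩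

lemma toDivSpace_zero : (0 : Xelt Γ).toDivSpace = 0 :=
  toDivSpace_eq_zero_iff.2 fun _ => ⟨rfl, rfl⟩

lemma linearIndependent_toDivSpace_iff {n : ℕ} {e : Fin n → Xelt Γ} :
    LinearIndependent ℂ (fun i => (e i).toDivSpace) ↔ ∀ c : Fin n → ℂ,
      ((∀ ξ, ∑ i, c i * (e i).c1.ft ξ = 0) ∧ ∀ ξ, ∑ i, c i * (e i).c2.ft ξ = 0) → c = 0 := by
  simp only [Fintype.linearIndependent_iff, ← toDivSpace_zero, eq_comm (b := toDivSpace 0),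
    toDivSpace_eq_sum_iff, funext_iff]
  simp only [eq_comm (a := HTildeElt.ft _ _)]
  rfl

lemma inner_toDivSpace (V Y : Xelt Γ) :
    ⟪V.toDivSpace, Y.toDivSpace⟫_ℂ = ∫ ξ : R2, (((1 + ‖ξ‖ ^ 2) ^ (-(1 / 2) : ℝ) : ℝ) : ℂ) *
      (Y.c1.ft ξ * conj (V.c1.ft ξ) + Y.c2.ft ξ * conj (V.c2.ft ξ) +
        divFt Y ξ * conj (divFt V ξ)) := by
  have hint (f g : FourierSobolev (-(1 / 2))) := L2.integrable_inner (𝕜 := ℂ) f g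
  rw [DivSpace.inner_eq, Fin.sum_univ_two]
  simp only [L2.inner_def]
  rw [← integral_add (hint _ _) (hint _ _)]
  refine (integral_add ((hint _ _).add (hint _ _)) (hint _ _)).symm.trans ?_
  rw [integral_sobolevMeasure]
  refine integral_congr_ae ?_
  filter_upwards [V.coeFn_component_zero, V.coeFn_component_one, V.coeFn_div,
    Y.coeFn_component_zero, Y.coeFn_component_one, Y.coeFn_div] with ξ hV0 hV1 hVd hY0 hY1 hYd
  simp only [Pi.add_apply, hV0, hV1, hVd, hY0, hY1, hYd, RCLike.inner_apply, real_smul]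

lemma Xinner_eq_inner (Y V : Xelt Γ) :
    Xinner Y V = ⟪V.toDivSpace, ((((2 * π) ^ 2)⁻¹ : ℝ) : ℂ) • Y.toDivSpace⟫_ℂ := by
  refine Eq.trans ?_ (inner_smul_right (𝕜 := ℂ) V.toDivSpace Y.toDivSpace _).symm
  rw [inner_toDivSpace]
  rfl

end Xelt

namespace InwardPartition

variable (P : InwardPartition (closure Γ)) {k : ℝ} (hk : 0 < k)

lemma Bform_eq_inner (W V : Xelt Γ) :
    Bform k W V = ⟪V.toDivSpace, P.formOperator hk W.toDivSpace⟫_ℂ := by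
  rw [inner_formOperator]
  refine integral_congr_ae ?_
  filter_upwards [V.coeFn_component_zero, V.coeFn_component_one, W.coeFn_component_zero,
    W.coeFn_component_one] with ξ hV0 hV1 hW0 hW1
  simp only [Bintegrand, dotFt, curlFt, hV0, hV1, hW0, hW1]

include P in
lemma eq_of_forall_inner_toDivSpace {F G : DivSpace (-(1 / 2)) (closure Γ)}
    (h : ∀ V : Xelt Γ, ⟪V.toDivSpace, F⟫_ℂ = ⟪V.toDivSpace, G⟫_ℂ) : F = G :=
  ext_inner_left ℂ ((Xelt.toDivSpace_bijective P).surjective.forall.2 h)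

lemma forall_Bform_eq_zero_iff {W : Xelt Γ} :
    (∀ V, Bform k W V = 0) ↔ W.toDivSpace ∈ (P.formOperator hk).ker := by
  simp only [P.Bform_eq_inner hk, LinearMap.mem_ker, ContinuousLinearMap.coe_coe]
  refine ⟨fun h => P.eq_of_forall_inner_toDivSpace fun V => ?_, fun h V => ?_⟩
  · rw [h V, inner_zero_right]
  · rw [h, inner_zero_right]

lemma forall_Bform_eq_zero_iff_adjoint {Z : Xelt Γ} :
    (∀ V, Bform k V Z = 0) ↔ Z.toDivSpace ∈ ((P.formOperator hk)†).ker := by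
  simp only [P.Bform_eq_inner hk, ← adjoint_inner_left, LinearMap.mem_ker,
    ContinuousLinearMap.coe_coe]
  refine ⟨fun h => P.eq_of_forall_inner_toDivSpace fun V => ?_, fun h V => ?_⟩
  · rw [inner_eq_zero_symm.1 (h V), inner_zero_right]
  · rw [h, inner_zero_left]

lemma forall_Bform_eq_Xinner_iff {W Y : Xelt Γ} :
    (∀ V, Bform k W V = Xinner Y V) ↔ P.formOperator hk W.toDivSpace =
      ((((2 * π) ^ 2)⁻¹ : ℝ) : ℂ) • Y.toDivSpace := by
  simp only [P.Bform_eq_inner hk, Xelt.Xinner_eq_inner]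
  exact ⟨P.eq_of_forall_inner_toDivSpace, fun h V => by rw [h]⟩

include P in
lemma exists_linearIndependent_toDivSpace {n : ℕ}
    {S : Submodule ℂ (DivSpace (-(1 / 2)) (closure Γ))} [FiniteDimensional ℂ S]
    (hn : Module.finrank ℂ S = n) : ∃ e : Fin n → Xelt Γ,
      LinearIndependent ℂ (fun i => (e i).toDivSpace) ∧
      Submodule.span ℂ (Set.range fun i => (e i).toDivSpace) = S := by
  let b := Module.finBasisOfFinrankEq ℂ S hn
  choose e he using fun i => (Xelt.toDivSpace_bijective P).surjective (b i)
  refine ⟨e, ?_⟩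
  simp only [he]
  refine ⟨b.linearIndependent.map' S.subtype S.ker_subtype, ?_⟩
  rw [← Function.comp_def Subtype.val b, Set.range_comp, ← S.coe_subtype, Submodule.span_image,
    b.span_eq, Submodule.map_subtype_top]

lemma exists_forall_Bform_eq_Xinner_iff {n : ℕ} {e : Fin n → Xelt Γ} {Y : Xelt Γ}
    (he : Submodule.span ℂ (Set.range fun i => (e i).toDivSpace) = ((P.formOperator hk)†).ker) :
    (∃ W, ∀ V, Bform k W V = Xinner Y V) ↔ ∀ i, Xinner Y (e i) = 0 := by
  simp only [P.forall_Bform_eq_Xinner_iff hk]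
  simp only [Xelt.Xinner_eq_inner]
  rw [← mem_span_range_orthogonal_iff (𝕜 := ℂ) (E := DivSpace (-(1 / 2)) (closure Γ)), he,
    ← (P.isFredholmOfIndexZero_formOperator hk).range_eq]
  exact ((Xelt.toDivSpace_bijective P).surjective.exists
    (p := fun F => P.formOperator hk F = _)).symm

lemma forall_existsUnique_Bform_eq_Xinner_iff :
    (∀ Y, ∃! W : Xelt Γ, ∀ V, Bform k W V = Xinner Y V) ↔
      Function.Bijective (P.formOperator hk) := by
  have hκ : ((((2 * π) ^ 2)⁻¹ : ℝ) : ℂ) ≠ 0 := ofReal_ne_zero.2 (by positivity)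
  have hbij := Xelt.toDivSpace_bijective P
  have hsurj := ((MulAction.bijective₀ hκ).comp hbij).surjective
  simp only [P.forall_Bform_eq_Xinner_iff hk]
  rw [← hbij.of_comp_iff, Function.bijective_iff_existsUnique]
  exact (hsurj.forall (p := fun F => ∃! W : Xelt Γ, P.formOperator hk W.toDivSpace = F)).symm

lemma forall_Bform_eq_zero_imp_iff :
    (∀ W : Xelt Γ, (∀ V, Bform k W V = 0) → ∀ ξ, W.c1.ft ξ = 0 ∧ W.c2.ft ξ = 0) ↔
      (P.formOperator hk).ker = ⊥ := by
  simp only [P.forall_Bform_eq_zero_iff hk, ← Xelt.toDivSpace_eq_zero_iff]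
  rw [Submodule.eq_bot_iff]
  exact ((Xelt.toDivSpace_bijective P).surjective.forall
    (p := fun F => F ∈ (P.formOperator hk).ker → F = 0)).symm

include P hk in
lemma forall_Bform_eq_zero_imp_iff_existsUnique :
    (∀ W : Xelt Γ, (∀ V, Bform k W V = 0) → ∀ ξ, W.c1.ft ξ = 0 ∧ W.c2.ft ξ = 0) ↔
      ∀ Y, ∃! W : Xelt Γ, ∀ V, Bform k W V = Xinner Y V := by
  rw [P.forall_Bform_eq_zero_imp_iff hk, P.forall_existsUnique_Bform_eq_Xinner_iff hk,
    (P.isFredholmOfIndexZero_formOperator hk).bijective_iff]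

end InwardPartition

end FunctionSpaces

/-- Theorem 3.5: the variational problem `B(W,V) = ⟨Y,V⟩ ∀ V ∈ X`
satisfies the Fredholm alternative; the operator `𝓛 : X → X*`, `(𝓛W)(V) = B(W,V)`, is
Fredholm of index zero.  (Bounded conjugate-linear functionals on the Hilbert space
`X` are represented, via Riesz, as `V ↦ Xinner Y V` with `Y ∈ X`.)  Concretely: the
kernel of `𝓛` and the kernel of its adjoint are both spanned by `n` linearly
independent elements for the same finite `n`; the range of `𝓛` is the (closed)
annihilator of the adjoint kernel, hence closed with codimension `n` equal to the
dimension of the kernel; and `𝓛` is invertible iff its kernel is trivial. -/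
theorem statement8 (Γ : Set R2) (hΓ : IsLipschitzDomain Γ) (k : ℝ) (hk : 0 < k) :
    ∃ n : ℕ, ∃ e e' : Fin n → Xelt Γ,
      -- `e` consists of kernel elements of `𝓛`, linearly independent, spanning the kernel
      (∀ i, ∀ V : Xelt Γ, Bform k (e i) V = 0) ∧
      (∀ c : Fin n → ℂ,
        ((∀ ξ : R2, ∑ i, c i * (e i).c1.ft ξ = 0) ∧
         (∀ ξ : R2, ∑ i, c i * (e i).c2.ft ξ = 0)) → c = 0) ∧
      (∀ W : Xelt Γ, (∀ V : Xelt Γ, Bform k W V = 0) →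
        ∃ c : Fin n → ℂ,
          (∀ ξ : R2, W.c1.ft ξ = ∑ i, c i * (e i).c1.ft ξ) ∧
          (∀ ξ : R2, W.c2.ft ξ = ∑ i, c i * (e i).c2.ft ξ)) ∧
      -- `e'` plays the same role for the adjoint of `𝓛`
      (∀ i, ∀ V : Xelt Γ, Bform k V (e' i) = 0) ∧
      (∀ c : Fin n → ℂ,
        ((∀ ξ : R2, ∑ i, c i * (e' i).c1.ft ξ = 0) ∧
         (∀ ξ : R2, ∑ i, c i * (e' i).c2.ft ξ = 0)) → c = 0) ∧
      (∀ Z : Xelt Γ, (∀ V : Xelt Γ, Bform k V Z = 0) →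
        ∃ c : Fin n → ℂ,
          (∀ ξ : R2, Z.c1.ft ξ = ∑ i, c i * (e' i).c1.ft ξ) ∧
          (∀ ξ : R2, Z.c2.ft ξ = ∑ i, c i * (e' i).c2.ft ξ)) ∧
      -- the range of `𝓛` is exactly the annihilator of the adjoint kernel
      (∀ Y : Xelt Γ,
        (∃ W : Xelt Γ, ∀ V : Xelt Γ, Bform k W V = Xinner Y V) ↔
          (∀ i, Xinner Y (e' i) = 0)) ∧
      -- in particular, `𝓛` is invertible iff its kernel is trivial
      ((∀ W : Xelt Γ, (∀ V : Xelt Γ, Bform k W V = 0) →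
          ∀ ξ : R2, W.c1.ft ξ = 0 ∧ W.c2.ft ξ = 0) ↔
        (∀ Y : Xelt Γ, ∃! W : Xelt Γ, ∀ V : Xelt Γ, Bform k W V = Xinner Y V)) := by
  obtain ⟨P⟩ := hΓ.nonempty_inwardPartition
  have hL := P.isFredholmOfIndexZero_formOperator hk
  have := hL.finiteDimensional_ker
  have := hL.finiteDimensional_ker_adjoint
  obtain ⟨e, he, hspan⟩ := P.exists_linearIndependent_toDivSpace
    (rfl : Module.finrank ℂ (P.formOperator hk).ker = _)
  obtain ⟨e', he', hspan'⟩ := P.exists_linearIndependent_toDivSpace hL.finrank_ker_eq.symm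
  refine ⟨Module.finrank ℂ (P.formOperator hk).ker, e, e', ?_⟩
  rw [← P.forall_Bform_eq_zero_imp_iff_existsUnique hk, iff_self, and_true]
  simp only [P.forall_Bform_eq_zero_iff hk, P.forall_Bform_eq_zero_iff_adjoint hk, ← hspan,
    ← hspan', ← Xelt.toDivSpace_mem_span_iff]
  exact ⟨fun i => Submodule.subset_span ⟨i, rfl⟩, Xelt.linearIndependent_toDivSpace_iff.1 he,
    fun W hW => hW, fun i => Submodule.subset_span ⟨i, rfl⟩,
    Xelt.linearIndependent_toDivSpace_iff.1 he', fun Z hZ => hZ,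
    fun Y => P.exists_forall_Bform_eq_Xinner_iff hk hspan'⟩

end
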